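/- arXiv:math/0407344 — 3 statements merged into one kernel-verified Lean document; each statement's English description precedes it below -/
import Mathlib

section
/- Let m₀ ∈ L^∞(𝕋) be non-singular with R_{m₀}1 = 1 and let m be the associated measure on S_N, with the wavelet representation realized on L²(m) by Uξ = m₀·(ξ∘S) and π(f)ξ = fξ. Then there is a one-to-one, linear, and monotone (order-preserving on self-adjoint/positive elements) correspondence between: (i) operators in the commutant of {U, T}; (ii) cocycles, i.e., functions f ∈ L^∞(m) with f∘S = f m-a.e.; and (iii) functions h ∈ L^∞(𝕋) harmonic for the Ruelle operator, i.e., R_{m₀}h = h. From (i) to (ii) the correspondence sends the operator M_f to f; from (ii) to (iii) it is f ↦ E(f). -/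
noncomputable section

open MeasureTheory Real Complex Filter Finset
open scoped ENNReal

/-! ### Basic instances for the circle -/

instance : MeasurableSpace Circle := borel Circle
instance : BorelSpace Circle := ⟨rfl⟩

/-- The point `e^{-2πit}` of the unit circle. -/
def ee (t : ℝ) : Circle := Circle.exp (-(2 * π * t))

/-- Normalized Lebesgue measure on the circle, realized as the image of Lebesgue
measure on `[0,1)` under `t ↦ e^{-2πit}`. -/
def circleMeasure : Measure Circle := (volume.restrict (Set.Ico (0:ℝ) 1)).map ee

/-! ### The Baumslag–Solitar group `BS(1,N)` -/

/-- The single relation `u t u⁻¹ (t^N)⁻¹` defining `BS(1,N)`. -/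
def BSRel (N : ℕ) : Set (FreeGroup Bool) :=
  {FreeGroup.of true * FreeGroup.of false * (FreeGroup.of true)⁻¹ * ((FreeGroup.of false) ^ N)⁻¹}

/-- The Baumslag–Solitar group `BS(1,N) = ⟨u,t | u t u⁻¹ = t^N⟩`. -/
abbrev BS (N : ℕ) := PresentedGroup (BSRel N)

/-- The generator `u` of `BS(1,N)`. -/
def BS.u (N : ℕ) : BS N := PresentedGroup.of true

/-- The generator `t` of `BS(1,N)`. -/
def BS.t (N : ℕ) : BS N := PresentedGroup.of false

/-! ### The solenoid -/

/-- The `N`-solenoid, as a subgroup of the product of circles indexed by `ℤ`: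
all sequences `(z_n)` with `z_{n+1}^N = z_n`. -/
def solenoidGroup (N : ℕ) : Subgroup (ℤ → Circle) where
  carrier := {z | ∀ n : ℤ, z (n + 1) ^ N = z n}
  one_mem' := by intro n; simp
  mul_mem' := by
    intro a b ha hb n
    simp only [Set.mem_setOf_eq, Pi.mul_apply, mul_pow] at *
    rw [ha n, hb n]
  inv_mem' := by
    intro a ha n
    simp only [Set.mem_setOf_eq, Pi.inv_apply, inv_pow] at *
    rw [ha n]

/-- The `N`-solenoid as a type. -/
abbrev Solenoid (N : ℕ) := ↥(solenoidGroup N)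

/-- The shift `S` on the solenoid: `(S z)_n = z_{n-1}`. -/
def shift (N : ℕ) (z : Solenoid N) : Solenoid N :=
  ⟨fun n => z.val (n - 1), by
    intro n
    have h := z.property (n - 1)
    simpa using h⟩

/-- The inverse `S⁻¹` of the shift on the solenoid: `(S⁻¹ z)_n = z_{n+1}`. -/
def shiftInv (N : ℕ) (z : Solenoid N) : Solenoid N :=
  ⟨fun n => z.val (n + 1), fun n => z.property (n + 1)⟩

/-- Integer powers `Sⁿ` of the shift. -/
def shiftZ (N : ℕ) (n : ℤ) : Solenoid N → Solenoid N :=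
  if 0 ≤ n then (shift N)^[n.toNat] else (shiftInv N)^[(-n).toNat]

/-- The measure `ν ∘ S`, defined by `(ν ∘ S)(E) = ν(S(E))`. -/
def measShift (N : ℕ) (ν : Measure (Solenoid N)) : Measure (Solenoid N) :=
  ν.map (shiftInv N)

/-- `ν` is quasi-invariant for the shift `S`: `ν ∘ S` and `ν` are mutually
absolutely continuous. -/
def QuasiInvariant (N : ℕ) (ν : Measure (Solenoid N)) : Prop :=
  measShift N ν ≪ ν ∧ ν ≪ measShift N ν

/-- The shift `S` is ergodic with respect to `ν`. -/
def ShiftErgodic (N : ℕ) (ν : Measure (Solenoid N)) : Prop :=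
  ∀ E : Set (Solenoid N), MeasurableSet E → shift N ⁻¹' E = E → ν E = 0 ∨ ν Eᶜ = 0

/-- A bounded measurable (`L^∞`-type) function. -/
def BddMeasurable {α : Type*} [MeasurableSpace α] (f : α → ℂ) : Prop :=
  Measurable f ∧ ∃ C : ℝ, ∀ x, ‖f x‖ ≤ C

/-! ### The representation `π_{ν,θ}` -/

/-- The pair of unitaries `U, T` on `L²(ν)` given by
`Uξ = √Δ ⬝ θ ⬝ (ξ∘S)` (with `Δ = d(ν∘S)/dν`) and `(Tξ)(z) = z₀ ξ(z)`. -/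
def IsPiNuTheta (N : ℕ) (ν : Measure (Solenoid N)) (θ : Solenoid N → Circle)
    (U T : unitary (Lp ℂ 2 ν →L[ℂ] Lp ℂ 2 ν)) : Prop :=
  (∀ ξ : Lp ℂ 2 ν,
      (((U : Lp ℂ 2 ν →L[ℂ] Lp ℂ 2 ν) ξ : Lp ℂ 2 ν) : Solenoid N → ℂ) =ᵐ[ν]
        fun z => (Real.sqrt (((measShift N ν).rnDeriv ν z).toReal) : ℂ) * (θ z : ℂ) *
          (ξ : Solenoid N → ℂ) (shift N z)) ∧
  (∀ ξ : Lp ℂ 2 ν,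
      (((T : Lp ℂ 2 ν →L[ℂ] Lp ℂ 2 ν) ξ : Lp ℂ 2 ν) : Solenoid N → ℂ) =ᵐ[ν]
        fun z => ((z.val 0 : Circle) : ℂ) * (ξ : Solenoid N → ℂ) z)

/-- `φ` is a cyclic vector for the (unitary) representation generated by `U` and `T`:
the only closed subspace containing `φ` and invariant under the group generated by
`U` and `T` is the whole space. -/
def cyclicVector {H : Type*} [NormedAddCommGroup H] [InnerProductSpace ℂ H]
    [CompleteSpace H] (U T : unitary (H →L[ℂ] H)) (φ : H) : Prop :=
  ∀ K : Submodule ℂ H, IsClosed (K : Set H) → φ ∈ K →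
    (∀ g ∈ Subgroup.closure ({U, T} : Set (unitary (H →L[ℂ] H))),
      ∀ v ∈ K, (g : H →L[ℂ] H) v ∈ K) → K = ⊤

/-! ### Filters and the Ruelle operator -/

/-- The quadrature mirror filter condition `R_{m₀} 1 = 1`, written out on `[0,1)`:
`(1/N) ∑_{k<N} |m₀(e^{-2πi(x+k)/N})|² = 1` for a.e. `x`. -/
def QMF (N : ℕ) (m₀ : Circle → ℂ) : Prop :=
  ∀ᵐ x ∂(volume.restrict (Set.Ico (0:ℝ) 1)),
    (1 / N : ℝ) * ∑ k ∈ Finset.range N, ‖m₀ (ee ((x + k) / N))‖ ^ 2 = 1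

/-- `h` is a fixed point of the Ruelle operator `R_{m₀}`:
`(1/N) ∑_{w^N = z} |m₀(w)|² h(w) = h(z)` for a.e. `z`, written out on `[0,1)`. -/
def RuelleFixed (N : ℕ) (m₀ : Circle → ℂ) (h : Circle → ℂ) : Prop :=
  ∀ᵐ x ∂(volume.restrict (Set.Ico (0:ℝ) 1)),
    (1 / N : ℂ) * ∑ k ∈ Finset.range N,
        (‖m₀ (ee ((x + k) / N))‖ ^ 2 : ℝ) * h (ee ((x + k) / N)) = h (ee x)

/-- The wavelet representation of `BS(1,N)` associated to a filter `m₀`, realized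
on `L²(m)` for a measure `m` on the solenoid: `Uξ = m₀ ⬝ (ξ∘S)` and `T` is
multiplication by the coordinate `z₀`. -/
def IsWaveletRepOn (N : ℕ) (m₀ : Circle → ℂ) (m : Measure (Solenoid N))
    (U T : unitary (Lp ℂ 2 m →L[ℂ] Lp ℂ 2 m)) : Prop :=
  (∀ ξ : Lp ℂ 2 m,
      (((U : Lp ℂ 2 m →L[ℂ] Lp ℂ 2 m) ξ : Lp ℂ 2 m) : Solenoid N → ℂ) =ᵐ[m]
        fun z => m₀ (z.val 0) * (ξ : Solenoid N → ℂ) (shift N z)) ∧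
  (∀ ξ : Lp ℂ 2 m,
      (((T : Lp ℂ 2 m →L[ℂ] Lp ℂ 2 m) ξ : Lp ℂ 2 m) : Solenoid N → ℂ) =ᵐ[m]
        fun z => ((z.val 0 : Circle) : ℂ) * (ξ : Solenoid N → ℂ) z)

/-- The measure `m` on the solenoid associated to a weight `W` (with `N W = |m₀|²`):
its `z₀`-marginal is normalized Lebesgue measure on the circle, and
`d(m∘S)/dm = N W`. -/
def IsAssociatedMeasure (N : ℕ) (W : Circle → ℝ) (m : Measure (Solenoid N)) : Prop :=
  IsProbabilityMeasure m ∧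
  m.map (fun z : Solenoid N => z.val 0) = circleMeasure ∧
  measShift N m = m.withDensity (fun z => ENNReal.ofReal (N * W (z.val 0)))

end

namespace Sol11

open MeasureTheory Filter Topology
open scoped ENNReal

lemma continuous_ee : Continuous ee := by unfold ee; fun_prop

lemma measurable_ee : Measurable ee := continuous_ee.measurable

lemma ee_add_nat (x : ℝ) (k : ℕ) : ee (x + k) = ee x := by
  unfold ee
  rw [show -(2 * Real.pi * (x + k)) = -(2 * Real.pi * x) - k * (2 * Real.pi) by ring,
    Circle.exp_sub]
  simp

lemma ee_pow (x : ℝ) (N : ℕ) : ee x ^ N = ee (N * x) := by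
  unfold ee
  induction N with
  | zero => simp
  | succ n ih =>
    rw [pow_succ, ih, ← Circle.exp_add]; congr 1; push_cast; ring

lemma ee_div_pow (x : ℝ) (N k : ℕ) (hN : N ≠ 0) : ee ((x + k) / N) ^ N = ee x := by
  have : (N : ℝ) ≠ 0 := by exact_mod_cast hN
  rw [ee_pow, mul_div_cancel₀ _ this, ee_add_nat]

/-- inverse of `ee` -/
noncomputable def tau (w : Circle) : ℝ := Int.fract (-(Complex.arg (w : ℂ)) / (2 * Real.pi))

lemma measurable_tau : Measurable tau := by
  unfold tau
  have : Measurable (fun w : Circle => (w : ℂ)) := (by fun_prop : Continuous (fun w : Circle => (w : ℂ))).measurable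
  fun_prop

lemma ee_tau (w : Circle) : ee (tau w) = w := by
  unfold ee tau
  have h2 : (2 * Real.pi) ≠ 0 := by positivity
  rw [← Int.self_sub_floor]
  rw [show -(2 * Real.pi * (-(Complex.arg (w : ℂ)) / (2 * Real.pi) - (⌊-(Complex.arg (w : ℂ)) / (2 * Real.pi)⌋ : ℝ)))
    = Complex.arg (w : ℂ) + (⌊-(Complex.arg (w : ℂ)) / (2 * Real.pi)⌋ : ℤ) * (2 * Real.pi) by
      field_simp; ring, Circle.exp_add, Circle.exp_arg]
  simp

lemma tau_ee {x : ℝ} (hx : x ∈ Set.Ico (0:ℝ) 1) : tau (ee x) = x := by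
  have h := ee_tau (ee x)
  set y := tau (ee x) with hy
  have hy0 : 0 ≤ y := Int.fract_nonneg _
  have hy1 : y < 1 := Int.fract_lt_one _
  unfold ee at h
  rw [Circle.exp_eq_exp] at h
  obtain ⟨k, hk⟩ := h
  have hp := Real.pi_pos
  have : y = x - k := by
    have : 2 * Real.pi * (y - (x - k)) = 0 := by linarith
    have := (mul_eq_zero.1 this).resolve_left (by positivity)
    linarith
  have h1 : (k : ℝ) < 1 := by linarith [hx.2]
  have h2 : (-1 : ℝ) < k := by linarith [hx.1]
  have h1' : k < 1 := by exact_mod_cast h1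
  have h2' : -1 < k := by exact_mod_cast h2
  have hk0 : k = 0 := by omega
  subst hk0
  simpa using this

/-- change of variables under the `N` inverse branches -/
lemma cv (N : ℕ) (hN : N ≠ 0) (G : Circle → ℂ) (hG : Integrable G circleMeasure) :
    Integrable (fun x : ℝ => (1 / N : ℂ) * ∑ k ∈ Finset.range N, G (ee ((x + k) / N)))
      (volume.restrict (Set.Ico (0:ℝ) 1)) ∧
    ∫ w, G w ∂circleMeasure = ∫ x in Set.Ico (0:ℝ) 1,
      (1 / N : ℂ) * ∑ k ∈ Finset.range N, G (ee ((x + k) / N)) := by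
  have hN' : (N : ℝ) ≠ 0 := by exact_mod_cast hN
  have hNpos : (0 : ℝ) < N := by positivity
  have hG1 : Integrable (fun x => G (ee x)) (volume.restrict (Set.Ico (0:ℝ) 1)) :=
    hG.comp_measurable measurable_ee
  have hI : IntervalIntegrable (fun x => G (ee x)) volume 0 1 := by
    rw [intervalIntegrable_iff_integrableOn_Ico_of_le zero_le_one]; exact hG1
  have hIk : ∀ k < N, IntervalIntegrable (fun x => G (ee x)) volume ((k:ℕ) / (N:ℝ)) ((k+1 : ℕ) / (N:ℝ)) := by
    intro k hk
    apply hI.mono_set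
    rw [Set.uIcc_of_le (by gcongr; simp), Set.uIcc_of_le zero_le_one]
    apply Set.Icc_subset_Icc (by positivity)
    rw [div_le_one hNpos]; exact_mod_cast hk
  have hIk' : ∀ k < N, IntervalIntegrable (fun x : ℝ => G (ee ((x + k) / N))) volume 0 1 := by
    intro k hk
    have := ((hIk k hk).comp_mul_left (c := (N:ℝ)⁻¹)).comp_add_right (k : ℝ)
    convert this using 1
    · funext x; congr 2; field_simp
    · field_simp; simp
    · field_simp; push_cast; ring
  have hsum : ∀ k ∈ Finset.range N, ∫ x in (0:ℝ)..1, G (ee ((x + k) / N)) =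
      (N : ℝ) • ∫ x in ((k:ℕ) / (N:ℝ))..((k+1 : ℕ) / (N:ℝ)), G (ee x) := by
    intro k hk
    have := intervalIntegral.integral_comp_div_add (a := 0) (b := 1) (fun x => G (ee x)) hN' (k / N)
    simp only [← add_div] at this
    rw [this]; congr 2 <;> push_cast <;> ring
  constructor
  · apply Integrable.const_mul
    apply integrable_finsetSum
    intro k hk
    have := hIk' k (by simpa using hk)
    rwa [intervalIntegrable_iff_integrableOn_Ico_of_le zero_le_one] at this
  · unfold circleMeasure at hG ⊢
    rw [integral_map measurable_ee.aemeasurable hG.aestronglyMeasurable,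
      integral_Ico_eq_integral_Ioc, ← intervalIntegral.integral_of_le zero_le_one,
      integral_Ico_eq_integral_Ioc, ← intervalIntegral.integral_of_le zero_le_one,
      intervalIntegral.integral_const_mul, intervalIntegral.integral_finsetSum
        (fun k hk => hIk' k (by simpa using hk)), Finset.sum_congr rfl hsum, ← Finset.smul_sum,
      intervalIntegral.sum_integral_adjacent_intervals (a := fun k : ℕ => (k:ℝ)/N) hIk]
    simp [hN]

instance (N : ℕ) : CompactSpace (Solenoid N) := by
  apply isCompact_iff_compactSpace.1
  apply IsClosed.isCompact
  have : (solenoidGroup N : Set (ℤ → Circle)) = ⋂ n : ℤ, {z | z (n+1) ^ N = z n} := by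
    ext z; simp [solenoidGroup]
  change IsClosed (solenoidGroup N : Set (ℤ → Circle))
  rw [this]
  apply isClosed_iInter
  intro n
  exact isClosed_eq (by fun_prop) (by fun_prop)

instance (N : ℕ) : TopologicalSpace.PseudoMetrizableSpace (Solenoid N) :=
  Topology.IsInducing.subtypeVal.pseudoMetrizableSpace

lemma measurable_coord (N : ℕ) (n : ℤ) : Measurable (fun z : Solenoid N => z.val n) :=
  (measurable_pi_apply n).comp measurable_subtype_coe

lemma measurable_shift (N : ℕ) : Measurable (shift N) := by
  apply Measurable.subtype_mk
  exact measurable_pi_lambda _ (fun n => measurable_coord N _)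

lemma measurable_shiftInv (N : ℕ) : Measurable (shiftInv N) := by
  apply Measurable.subtype_mk
  exact measurable_pi_lambda _ (fun n => measurable_coord N _)

lemma shift_shiftInv (N : ℕ) (z : Solenoid N) : shift N (shiftInv N z) = z := by
  apply Subtype.ext; funext n; simp [shift, shiftInv]

lemma shiftInv_shift (N : ℕ) (z : Solenoid N) : shiftInv N (shift N z) = z := by
  apply Subtype.ext; funext n; simp [shift, shiftInv]

/-- shiftInv as a measurable equivalence -/
def shiftE (N : ℕ) : Solenoid N ≃ᵐ Solenoid N where
  toFun := shiftInv N
  invFun := shift N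
  left_inv := shift_shiftInv N
  right_inv := shiftInv_shift N
  measurable_toFun := measurable_shiftInv N
  measurable_invFun := measurable_shift N

lemma coord_pow (N : ℕ) (z : Solenoid N) (n : ℕ) (k : ℤ) : z.val (k + n) ^ N ^ n = z.val k := by
  induction n with
  | zero => simp
  | succ n ih =>
    rw [pow_succ', pow_mul]
    have := z.property (k + n)
    push_cast
    rw [← add_assoc, this, ih]

/-- the density hypothesis -/
def Dens (N : ℕ) (m₀ : Circle → ℂ) (m : Measure (Solenoid N)) : Prop :=
  m.map (shiftInv N) = m.withDensity (fun z => ENNReal.ofReal (‖m₀ (z.val 0)‖ ^ 2))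

section
variable {N : ℕ} {m₀ : Circle → ℂ} {m : Measure (Solenoid N)}

lemma meas_dens (hmeas : Measurable m₀) :
    Measurable (fun z : Solenoid N => ENNReal.ofReal (‖m₀ (z.val 0)‖ ^ 2)) := by
  have := hmeas.comp (measurable_coord N 0)
  exact (this.norm.pow_const 2).ennreal_ofReal

lemma int_shift (hmeas : Measurable m₀) (hd : Dens N m₀ m) (F : Solenoid N → ℂ) :
    ∫ z, F (shiftInv N z) ∂m = ∫ z, ((‖m₀ (z.val 0)‖ ^ 2 : ℝ) : ℂ) * F z ∂m := by
  have h1 : ∫ z, F (shiftInv N z) ∂m = ∫ z, F z ∂(m.map (shiftInv N)) :=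
    ((shiftE N).measurableEmbedding.integral_map (μ := m) F).symm
  rw [h1, hd, integral_withDensity_eq_integral_toReal_smul (meas_dens hmeas) (by simp)]
  congr 1; funext z
  rw [ENNReal.toReal_ofReal (by positivity)]; simp

lemma integrable_shift (hmeas : Measurable m₀) (hbdd : ∃ C : ℝ, ∀ z, ‖m₀ z‖ ≤ C)
    (hd : Dens N m₀ m) {F : Solenoid N → ℂ} (hF : Integrable F m) :
    Integrable (fun z => F (shiftInv N z)) m := by
  obtain ⟨C, hC⟩ := hbdd
  have h1 : Integrable F (m.map (shiftInv N)) := by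
    rw [hd, integrable_withDensity_iff_integrable_smul' (meas_dens hmeas) (by simp)]
    have hm := hmeas.comp (measurable_coord N 0)
    simp only [Function.comp_def] at hm
    have : Integrable (fun z => ((‖m₀ (z.val 0)‖ ^ 2 : ℝ) : ℂ) * F z) m := by
      apply hF.bdd_mul (c := C ^ 2)
      · exact (Complex.measurable_ofReal.comp (hm.norm.pow_const 2)).aestronglyMeasurable
      · refine ae_of_all _ fun z => ?_
        simp only [Complex.norm_real, norm_pow, norm_norm]
        gcongr; exact hC _
    refine this.congr (ae_of_all _ fun z => ?_)
    simp only
    rw [ENNReal.toReal_ofReal (by positivity)]; simp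
  exact ((shiftE N).measurableEmbedding.integrable_map_iff (μ := m)).1 h1

lemma qmp_inv (hd : Dens N m₀ m) : Measure.QuasiMeasurePreserving (shiftInv N) m m :=
  ⟨measurable_shiftInv N, by rw [hd]; exact withDensity_absolutelyContinuous _ _⟩

lemma qmp (hmeas : Measurable m₀) (hd : Dens N m₀ m) (hne : ∀ᵐ z ∂m, m₀ (z.val 0) ≠ 0) :
    Measure.QuasiMeasurePreserving (shift N) m m := by
  refine ⟨measurable_shift N, ?_⟩
  have h1 : m ≪ m.map (shiftInv N) := by
    rw [hd]
    apply withDensity_absolutelyContinuous' (meas_dens hmeas).aemeasurable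
    filter_upwards [hne] with z hz
    simpa using hz
  have h2 := h1.map (measurable_shift N)
  rwa [Measure.map_map (measurable_shift N) (measurable_shiftInv N),
    show shift N ∘ shiftInv N = id from funext (shift_shiftInv N), Measure.map_id] at h2

/-- pull back along shift is injective a.e. -/
lemma ae_of_shift (hd : Dens N m₀ m) {p : Solenoid N → Prop} (h : ∀ᵐ z ∂m, p (shift N z)) :
    ∀ᵐ z ∂m, p z := by
  have := (qmp_inv hd).ae h
  simpa [shift_shiftInv] using this

lemma shiftInv_val (z : Solenoid N) (n : ℤ) : (shiftInv N z).val n = z.val (n + 1) := rfl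
lemma shift_val (z : Solenoid N) (n : ℤ) : (shift N z).val n = z.val (n - 1) := rfl

lemma ae_coord (hd : Dens N m₀ m) (h0 : m.map (fun z : Solenoid N => z.val 0) = circleMeasure)
    {p : Circle → Prop} (hp : ∀ᵐ w ∂circleMeasure, p w) (n : ℕ) : ∀ᵐ z ∂m, p (z.val n) := by
  induction n with
  | zero =>
    rw [← h0] at hp
    exact ae_of_ae_map (measurable_coord N 0).aemeasurable hp
  | succ n ih =>
    simpa [shiftInv_val] using (qmp_inv hd).ae ih

lemma int_coord_zero (h0 : m.map (fun z : Solenoid N => z.val 0) = circleMeasure)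
    {G : Circle → ℂ} (hG : AEStronglyMeasurable G circleMeasure) :
    ∫ z, G (z.val 0) ∂m = ∫ w, G w ∂circleMeasure := by
  rw [← h0] at hG ⊢
  rw [integral_map (measurable_coord N 0).aemeasurable hG]

lemma integrable_coord (hmeas : Measurable m₀) (hbdd : ∃ C : ℝ, ∀ z, ‖m₀ z‖ ≤ C)
    (hd : Dens N m₀ m) (h0 : m.map (fun z : Solenoid N => z.val 0) = circleMeasure)
    {G : Circle → ℂ} (hG : Integrable G circleMeasure) (n : ℕ) :
    Integrable (fun z : Solenoid N => G (z.val n)) m := by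
  induction n with
  | zero =>
    rw [← h0] at hG
    exact hG.comp_measurable (measurable_coord N 0)
  | succ n ih =>
    simpa [shiftInv_val] using integrable_shift hmeas hbdd hd ih

end
end Sol11

namespace Sol11
open MeasureTheory Filter Topology
open scoped ENNReal
section
variable {N : ℕ} {m₀ : Circle → ℂ} {m : Measure (Solenoid N)}

/-- filtration generated by the coordinates -/
noncomputable def filt (N : ℕ) : Filtration ℕ (inferInstance : MeasurableSpace (Solenoid N)) where
  seq n := MeasurableSpace.comap (fun z : Solenoid N => z.val (n : ℤ)) inferInstance
  mono' := by
    intro i j hij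
    obtain ⟨k, rfl⟩ := Nat.exists_eq_add_of_le hij
    rintro s ⟨B, hB, rfl⟩
    refine ⟨(fun w => w ^ N ^ k) ⁻¹' B, ?_, ?_⟩
    · exact (continuous_pow (N ^ k)).measurable hB
    · ext z
      have := coord_pow N z k i
      simp [this]
  le' n := (measurable_coord N n).comap_le

lemma iSup_filt (N : ℕ) :
    (⨆ n, filt N n) = (inferInstance : MeasurableSpace (Solenoid N)) := by
  apply le_antisymm
  · exact iSup_le fun n => (filt N).le n
  · have h : ∀ n : ℤ, @Measurable _ _ (⨆ n, filt N n) _ (fun z : Solenoid N => z.val n) := by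
      have h1 : ∀ n : ℕ, @Measurable _ _ (⨆ n, filt N n) _ (fun z : Solenoid N => z.val (n:ℤ)) := by
        intro n
        exact Measurable.mono (comap_measurable _) (le_iSup (fun n => (filt N n : MeasurableSpace _)) n) le_rfl
      intro n
      rcases Int.eq_nat_or_neg n with ⟨k, rfl | rfl⟩
      · exact h1 k
      · have h2 : (fun z : Solenoid N => z.val (-(k:ℤ))) = fun z => (z.val ((0:ℕ):ℤ)) ^ N ^ k := by
          funext z
          have := coord_pow N z k (-k)
          simpa using this.symm
        rw [h2]
        exact (continuous_pow (N ^ k)).measurable.comp (h1 0)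
    have h3 : @Measurable _ _ (⨆ n, filt N n) _ (fun z : Solenoid N => z.val) :=
      @measurable_pi_lambda _ _ _ (⨆ n, filt N n) _ _ h
    exact h3.comap_le

lemma bdd_mul_integrable [IsFiniteMeasure m] {g f : Solenoid N → ℂ} (hg : BddMeasurable g)
    (hf : Integrable f m) : Integrable (fun z => g z * f z) m := by
  obtain ⟨h1, C, hC⟩ := hg
  exact hf.bdd_mul h1.aestronglyMeasurable (ae_of_all _ hC)

lemma bdd_integrable {α : Type*} [MeasurableSpace α] {μ : Measure α} [IsFiniteMeasure μ]
    {g : α → ℂ} (hg : BddMeasurable g) : Integrable g μ := by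
  obtain ⟨h1, C, hC⟩ := hg
  exact Integrable.of_bound h1.aestronglyMeasurable C (ae_of_all _ hC)

lemma bdd_comp {α β : Type*} [MeasurableSpace α] [MeasurableSpace β]
    {g : α → ℂ} (hg : BddMeasurable g) {u : β → α} (hu : Measurable u) :
    BddMeasurable (fun x => g (u x)) :=
  ⟨hg.1.comp hu, hg.2.imp fun _ h _ => h _⟩

lemma bdd_mul {α : Type*} [MeasurableSpace α] {f g : α → ℂ} (hf : BddMeasurable f)
    (hg : BddMeasurable g) : BddMeasurable (fun x => f x * g x) := by
  obtain ⟨h1, C, hC⟩ := hf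
  obtain ⟨h2, D, hD⟩ := hg
  refine ⟨h1.mul h2, C * D, fun x => ?_⟩
  rw [norm_mul]
  exact mul_le_mul (hC x) (hD x) (norm_nonneg _) ((norm_nonneg _).trans (hC x))

lemma bdd_sq (hmeas : Measurable m₀) (hbdd : ∃ C : ℝ, ∀ z, ‖m₀ z‖ ≤ C) :
    BddMeasurable (fun w => ((‖m₀ w‖ ^ 2 : ℝ) : ℂ)) := by
  obtain ⟨C, hC⟩ := hbdd
  refine ⟨Complex.measurable_ofReal.comp (hmeas.norm.pow_const 2), C ^ 2, fun w => ?_⟩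
  simp only [Complex.norm_real, norm_pow, norm_norm]
  gcongr; exact hC _

lemma bdd_indicator {α : Type*} [MeasurableSpace α] {s : Set α} (hs : MeasurableSet s) :
    BddMeasurable (s.indicator (fun _ => (1:ℂ))) := by
  classical
  refine ⟨measurable_const.indicator hs, 1, fun x => ?_⟩
  by_cases h : x ∈ s <;> simp [h]

lemma measurable_npow (k : ℕ) : Measurable (fun w : Circle => w ^ k) :=
  (continuous_pow k).measurable

/-- transfer of orthogonality up the tower -/
lemma tower (hmeas : Measurable m₀) (hbdd : ∃ C : ℝ, ∀ z, ‖m₀ z‖ ≤ C) (hd : Dens N m₀ m)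
    (D : ℕ → Solenoid N → ℂ) (hD : ∀ n, (fun z => D (n+1) z) =ᵐ[m] fun z => D n (shiftInv N z))
    (hD0 : ∀ g : Circle → ℂ, BddMeasurable g → ∫ z, g (z.val 0) * D 0 z ∂m = 0) (n : ℕ) :
    ∀ g : Circle → ℂ, BddMeasurable g → ∫ z, g (z.val n) * D n z ∂m = 0 := by
  induction n with
  | zero => exact hD0
  | succ n ih =>
    intro g hg
    have h1 : ∫ z, g (z.val (n+1 : ℕ)) * D (n+1) z ∂m =
        ∫ z, (fun z : Solenoid N => g (z.val n) * D n z) (shiftInv N z) ∂m := by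
      apply integral_congr_ae
      filter_upwards [hD n] with z hz
      simp only [shiftInv_val, hz]; push_cast; rfl
    rw [h1, int_shift hmeas hd (fun z : Solenoid N => g (z.val n) * D n z)]
    have := ih (fun w => ((‖m₀ (w ^ N ^ n)‖ ^ 2 : ℝ) : ℂ) * g w)
      (bdd_mul (bdd_comp (bdd_sq hmeas hbdd) (measurable_npow _)) hg)
    rw [← this]
    congr 1; funext z
    have h2 := coord_pow N z n 0
    rw [zero_add] at h2
    rw [h2]; ring

lemma setInt_of_ind {μ : Measure (Solenoid N)} {a b : Solenoid N → ℂ} {n : ℤ} {B : Set Circle}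
    (hB : MeasurableSet B) (ha : Integrable a μ) (hb : Integrable b μ) [IsFiniteMeasure μ]
    (h : ∫ z, B.indicator (fun _ => (1:ℂ)) (z.val n) * (a z - b z) ∂μ = 0) (L : ℂ →L[ℝ] ℝ) :
    ∫ z in (fun z : Solenoid N => z.val n) ⁻¹' B, L (a z) ∂μ =
      ∫ z in (fun z : Solenoid N => z.val n) ⁻¹' B, L (b z) ∂μ := by
  rw [L.integral_comp_comm ha.integrableOn, L.integral_comp_comm hb.integrableOn]
  congr 1
  rw [← sub_eq_zero, ← integral_sub ha.integrableOn hb.integrableOn, ← h,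
    ← integral_indicator (measurable_coord N n hB)]
  congr 1; funext z
  by_cases hz : z.val n ∈ B <;> simp [Set.indicator, hz]

lemma levy [IsProbabilityMeasure m] (L : ℂ →L[ℝ] ℝ)
    {f : Solenoid N → ℂ} (hf : BddMeasurable f) {h : Circle → ℂ} (hh : Measurable h)
    (hint : ∀ n : ℕ, Integrable (fun z : Solenoid N => h (z.val n)) m)
    (horth : ∀ n : ℕ, ∀ g : Circle → ℂ, BddMeasurable g →
      ∫ z, g (z.val n) * (h (z.val n) - f z) ∂m = 0) :
    ∀ᵐ z ∂m, Tendsto (fun n : ℕ => L (h (z.val n))) atTop (𝓝 (L (f z))) := by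
  have hfi : Integrable f m := bdd_integrable hf
  have hLf : Integrable (fun z => L (f z)) m := L.integrable_comp hfi
  have hLm : Measurable (fun z => L (f z)) := L.continuous.measurable.comp hf.1
  have key : ∀ n : ℕ, (fun z : Solenoid N => L (h (z.val n))) =ᵐ[m] m[fun z => L (f z) | filt N n] := by
    intro n
    apply ae_eq_condExp_of_forall_setIntegral_eq ((filt N).le n) hLf
    · intro s _ _; exact (L.integrable_comp (hint n)).integrableOn
    · rintro s ⟨B, hB, rfl⟩ _
      exact setInt_of_ind hB (hint n) hfi (horth n _ (bdd_indicator hB)) L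
    · apply StronglyMeasurable.aestronglyMeasurable
      apply Measurable.stronglyMeasurable
      exact (L.continuous.measurable.comp hh).comp (comap_measurable _)
  have hlim := hLf.tendsto_ae_condExp (ℱ := filt N) (by rw [iSup_filt]; exact hLm.stronglyMeasurable)
  filter_upwards [hlim, ae_all_iff.2 key] with z h1 h2
  simpa only [h2] using h1

lemma tendsto_of_re_im {u : ℕ → ℂ} {a : ℂ} (h1 : Tendsto (fun n => Complex.reCLM (u n)) atTop (𝓝 (Complex.reCLM a)))
    (h2 : Tendsto (fun n => Complex.imCLM (u n)) atTop (𝓝 (Complex.imCLM a))) :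
    Tendsto u atTop (𝓝 a) := by
  have := ((Complex.continuous_ofReal.tendsto _).comp h1).add
    (((Complex.continuous_ofReal.tendsto _).comp h2).mul_const Complex.I)
  simpa [Function.comp_def, Complex.re_add_im] using this

/-- recover a cocycle from its projection -/
lemma recover [IsProbabilityMeasure m] (hmeas : Measurable m₀) (hbdd : ∃ C : ℝ, ∀ z, ‖m₀ z‖ ≤ C)
    (hd : Dens N m₀ m) (h0 : m.map (fun z : Solenoid N => z.val 0) = circleMeasure)
    {f : Solenoid N → ℂ} (hf : BddMeasurable f) (hco : (fun z => f (shift N z)) =ᵐ[m] f)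
    {h : Circle → ℂ} (hh : Integrable h circleMeasure)
    (horth : ∀ g : Circle → ℂ, BddMeasurable g →
      ∫ z, g (z.val 0) * f z ∂m = ∫ w, g w * h w ∂circleMeasure) :
    ∀ᵐ z ∂m, Tendsto (fun n : ℕ => h (z.val n)) atTop (𝓝 (f z)) := by
  obtain ⟨h', hm', hhh'⟩ := hh.aestronglyMeasurable
  have hh' : Integrable h' circleMeasure := hh.congr hhh'
  have hint := integrable_coord hmeas hbdd hd h0 hh'
  have hco' : ∀ᵐ z ∂m, f z = f (shiftInv N z) := by
    have := (qmp_inv hd).ae hco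
    simpa [shift_shiftInv] using this
  have hor : ∀ n : ℕ, ∀ g : Circle → ℂ, BddMeasurable g →
      ∫ z, g (z.val n) * (h' (z.val n) - f z) ∂m = 0 := by
    apply tower hmeas hbdd hd (fun n z => h' (z.val n) - f z)
    · intro n
      filter_upwards [hco'] with z hz
      simp [shiftInv_val, ← hz]
    · intro g hg
      have hgc : BddMeasurable (fun z : Solenoid N => g (z.val 0)) := bdd_comp hg (measurable_coord N 0)
      simp only [mul_sub]
      have i1 := bdd_mul_integrable hgc (hint 0)
      have i2 := bdd_mul_integrable (m := m) hgc (bdd_integrable hf)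
      have := integral_sub i1 i2
      simp only [Nat.cast_zero] at this ⊢
      rw [this, horth g hg, int_coord_zero h0 (G := fun w => g w * h' w)
        (hg.1.aestronglyMeasurable.mul hm'.aestronglyMeasurable), sub_eq_zero]
      apply integral_congr_ae
      filter_upwards [hhh'] with w hw
      rw [hw]
  filter_upwards [levy Complex.reCLM hf hm'.measurable hint hor, levy Complex.imCLM hf hm'.measurable hint hor,
    ae_all_iff.2 (fun n => ae_coord hd h0 hhh' n)] with z h1 h2 h3
  simp only [h3]
  exact tendsto_of_re_im h1 h2

end
end Sol11

namespace Sol11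
open MeasureTheory Filter Topology
open scoped ENNReal
section
variable {N : ℕ} {m₀ : Circle → ℂ} {m : Measure (Solenoid N)}

instance : IsFiniteMeasure circleMeasure := by
  unfold circleMeasure; infer_instance

/-- the Ruelle operator written out on the real line -/
noncomputable def ruelle (N : ℕ) (m₀ h : Circle → ℂ) (x : ℝ) : ℂ :=
  (1 / N : ℂ) * ∑ k ∈ Finset.range N,
        (‖m₀ (ee ((x + k) / N))‖ ^ 2 : ℝ) * h (ee ((x + k) / N))

lemma bdd_mul_integrable' {μ : Measure Circle} {g f : Circle → ℂ} (hg : BddMeasurable g)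
    (hf : Integrable f μ) : Integrable (fun z => g z * f z) μ := by
  obtain ⟨h1, C, hC⟩ := hg
  exact hf.bdd_mul h1.aestronglyMeasurable (ae_of_all _ hC)

lemma ruelle_integrable (hN : N ≠ 0) (hmeas : Measurable m₀) (hbdd : ∃ C : ℝ, ∀ z, ‖m₀ z‖ ≤ C)
    {h : Circle → ℂ} (hh : Integrable h circleMeasure) :
    Integrable (ruelle N m₀ h) (volume.restrict (Set.Ico (0:ℝ) 1)) :=
  (cv N hN _ (bdd_mul_integrable' (bdd_sq hmeas hbdd) hh)).1

lemma ruelle_int (hN : N ≠ 0) (hmeas : Measurable m₀) (hbdd : ∃ C : ℝ, ∀ z, ‖m₀ z‖ ≤ C)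
    {h : Circle → ℂ} (hh : Integrable h circleMeasure) {g : Circle → ℂ} (hg : BddMeasurable g) :
    ∫ w, ((‖m₀ w‖ ^ 2 : ℝ) : ℂ) * g (w ^ N) * h w ∂circleMeasure =
      ∫ x in Set.Ico (0:ℝ) 1, g (ee x) * ruelle N m₀ h x := by
  have hb : BddMeasurable (fun w => ((‖m₀ w‖ ^ 2 : ℝ) : ℂ) * g (w ^ N)) :=
    bdd_mul (bdd_sq hmeas hbdd) (bdd_comp hg (measurable_npow N))
  rw [(cv N hN _ (bdd_mul_integrable' hb hh)).2]
  congr 1; funext x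
  unfold ruelle
  rw [mul_left_comm]
  congr 1
  rw [Finset.mul_sum]
  apply Finset.sum_congr rfl
  intro k _
  rw [ee_div_pow x N k hN]; ring

lemma int_circle {G : Circle → ℂ} (hG : AEStronglyMeasurable G circleMeasure) :
    ∫ w, G w ∂circleMeasure = ∫ x in Set.Ico (0:ℝ) 1, G (ee x) := by
  unfold circleMeasure at hG ⊢
  rw [integral_map measurable_ee.aemeasurable hG]

/-- weak form implies harmonicity -/
lemma ruelleFixed_of_weak (hN : N ≠ 0) (hmeas : Measurable m₀) (hbdd : ∃ C : ℝ, ∀ z, ‖m₀ z‖ ≤ C)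
    {h : Circle → ℂ} (hh : Integrable h circleMeasure)
    (hw : ∀ g : Circle → ℂ, BddMeasurable g →
      ∫ w, ((‖m₀ w‖ ^ 2 : ℝ) : ℂ) * g (w ^ N) * h w ∂circleMeasure =
        ∫ w, g w * h w ∂circleMeasure) : RuelleFixed N m₀ h := by
  have i1 := ruelle_integrable hN hmeas hbdd hh
  have i2 : Integrable (fun x => h (ee x)) (volume.restrict (Set.Ico (0:ℝ) 1)) :=
    hh.comp_measurable measurable_ee
  have : ruelle N m₀ h =ᵐ[volume.restrict (Set.Ico (0:ℝ) 1)] fun x => h (ee x) := by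
    apply Integrable.ae_eq_of_forall_setIntegral_eq _ _ i1 i2
    intro s hs _
    have hg : BddMeasurable (fun w => s.indicator (fun _ => (1:ℂ)) (tau w)) :=
      bdd_comp (bdd_indicator hs) measurable_tau
    have h1 := hw _ hg
    rw [ruelle_int hN hmeas hbdd hh hg,
      int_circle (bdd_mul_integrable' hg hh).aestronglyMeasurable] at h1
    have h2 : ∀ F : ℝ → ℂ, ∫ x in Set.Ico (0:ℝ) 1, s.indicator (fun _ => (1:ℂ)) (tau (ee x)) * F x =
        ∫ x in s, F x ∂(volume.restrict (Set.Ico (0:ℝ) 1)) := by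
      intro F
      rw [← integral_indicator hs]
      apply setIntegral_congr_fun measurableSet_Ico
      intro x hx
      simp only [tau_ee hx]
      by_cases hxs : x ∈ s <;> simp [hxs]
    rw [h2, h2 (fun x => h (ee x))] at h1
    exact h1
  exact this

lemma weak_of_ruelleFixed (hN : N ≠ 0) (hmeas : Measurable m₀) (hbdd : ∃ C : ℝ, ∀ z, ‖m₀ z‖ ≤ C)
    {h : Circle → ℂ} (hh : Integrable h circleMeasure) (hR : RuelleFixed N m₀ h)
    {g : Circle → ℂ} (hg : BddMeasurable g) :
      ∫ w, ((‖m₀ w‖ ^ 2 : ℝ) : ℂ) * g (w ^ N) * h w ∂circleMeasure =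
        ∫ w, g w * h w ∂circleMeasure := by
  rw [ruelle_int hN hmeas hbdd hh hg,
      int_circle (bdd_mul_integrable' hg hh).aestronglyMeasurable]
  apply integral_congr_ae
  filter_upwards [hR] with x hx
  unfold ruelle; rw [hx]

/-- cocycles project to harmonic functions -/
lemma harmonic_of_cocycle (hN : N ≠ 0) [IsProbabilityMeasure m] (hmeas : Measurable m₀)
    (hbdd : ∃ C : ℝ, ∀ z, ‖m₀ z‖ ≤ C)
    (hd : Dens N m₀ m)
    {f : Solenoid N → ℂ} (hco : (fun z => f (shift N z)) =ᵐ[m] f)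
    {h : Circle → ℂ} (hh : Integrable h circleMeasure)
    (horth : ∀ g : Circle → ℂ, BddMeasurable g →
      ∫ z, g (z.val 0) * f z ∂m = ∫ w, g w * h w ∂circleMeasure) : RuelleFixed N m₀ h := by
  apply ruelleFixed_of_weak hN hmeas hbdd hh
  intro g hg
  have hb : BddMeasurable (fun w => ((‖m₀ w‖ ^ 2 : ℝ) : ℂ) * g (w ^ N)) :=
    bdd_mul (bdd_sq hmeas hbdd) (bdd_comp hg (measurable_npow N))
  rw [← horth _ hb, ← horth g hg]
  have h1 := int_shift hmeas hd (fun z => g (z.val (-1)) * f (shift N z))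
  simp only [shiftInv_val, shift_shiftInv, neg_add_cancel] at h1
  rw [h1]
  apply integral_congr_ae
  filter_upwards [hco] with z hz
  have h2 := z.property (-1)
  simp only [neg_add_cancel] at h2
  rw [hz, h2]; ring

lemma harm_orth (hN : N ≠ 0) [IsProbabilityMeasure m] (hmeas : Measurable m₀)
    (hbdd : ∃ C : ℝ, ∀ z, ‖m₀ z‖ ≤ C) (hd : Dens N m₀ m)
    (h0 : m.map (fun z : Solenoid N => z.val 0) = circleMeasure)
    {h : Circle → ℂ} (hh : BddMeasurable h) (hR : RuelleFixed N m₀ h) (n : ℕ) :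
    ∀ g : Circle → ℂ, BddMeasurable g →
      ∫ z, g (z.val n) * (h (z.val n) - h (z.val (n + 1 : ℕ))) ∂m = 0 := by
  apply tower hmeas hbdd hd (fun (n : ℕ) (z : Solenoid N) => h (z.val n) - h (z.val (n + 1 : ℕ)))
  · intro n; simp [shiftInv_val]
  · intro g hg
    have b1 : BddMeasurable (fun z : Solenoid N => g (z.val 0) * h (z.val 0)) :=
      bdd_comp (bdd_mul hg hh) (measurable_coord N 0)
    have b2 : BddMeasurable (fun z : Solenoid N => g (z.val 0) * h (z.val 1)) :=
      bdd_mul (bdd_comp hg (measurable_coord N 0)) (bdd_comp hh (measurable_coord N 1))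
    have := integral_sub (bdd_integrable (μ := m) b1) (bdd_integrable (μ := m) b2)
    simp only [mul_sub, Nat.cast_zero, zero_add, Nat.cast_one]
    rw [this, sub_eq_zero]
    have h1 := int_shift hmeas hd (fun z => g (z.val (-1)) * h (z.val 0))
    simp only [shiftInv_val, neg_add_cancel, zero_add] at h1
    rw [h1, int_coord_zero h0 (G := fun w => g w * h w) (bdd_mul hg hh).1.aestronglyMeasurable,
      ← weak_of_ruelleFixed hN hmeas hbdd (bdd_integrable hh) hR hg,
      ← int_coord_zero h0 (G := fun w => ((‖m₀ w‖ ^ 2 : ℝ) : ℂ) * g (w ^ N) * h w)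
        (bdd_mul (bdd_mul (bdd_sq hmeas hbdd) (bdd_comp hg (measurable_npow N))) hh).1.aestronglyMeasurable]
    congr 1; funext z
    have h2 := z.property (-1)
    simp only [neg_add_cancel] at h2
    rw [h2]; ring

lemma harm_conv (hN : N ≠ 0) [IsProbabilityMeasure m] (hmeas : Measurable m₀)
    (hbdd : ∃ C : ℝ, ∀ z, ‖m₀ z‖ ≤ C) (hd : Dens N m₀ m)
    (h0 : m.map (fun z : Solenoid N => z.val 0) = circleMeasure)
    {h : Circle → ℂ} (hh : BddMeasurable h) (hR : RuelleFixed N m₀ h) (L : ℂ →L[ℝ] ℝ) :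
    ∃ f : Solenoid N → ℝ, Measurable f ∧
      ∀ᵐ z ∂m, Tendsto (fun n : ℕ => L (h (z.val n))) atTop (𝓝 (f z)) := by
  have hi : ∀ n : ℕ, Integrable (fun z : Solenoid N => h (z.val n)) m :=
    fun n => bdd_integrable (bdd_comp hh (measurable_coord N n))
  have hmart : Martingale (fun (n : ℕ) (z : Solenoid N) => L (h (z.val n))) (filt N) m := by
    apply martingale_of_setIntegral_eq_succ
    · intro n
      apply Measurable.stronglyMeasurable
      exact (L.continuous.measurable.comp hh.1).comp (comap_measurable _)
    · intro n; exact L.integrable_comp (hi n)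
    · rintro n s ⟨B, hB, rfl⟩
      exact setInt_of_ind hB (hi n) (hi (n+1)) (harm_orth hN hmeas hbdd hd h0 hh hR n _ (bdd_indicator hB)) L
  obtain ⟨C, hC⟩ := hh.2
  refine ⟨_, Filtration.stronglyMeasurable_limit_process'.measurable,
    hmart.submartingale.ae_tendsto_limitProcess (R := (‖L‖ * C).toNNReal) ?_⟩
  intro n
  refine (eLpNorm_le_of_ae_bound (C := ‖L‖ * C) (ae_of_all _ fun z => ?_)).trans ?_
  · exact (L.le_opNorm _).trans (by gcongr; exact hC _)
  · simp [ENNReal.ofReal]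

/-- every bounded harmonic function is the projection of a cocycle -/
lemma exists_cocycle (hN : N ≠ 0) [IsProbabilityMeasure m] (hmeas : Measurable m₀)
    (hbdd : ∃ C : ℝ, ∀ z, ‖m₀ z‖ ≤ C) (hd : Dens N m₀ m)
    (h0 : m.map (fun z : Solenoid N => z.val 0) = circleMeasure)
    (hne : ∀ᵐ z ∂m, m₀ (z.val 0) ≠ 0)
    {h : Circle → ℂ} (hh : BddMeasurable h) (hR : RuelleFixed N m₀ h) :
    ∃ f : Solenoid N → ℂ, BddMeasurable f ∧ (fun z => f (shift N z)) =ᵐ[m] f ∧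
      ∀ g : Circle → ℂ, BddMeasurable g →
      ∫ z, g (z.val 0) * f z ∂m = ∫ w, g w * h w ∂circleMeasure := by
  obtain ⟨f1, hm1, hf1⟩ := harm_conv hN hmeas hbdd hd h0 hh hR Complex.reCLM
  obtain ⟨f2, hm2, hf2⟩ := harm_conv hN hmeas hbdd hd h0 hh hR Complex.imCLM
  obtain ⟨C, hC⟩ := hh.2
  let f0 : Solenoid N → ℂ := fun z => ⟨f1 z, f2 z⟩
  have hf0 : Measurable f0 := Complex.measurableEquivRealProd.symm.measurable.comp (hm1.prodMk hm2)
  have hlim0 : ∀ᵐ z ∂m, Tendsto (fun n : ℕ => h (z.val n)) atTop (𝓝 (f0 z)) := by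
    filter_upwards [hf1, hf2] with z h1 h2
    exact tendsto_of_re_im h1 h2
  have hs : MeasurableSet {z | ‖f0 z‖ ≤ C} := measurableSet_le hf0.norm measurable_const
  have hC0 : 0 ≤ C := (norm_nonneg _).trans (hC 1)
  let f : Solenoid N → ℂ := {z | ‖f0 z‖ ≤ C}.indicator f0
  have hlim : ∀ᵐ z ∂m, Tendsto (fun n : ℕ => h (z.val n)) atTop (𝓝 (f z)) := by
    filter_upwards [hlim0] with z hz
    have : ‖f0 z‖ ≤ C := le_of_tendsto hz.norm (Eventually.of_forall fun n => hC _)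
    simpa [f, Set.indicator, this] using hz
  have hfb : BddMeasurable f := by
    refine ⟨hf0.indicator hs, C, fun z => ?_⟩
    by_cases hz : ‖f0 z‖ ≤ C <;> simp [f, Set.indicator, hz, hC0]
  refine ⟨f, hfb, ?_, ?_⟩
  · filter_upwards [hlim, (qmp hmeas hd hne).ae hlim] with z h1 h2
    rw [← tendsto_add_atTop_iff_nat 1] at h2
    simp only [shift_val] at h2
    push_cast at h2
    simp only [add_sub_cancel_right] at h2
    exact tendsto_nhds_unique h2 h1
  · intro g hg
    have hgc : BddMeasurable (fun z : Solenoid N => g (z.val 0)) := bdd_comp hg (measurable_coord N 0)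
    have hb : ∀ n : ℕ, BddMeasurable (fun z : Solenoid N => g (z.val 0) * h (z.val n)) := fun n =>
      bdd_mul hgc (bdd_comp hh (measurable_coord N n))
    obtain ⟨D, hD⟩ := hg.2
    have hconst : ∀ n : ℕ, ∫ z, g (z.val 0) * h (z.val n) ∂m = ∫ w, g w * h w ∂circleMeasure := by
      intro n
      induction n with
      | zero => exact int_coord_zero h0 (G := fun w => g w * h w) (bdd_mul hg hh).1.aestronglyMeasurable
      | succ n ih =>
        rw [← ih, eq_comm, ← sub_eq_zero,
          ← integral_sub (bdd_integrable (hb n)) (bdd_integrable (hb (n+1))),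
          ← harm_orth hN hmeas hbdd hd h0 hh hR n (fun w => g (w ^ N ^ n))
            (bdd_comp hg (measurable_npow _))]
        congr 1; funext z
        have h2 := coord_pow N z n 0
        rw [zero_add] at h2
        rw [h2]; ring
    have hT := tendsto_integral_of_dominated_convergence (μ := m)
      (F := fun (n : ℕ) (z : Solenoid N) => g (z.val 0) * h (z.val n))
      (f := fun z => g (z.val 0) * f z) (fun _ => D * C)
      (fun n => (hb n).1.aestronglyMeasurable) (integrable_const _)
      (fun n => ae_of_all _ fun z => by
        rw [norm_mul]
        exact mul_le_mul (hD _) (hC _) (norm_nonneg _) ((norm_nonneg _).trans (hD 1)))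
      (by filter_upwards [hlim] with z hz; exact hz.const_mul _)
    simp only [hconst] at hT
    exact tendsto_nhds_unique hT tendsto_const_nhds

end
end Sol11

namespace Sol11
open MeasureTheory Filter Topology
open scoped ENNReal
section
variable {N : ℕ} {m₀ : Circle → ℂ} {m : Measure (Solenoid N)}

/-- `A` commutes with multiplication by `g` -/
def CM (A : Lp ℂ 2 m →L[ℂ] Lp ℂ 2 m) (g : Solenoid N → ℂ) : Prop :=
  ∀ ξ η : Lp ℂ 2 m, (η : Solenoid N → ℂ) =ᵐ[m] (fun z => g z * ξ z) →
    (A η : Solenoid N → ℂ) =ᵐ[m] fun z => g z * A ξ z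

lemma memLp_mul {g : Solenoid N → ℂ} (hg : BddMeasurable g) (ξ : Lp ℂ 2 m) :
    MemLp (fun z => g z * ξ z) 2 m := by
  obtain ⟨h1, C, hC⟩ := hg
  have h2 : MemLp (fun z => (C : ℂ) * ξ z) 2 m := (Lp.memLp ξ).const_mul (C : ℂ)
  refine h2.mono (h1.aestronglyMeasurable.mul (Lp.memLp ξ).aestronglyMeasurable) (ae_of_all _ fun z => ?_)
  rw [norm_mul, norm_mul]
  gcongr
  refine (hC z).trans ?_
  simpa using le_abs_self C

lemma CM.mul {A : Lp ℂ 2 m →L[ℂ] Lp ℂ 2 m} {g₁ g₂ : Solenoid N → ℂ} (hb : BddMeasurable g₂)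
    (h1 : CM A g₁) (h2 : CM A g₂) : CM A (fun z => g₁ z * g₂ z) := by
  intro ξ η hη
  let ζ : Lp ℂ 2 m := (memLp_mul hb ξ).toLp
  have hζ : (ζ : Solenoid N → ℂ) =ᵐ[m] fun z => g₂ z * ξ z := (memLp_mul hb ξ).coeFn_toLp
  have e1 := h2 ξ ζ hζ
  have e2 := h1 ζ η (by
    filter_upwards [hη, hζ] with z a b
    rw [a, b, mul_assoc])
  filter_upwards [e1, e2] with z a b
  rw [b, a, mul_assoc]

lemma CM.add {A : Lp ℂ 2 m →L[ℂ] Lp ℂ 2 m} {g₁ g₂ : Solenoid N → ℂ} (hb1 : BddMeasurable g₁)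
    (hb : BddMeasurable g₂)
    (h1 : CM A g₁) (h2 : CM A g₂) : CM A (fun z => g₁ z + g₂ z) := by
  intro ξ η hη
  let ζ : Lp ℂ 2 m := (memLp_mul hb ξ).toLp
  have hζ : (ζ : Solenoid N → ℂ) =ᵐ[m] fun z => g₂ z * ξ z := (memLp_mul hb ξ).coeFn_toLp
  let ζ' : Lp ℂ 2 m := (memLp_mul hb1 ξ).toLp
  have hζ' : (ζ' : Solenoid N → ℂ) =ᵐ[m] fun z => g₁ z * ξ z := (memLp_mul hb1 ξ).coeFn_toLp
  have e1 := h2 ξ ζ hζ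
  have e2 := h1 ξ ζ' hζ'
  have e : η = ζ' + ζ := by
    apply Lp.ext
    filter_upwards [hη, hζ, hζ', Lp.coeFn_add ζ' ζ] with z a b c d
    rw [a, d, Pi.add_apply, b, c]; ring
  rw [e, map_add]
  filter_upwards [e1, e2, Lp.coeFn_add (A ζ') (A ζ)] with z a b c
  rw [c, Pi.add_apply, a, b]; ring

lemma CM.const (A : Lp ℂ 2 m →L[ℂ] Lp ℂ 2 m) (c : ℂ) : CM A (fun _ => c) := by
  intro ξ η hη
  have e : η = c • ξ := by
    apply Lp.ext
    filter_upwards [hη, Lp.coeFn_smul c ξ] with z a b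
    rw [a, b]; simp
  rw [e, map_smul]
  filter_upwards [Lp.coeFn_smul c (A ξ)] with z b
  rw [b]; simp

lemma CM.inv {A : Lp ℂ 2 m →L[ℂ] Lp ℂ 2 m} {g g' : Solenoid N → ℂ}
    (h : CM A g) (hgg' : ∀ z, g z * g' z = 1) : CM A g' := by
  intro ξ η hη
  have := h η ξ (by
    filter_upwards [hη] with z a
    rw [a, ← mul_assoc, hgg', one_mul])
  filter_upwards [this] with z a
  rw [a, ← mul_assoc, mul_comm (g' z), hgg', one_mul]

/-- coordinate as a continuous function -/
def coordC (N : ℕ) (n : ℕ) : C(Solenoid N, ℂ) where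
  toFun z := ((z.val (n : ℤ) : Circle) : ℂ)
  continuous_toFun := by
    have : Continuous (fun z : Solenoid N => z.val (n : ℤ)) :=
      (continuous_apply (n : ℤ)).comp continuous_subtype_val
    exact (by fun_prop : Continuous (fun w : Circle => (w : ℂ))).comp this

lemma bdd_cont (g : C(Solenoid N, ℂ)) : BddMeasurable (fun z => g z) :=
  ⟨g.continuous.measurable, ‖g‖, fun z => g.norm_coe_le_norm z⟩

lemma CM_coord (hd : Dens N m₀ m) (hmeas : Measurable m₀) (hne : ∀ᵐ z ∂m, m₀ (z.val 0) ≠ 0)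
    {U T : unitary (Lp ℂ 2 m →L[ℂ] Lp ℂ 2 m)}
    (hUT : IsWaveletRepOn N m₀ m U T) {A : Lp ℂ 2 m →L[ℂ] Lp ℂ 2 m}
    (hU : Commute A (U : Lp ℂ 2 m →L[ℂ] Lp ℂ 2 m))
    (hT : Commute A (T : Lp ℂ 2 m →L[ℂ] Lp ℂ 2 m)) (n : ℕ) : CM A (fun z => coordC N n z) := by
  have hU' : ∀ ξ, A ((U : Lp ℂ 2 m →L[ℂ] Lp ℂ 2 m) ξ) = (U : Lp ℂ 2 m →L[ℂ] Lp ℂ 2 m) (A ξ) :=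
    fun ξ => congrArg (fun B : Lp ℂ 2 m →L[ℂ] Lp ℂ 2 m => B ξ) hU.eq
  have hT' : ∀ ξ, A ((T : Lp ℂ 2 m →L[ℂ] Lp ℂ 2 m) ξ) = (T : Lp ℂ 2 m →L[ℂ] Lp ℂ 2 m) (A ξ) :=
    fun ξ => congrArg (fun B : Lp ℂ 2 m →L[ℂ] Lp ℂ 2 m => B ξ) hT.eq
  induction n with
  | zero =>
    intro ξ η hη
    have e : η = (T : Lp ℂ 2 m →L[ℂ] Lp ℂ 2 m) ξ := by
      apply Lp.ext
      filter_upwards [hη, hUT.2 ξ] with z a b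
      rw [a, b]; rfl
    rw [e, hT']
    exact hUT.2 _
  | succ n ih =>
    intro ξ η hη
    have hq := qmp hmeas hd hne
    have e1 := ih ((U : Lp ℂ 2 m →L[ℂ] Lp ℂ 2 m) ξ) ((U : Lp ℂ 2 m →L[ℂ] Lp ℂ 2 m) η) (by
      filter_upwards [hUT.1 ξ, hUT.1 η, hq.ae hη] with z a b c
      rw [a, b, c]
      simp [coordC, shift_val]; ring)
    rw [hU', hU'] at e1
    apply ae_of_shift hd (p := fun z => (A η) z = coordC N (n+1) z * (A ξ) z)
    filter_upwards [e1, hUT.1 (A ξ), hUT.1 (A η), hne] with z a b c d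
    rw [b, c] at a
    apply mul_left_cancel₀ d
    rw [a]
    simp [coordC, shift_val]; ring

lemma CM_adjoin {A : Lp ℂ 2 m →L[ℂ] Lp ℂ 2 m} (h : ∀ n, CM A (fun z => coordC N n z))
    (g : C(Solenoid N, ℂ)) (hg : g ∈ StarAlgebra.adjoin ℂ (Set.range (coordC N))) :
    CM A (fun z => g z) ∧ CM A (fun z => (star g) z) := by
  induction hg using StarAlgebra.adjoin_induction with
  | mem x hx =>
    obtain ⟨n, rfl⟩ := hx
    refine ⟨h n, (h n).inv fun z => ?_⟩
    simp only [ContinuousMap.star_apply, coordC, ContinuousMap.coe_mk]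
    rw [RCLike.star_def, Complex.mul_conj]
    simp
  | algebraMap r =>
    refine ⟨CM.const A r, ?_⟩
    have : (fun z => (star (algebraMap ℂ C(Solenoid N, ℂ) r)) z) = fun _ => star r := by
      funext z; simp
    rw [this]
    exact CM.const A _
  | add x y _ _ hx hy =>
    refine ⟨CM.add (bdd_cont x) (bdd_cont y) hx.1 hy.1, ?_⟩
    rw [star_add]
    exact CM.add (bdd_cont _) (bdd_cont _) hx.2 hy.2
  | mul x y _ _ hx hy =>
    refine ⟨CM.mul (bdd_cont y) hx.1 hy.1, ?_⟩
    rw [star_mul]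
    exact CM.mul (bdd_cont _) hy.2 hx.2
  | star x _ hx => rw [star_star]; exact ⟨hx.2, hx.1⟩

lemma adjoin_dense (N : ℕ) :
    (StarAlgebra.adjoin ℂ (Set.range (coordC N))).topologicalClosure = ⊤ := by
  apply ContinuousMap.starSubalgebra_topologicalClosure_eq_top_of_separatesPoints
  intro x y hxy
  by_contra hcon
  apply hxy
  have h1 : ∀ n : ℕ, x.val (n : ℤ) = y.val n := by
    intro n
    by_contra hne
    apply hcon
    refine ⟨_, ⟨coordC N n, StarAlgebra.subset_adjoin ℂ _ ⟨n, rfl⟩, rfl⟩, ?_⟩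
    intro h
    apply hne
    exact Circle.ext h
  apply Subtype.ext
  funext n
  rcases Int.eq_nat_or_neg n with ⟨k, rfl | rfl⟩
  · exact h1 k
  · have hx := coord_pow N x k (-k)
    have hy := coord_pow N y k (-k)
    have := h1 0
    simp only [neg_add_cancel, Nat.cast_zero] at hx hy this
    rw [← hx, ← hy, this]

lemma closed_mul [IsFiniteMeasure m] (A : Lp ℂ 2 m →L[ℂ] Lp ℂ 2 m) (f : Solenoid N → ℂ) :
    IsClosed {ξ : Lp ℂ 2 m | (A ξ : Solenoid N → ℂ) =ᵐ[m] fun z => f z * ξ z} := by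
  apply IsSeqClosed.isClosed
  intro u ξ hu hlim
  obtain ⟨ns, hns, h1⟩ := (tendstoInMeasure_of_tendsto_Lp hlim).exists_seq_tendsto_ae
  have hlim2 : Tendsto (fun k => A (u (ns k))) atTop (𝓝 (A ξ)) :=
    (A.continuous.tendsto ξ).comp (hlim.comp hns.tendsto_atTop)
  obtain ⟨ms, hms, h2⟩ := (tendstoInMeasure_of_tendsto_Lp hlim2).exists_seq_tendsto_ae
  have hu' : ∀ k, (A (u k) : Solenoid N → ℂ) =ᵐ[m] fun z => f z * u k z := hu
  change (A ξ : Solenoid N → ℂ) =ᵐ[m] fun z => f z * ξ z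
  filter_upwards [h1, h2, ae_all_iff.2 hu'] with z a b c
  have a' := (a.comp hms.tendsto_atTop).const_mul (f z)
  simp only [c] at b
  exact tendsto_nhds_unique b a'

/-- an operator commuting with `U` and `T` is a multiplication operator -/
lemma exists_mult [IsProbabilityMeasure m] {A : Lp ℂ 2 m →L[ℂ] Lp ℂ 2 m}
    (h : ∀ n, CM A (fun z => coordC N n z)) :
    ∃ f : Solenoid N → ℂ, BddMeasurable f ∧
      ∀ ξ : Lp ℂ 2 m, (A ξ : Solenoid N → ℂ) =ᵐ[m] fun z => f z * ξ z := by
  let one : Lp ℂ 2 m := ContinuousMap.toLp 2 m ℂ (1 : C(Solenoid N, ℂ))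
  have hone : (one : Solenoid N → ℂ) =ᵐ[m] fun _ => 1 := ContinuousMap.coeFn_toLp m _
  let f0 : Solenoid N → ℂ := A one
  have hf0 : Measurable f0 := (Lp.stronglyMeasurable (A one)).measurable
  have hall : ∀ ξ : Lp ℂ 2 m, (A ξ : Solenoid N → ℂ) =ᵐ[m] fun z => f0 z * ξ z := by
    have hc := closed_mul A f0
    have hcont : ∀ g : C(Solenoid N, ℂ), ContinuousMap.toLp 2 m ℂ g ∈
        {ξ : Lp ℂ 2 m | (A ξ : Solenoid N → ℂ) =ᵐ[m] fun z => f0 z * ξ z} := by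
      have hc2 := hc.preimage (ContinuousMap.toLp 2 m ℂ (α := Solenoid N) (E := ℂ)).continuous
      have hsub : ((StarAlgebra.adjoin ℂ (Set.range (coordC N)) : StarSubalgebra ℂ C(Solenoid N, ℂ)) :
          Set C(Solenoid N, ℂ)) ⊆ (ContinuousMap.toLp 2 m ℂ (α := Solenoid N) (E := ℂ)) ⁻¹'
            {ξ : Lp ℂ 2 m | (A ξ : Solenoid N → ℂ) =ᵐ[m] fun z => f0 z * ξ z} := by
        intro g hg
        change (A _ : Solenoid N → ℂ) =ᵐ[m] _
        have e := (CM_adjoin h g hg).1 one (ContinuousMap.toLp 2 m ℂ g) (by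
          filter_upwards [hone, ContinuousMap.coeFn_toLp (p := 2) (𝕜 := ℂ) m g] with z a b
          rw [a, b, mul_one])
        filter_upwards [e, ContinuousMap.coeFn_toLp (p := 2) (𝕜 := ℂ) m g] with z a b
        rw [a, b, mul_comm]
      have hcl := closure_minimal hsub hc2
      intro g
      apply hcl
      have : g ∈ (StarAlgebra.adjoin ℂ (Set.range (coordC N))).topologicalClosure := by
        rw [adjoin_dense]; trivial
      exact this
    intro ξ
    have hdense := ContinuousMap.toLp_denseRange (α := Solenoid N) ℂ m (p := 2) ℂ (by simp)
    have := hdense.closure_range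
    have hmem : ξ ∈ closure (Set.range (ContinuousMap.toLp 2 m ℂ (α := Solenoid N) (E := ℂ))) := by
      rw [this]; trivial
    exact closure_minimal (by rintro _ ⟨g, rfl⟩; exact hcont g) hc hmem
  -- boundedness
  set C := ‖A‖ + 1 with hC
  have hCpos : 0 < C := by positivity
  have hs : MeasurableSet {z | C ≤ ‖f0 z‖} := measurableSet_le measurable_const hf0.norm
  let χ : Lp ℂ 2 m := (MemLp.of_bound (p := 2) (μ := m) (bdd_indicator hs).1.aestronglyMeasurable 1
    (ae_of_all _ fun z => by
      by_cases hz : C ≤ ‖f0 z‖ <;> simp [hz])).toLp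
  have hχ : (χ : Solenoid N → ℂ) =ᵐ[m] {z | C ≤ ‖f0 z‖}.indicator (fun _ => (1:ℂ)) :=
    MemLp.coeFn_toLp _
  have hle : ‖(C : ℂ) • χ‖ ≤ ‖A χ‖ := by
    apply Lp.norm_le_norm_of_ae_le
    filter_upwards [hχ, hall χ, Lp.coeFn_smul (C : ℂ) χ] with z a b c
    rw [b, c, Pi.smul_apply, a]
    by_cases hz : C ≤ ‖f0 z‖
    · simpa [hz, abs_of_pos hCpos] using hz
    · simp [hz]
  have hχ0 : χ = 0 := by
    rw [norm_smul] at hle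
    have h2 := A.le_opNorm χ
    have h3 : ‖(C : ℂ)‖ = ‖A‖ + 1 := by rw [Complex.norm_real, Real.norm_of_nonneg hCpos.le]
    rw [h3] at hle
    have : ‖χ‖ ≤ 0 := by nlinarith
    exact norm_le_zero_iff.1 this
  have hlt : ∀ᵐ z ∂m, ¬ (C ≤ ‖f0 z‖) := by
    have h0 : (χ : Solenoid N → ℂ) =ᵐ[m] 0 := by rw [hχ0]; exact Lp.coeFn_zero _ _ _
    filter_upwards [hχ, h0] with z a b hz
    rw [a] at b
    simp [hz] at b
  refine ⟨{z | C ≤ ‖f0 z‖}ᶜ.indicator f0, ⟨hf0.indicator hs.compl, C, fun z => ?_⟩, fun ξ => ?_⟩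
  · by_cases hz : C ≤ ‖f0 z‖
    · simp [Set.indicator, hz, hCpos.le]
    · simpa [Set.indicator, hz] using (not_le.1 hz).le
  · filter_upwards [hall ξ, hlt] with z a b
    rw [a]; simp [Set.indicator, b]

lemma commutant_iff [IsProbabilityMeasure m] (hd : Dens N m₀ m) (hmeas : Measurable m₀)
    (hne : ∀ᵐ z ∂m, m₀ (z.val 0) ≠ 0)
    {U T : unitary (Lp ℂ 2 m →L[ℂ] Lp ℂ 2 m)}
    (hUT : IsWaveletRepOn N m₀ m U T) (A : Lp ℂ 2 m →L[ℂ] Lp ℂ 2 m) :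
    (Commute A (U : Lp ℂ 2 m →L[ℂ] Lp ℂ 2 m) ∧
       Commute A (T : Lp ℂ 2 m →L[ℂ] Lp ℂ 2 m)) ↔
      ∃ f : Solenoid N → ℂ, BddMeasurable f ∧
        (fun z => f (shift N z)) =ᵐ[m] f ∧
        ∀ ξ : Lp ℂ 2 m, (A ξ : Solenoid N → ℂ) =ᵐ[m]
          fun z => f z * (ξ : Solenoid N → ℂ) z := by
  have hq := qmp hmeas hd hne
  constructor
  · rintro ⟨hU, hT⟩
    obtain ⟨f, hf, hA⟩ := exists_mult (CM_coord hd hmeas hne hUT hU hT)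
    refine ⟨f, hf, ?_, hA⟩
    let one : Lp ℂ 2 m := ContinuousMap.toLp 2 m ℂ (1 : C(Solenoid N, ℂ))
    have hone : (one : Solenoid N → ℂ) =ᵐ[m] fun _ => 1 := ContinuousMap.coeFn_toLp m _
    have e : A ((U : Lp ℂ 2 m →L[ℂ] Lp ℂ 2 m) one) = (U : Lp ℂ 2 m →L[ℂ] Lp ℂ 2 m) (A one) :=
      congrArg (fun B : Lp ℂ 2 m →L[ℂ] Lp ℂ 2 m => B one) hU.eq
    have e1 := hA ((U : Lp ℂ 2 m →L[ℂ] Lp ℂ 2 m) one)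
    rw [e] at e1
    filter_upwards [e1, hUT.1 one, hUT.1 (A one), hq.ae hone, hq.ae (hA one), hne] with z a b c d k l
    rw [c, b, d, k, d] at a
    apply mul_left_cancel₀ l
    simpa [mul_comm] using a
  · rintro ⟨f, hf, hco, hA⟩
    constructor
    · apply ContinuousLinearMap.ext
      intro ξ
      apply Lp.ext
      change (A ((U : Lp ℂ 2 m →L[ℂ] Lp ℂ 2 m) ξ) : Solenoid N → ℂ) =ᵐ[m]
        ((U : Lp ℂ 2 m →L[ℂ] Lp ℂ 2 m) (A ξ) : Lp ℂ 2 m)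
      filter_upwards [hA ((U : Lp ℂ 2 m →L[ℂ] Lp ℂ 2 m) ξ), hUT.1 ξ, hUT.1 (A ξ), hq.ae (hA ξ), hco]
        with z a b c d e
      rw [a, b, c, d, e]; ring
    · apply ContinuousLinearMap.ext
      intro ξ
      apply Lp.ext
      change (A ((T : Lp ℂ 2 m →L[ℂ] Lp ℂ 2 m) ξ) : Solenoid N → ℂ) =ᵐ[m]
        ((T : Lp ℂ 2 m →L[ℂ] Lp ℂ 2 m) (A ξ) : Lp ℂ 2 m)
      filter_upwards [hA ((T : Lp ℂ 2 m →L[ℂ] Lp ℂ 2 m) ξ), hUT.2 ξ, hUT.2 (A ξ), hA ξ]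
        with z a b c d
      rw [a, b, c, d]; ring

end
end Sol11


open MeasureTheory Real Complex Filter Finset in
/-- Corollary 3.6. Let `m₀ ∈ L^∞(𝕋)` be non-singular with
`R_{m₀}1 = 1` and let `m` be the associated measure on the solenoid, with the
wavelet representation realized on `L²(m)` by `Uξ = m₀·(ξ∘S)`, `T = M_{z₀}`,
and let `E` be the conditional expectation onto `L¹(𝕋)`.  Then there is a
one-to-one, linear and monotone correspondence between
(i) operators in the commutant of `{U,T}`,
(ii) cocycles, i.e. `f ∈ L^∞(m)` with `f∘S = f` a.e., and
(iii) `h ∈ L^∞(𝕋)` harmonic for the Ruelle operator, `R_{m₀} h = h`: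
from (i) to (ii), the commutant consists exactly of the multiplication operators
`M_f` by cocycles `f`; from (ii) to (iii) the correspondence is `f ↦ E(f)`, which
is a linear, positivity-preserving bijection (modulo null sets) onto the fixed
points of `R_{m₀}`. -/
theorem statement_11 (N : ℕ) (hN : 2 ≤ N)
    (m₀ : Circle → ℂ) (hmeas : Measurable m₀) (hbdd : ∃ C : ℝ, ∀ z, ‖m₀ z‖ ≤ C)
    (hns : circleMeasure {z | m₀ z = 0} = 0) (hqmf : QMF N m₀)
    (m : Measure (Solenoid N))
    (hm : IsAssociatedMeasure N (fun z => ‖m₀ z‖ ^ 2 / N) m)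
    (U T : unitary (Lp ℂ 2 m →L[ℂ] Lp ℂ 2 m))
    (hUT : IsWaveletRepOn N m₀ m U T)
    (E : (Solenoid N → ℂ) → (Circle → ℂ))
    (hE1 : ∀ f : Solenoid N → ℂ, Integrable f m →
      Integrable (E f) circleMeasure ∧
        ∫ w, E f w ∂circleMeasure = ∫ z, f z ∂m)
    (hE2 : ∀ g : Circle → ℂ, BddMeasurable g → ∀ f : Solenoid N → ℂ, Integrable f m →
      E (fun z => g (z.val 0) * f z) =ᵐ[circleMeasure] fun w => g w * E f w)
    (hE3 : ∀ f g : Solenoid N → ℂ, Integrable f m → Integrable g m → ∀ c : ℂ,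
      E (fun z => c * f z + g z) =ᵐ[circleMeasure] fun w => c * E f w + E g w)
    (hE4 : ∀ f : Solenoid N → ℂ, Integrable f m →
      (∀ᵐ z ∂m, 0 ≤ (f z).re ∧ (f z).im = 0) →
      ∀ᵐ w ∂circleMeasure, 0 ≤ (E f w).re ∧ (E f w).im = 0) :
    -- (i) ↔ (ii): the commutant of `{U,T}` consists exactly of the multiplication
    -- operators `M_f` with `f` a bounded cocycle
    (∀ A : Lp ℂ 2 m →L[ℂ] Lp ℂ 2 m,
      (Commute A (U : Lp ℂ 2 m →L[ℂ] Lp ℂ 2 m) ∧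
       Commute A (T : Lp ℂ 2 m →L[ℂ] Lp ℂ 2 m)) ↔
      ∃ f : Solenoid N → ℂ, BddMeasurable f ∧
        (fun z => f (shift N z)) =ᵐ[m] f ∧
        ∀ ξ : Lp ℂ 2 m, (A ξ : Solenoid N → ℂ) =ᵐ[m]
          fun z => f z * (ξ : Solenoid N → ℂ) z) ∧
    -- (ii) → (iii): `E` maps cocycles to harmonic functions of the Ruelle operator
    (∀ f : Solenoid N → ℂ, BddMeasurable f → (fun z => f (shift N z)) =ᵐ[m] f →
      RuelleFixed N m₀ (E f)) ∧
    -- the correspondence `f ↦ E f` is one-to-one on cocycles ...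
    (∀ f₁ f₂ : Solenoid N → ℂ, BddMeasurable f₁ → BddMeasurable f₂ →
      (fun z => f₁ (shift N z)) =ᵐ[m] f₁ → (fun z => f₂ (shift N z)) =ᵐ[m] f₂ →
      E f₁ =ᵐ[circleMeasure] E f₂ → f₁ =ᵐ[m] f₂) ∧
    -- ... and onto the harmonic functions `h ∈ L^∞(𝕋)`, `R_{m₀} h = h`
    (∀ h : Circle → ℂ, BddMeasurable h → RuelleFixed N m₀ h →
      ∃ f : Solenoid N → ℂ, BddMeasurable f ∧
        (fun z => f (shift N z)) =ᵐ[m] f ∧ E f =ᵐ[circleMeasure] h) ∧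
    -- monotonicity of the correspondence: a real-valued cocycle is positive iff
    -- its harmonic function is positive
    (∀ f : Solenoid N → ℂ, BddMeasurable f → (fun z => f (shift N z)) =ᵐ[m] f →
      (∀ᵐ z ∂m, (f z).im = 0) →
      ((∀ᵐ z ∂m, 0 ≤ (f z).re) ↔ ∀ᵐ w ∂circleMeasure, 0 ≤ (E f w).re)) := by
  have hN0 : N ≠ 0 := by omega
  have hNc : (N : ℝ) ≠ 0 := by exact_mod_cast hN0
  obtain ⟨hprob, h0, hd0⟩ := hm
  have hd : Sol11.Dens N m₀ m := by
    have : (fun z : Solenoid N => ENNReal.ofReal (N * (‖m₀ (z.val 0)‖ ^ 2 / N))) =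
        fun z => ENNReal.ofReal (‖m₀ (z.val 0)‖ ^ 2) := by
      funext z; rw [mul_div_cancel₀ _ hNc]
    simp only [this] at hd0
    exact hd0
  have hne : ∀ᵐ z ∂m, m₀ (z.val 0) ≠ 0 := by
    have : ∀ᵐ w ∂circleMeasure, m₀ w ≠ 0 := by
      rw [ae_iff]; simpa using hns
    exact Sol11.ae_coord hd h0 this 0
  have horth : ∀ f : Solenoid N → ℂ, BddMeasurable f → ∀ g : Circle → ℂ, BddMeasurable g →
      ∫ z, g (z.val 0) * f z ∂m = ∫ w, g w * E f w ∂circleMeasure := by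
    intro f hf g hg
    have hfi : Integrable f m := Sol11.bdd_integrable hf
    have hgf : Integrable (fun z : Solenoid N => g (z.val 0) * f z) m :=
      Sol11.bdd_mul_integrable (Sol11.bdd_comp hg (Sol11.measurable_coord N 0)) hfi
    rw [← (hE1 _ hgf).2]
    exact integral_congr_ae (hE2 g hg f hfi)
  have hEi : ∀ f : Solenoid N → ℂ, BddMeasurable f → Integrable (E f) circleMeasure :=
    fun f hf => (hE1 f (Sol11.bdd_integrable hf)).1
  have hrec := fun (f : Solenoid N → ℂ) (hf : BddMeasurable f)
      (hco : (fun z => f (shift N z)) =ᵐ[m] f) =>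
    Sol11.recover hmeas hbdd hd h0 hf hco (hEi f hf) (horth f hf)
  refine ⟨fun A => Sol11.commutant_iff hd hmeas hne hUT A, ?_, ?_, ?_, ?_⟩
  · intro f hf hco
    exact Sol11.harmonic_of_cocycle hN0 hmeas hbdd hd hco (hEi f hf) (horth f hf)
  · intro f₁ f₂ hf₁ hf₂ hc₁ hc₂ hEE
    filter_upwards [hrec f₁ hf₁ hc₁, hrec f₂ hf₂ hc₂,
      ae_all_iff.2 (fun n => Sol11.ae_coord hd h0 hEE n)] with z a b c
    simp only [c] at a
    exact tendsto_nhds_unique a b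
  · intro h hh hR
    obtain ⟨f, hf, hco, hor⟩ := Sol11.exists_cocycle hN0 hmeas hbdd hd h0 hne hh hR
    refine ⟨f, hf, hco, ?_⟩
    apply Integrable.ae_eq_of_forall_setIntegral_eq _ _ (hEi f hf) (Sol11.bdd_integrable hh)
    intro s hs _
    have hg := Sol11.bdd_indicator hs
    have e := (horth f hf _ hg).symm.trans (hor _ hg)
    have hind : ∀ F : Circle → ℂ, ∫ w in s, F w ∂circleMeasure =
        ∫ w, s.indicator (fun _ => (1:ℂ)) w * F w ∂circleMeasure := by
      intro F
      rw [← integral_indicator hs]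
      congr 1; funext w
      by_cases hw : w ∈ s <;> simp [hw]
    rw [hind, hind, e]
  · intro f hf hco him
    constructor
    · intro hre
      filter_upwards [hE4 f (Sol11.bdd_integrable hf) (by
        filter_upwards [hre, him] with z a b using ⟨a, b⟩)] with w hw using hw.1
    · intro hpos
      filter_upwards [hrec f hf hco, ae_all_iff.2 (fun n => Sol11.ae_coord hd h0 hpos n)] with z a b
      exact ge_of_tendsto ((Complex.continuous_re.tendsto _).comp a)
        (Filter.Eventually.of_forall fun n => b n)
end

section
/- Let m₀ ∈ L^∞(𝕋) be non-singular with R_{m₀}1 = 1 and let (H, U, π, φ) be the associated wavelet representation. Then there is a standard measure space (A, 𝓜, μ), a measurable field {𝓗_a} of Hilbert spaces over A, a measurable field {π_a} of irreducible representations of BS(1,N), and a unitary Ψ : H → ∫^⊕ 𝓗_a dμ(a) such that Ψπ(x)Ψ⁻¹ = ∫^⊕ π_a(x) dμ(a) for all x ∈ BS(1,N) and Ψπ'Ψ⁻¹ is the algebra of diagonal operators. For almost every a ∈ A there exists a unique ergodic, quasi-invariant probability measure ν_a on S_N with d(ν_a∘S)/dν_a = |m₀|², and with θ = m₀/|m₀|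 the representation π_a is unitarily equivalent to π_{ν_a,θ}. Moreover, for every f ∈ C(S_N), ∫_{S_N} f dm = ∫_A ∫_{S_N} f dν_a dμ(a), where m is the measure on S_N associated to m₀. -/
noncomputable section

/-- A standard Borel base space for a direct integral decomposition. -/
structure MeasurableBase where
  A : Type
  [mA : MeasurableSpace A]
  [sb : StandardBorelSpace A]

attribute [instance] MeasurableBase.mA MeasurableBase.sb

open MeasureTheory Real Complex Filter Finset in
/-- The data of the direct integral decomposition
`Ψ : L²(m) → ∫^⊕ 𝓗_a dμ(a) = L²(∫ ν_a dμ(a))` of the wavelet representation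
associated to `m₀` into irreducible representations: a measure `μ` on a standard
Borel space `A`; a measurable family `a ↦ ν_a = κ a` of ergodic quasi-invariant
probability measures on the solenoid with `d(ν_a∘S)/dν_a = |m₀|²` decomposing
`m`, each `ν_a` unique with these properties up to equivalence of the associated
representations `π_a ≅ π_{ν_a,θ}` (`θ = m₀/|m₀|`); the direct integral realized
as `L²(ρ)` with `ρ(E × F) = ∫_E ν_a(F) dμ(a)`; and a unitary `Ψ` intertwining
`U, T` with the decomposed operators and carrying the commutant onto the algebra
of diagonal operators. -/
structure DirectIntegralDecomp (N : ℕ) (m₀ : Circle → ℂ) (m : Measure (Solenoid N))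
    (U T : unitary (Lp ℂ 2 m →L[ℂ] Lp ℂ 2 m)) (B : MeasurableBase) where
  μ : Measure B.A
  sf : SigmaFinite μ
  κ : B.A → Measure (Solenoid N)
  ρm : Measure (B.A × Solenoid N)
  -- measurability of the field `a ↦ ν_a`
  κ_meas : ∀ E : Set (Solenoid N), MeasurableSet E → Measurable fun a => κ a E
  -- for a.e. `a`, `ν_a` is a probability measure, quasi-invariant with
  -- `d(ν_a∘S)/dν_a = |m₀|²`, and ergodic (so that `π_{ν_a,θ}` is irreducible)
  κ_prob : ∀ᵐ a ∂μ, IsProbabilityMeasure (κ a)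
  κ_rn : ∀ᵐ a ∂μ, measShift N (κ a)
    = (κ a).withDensity (fun z => ENNReal.ofReal (‖m₀ (z.val 0)‖ ^ 2))
  κ_qi : ∀ᵐ a ∂μ, QuasiInvariant N (κ a)
  κ_erg : ∀ᵐ a ∂μ, ShiftErgodic N (κ a)
  -- uniqueness of `ν_a`: any ergodic quasi-invariant probability measure with
  -- the same Radon–Nikodym derivative and unitarily equivalent representation
  -- (`Uξ = m₀·(ξ∘S)`, `T = M_{z₀}`, i.e. `π_{ν,θ}` with `θ = m₀/|m₀|`)
  -- coincides with `ν_a`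
  κ_unique : ∀ᵐ a ∂μ, ∀ ν : Measure (Solenoid N), IsProbabilityMeasure ν →
    measShift N ν = ν.withDensity (fun z => ENNReal.ofReal (‖m₀ (z.val 0)‖ ^ 2)) →
    ShiftErgodic N ν →
    (∃ (Uv Tv : unitary (Lp ℂ 2 ν →L[ℂ] Lp ℂ 2 ν))
       (Ua Ta : unitary (Lp ℂ 2 (κ a) →L[ℂ] Lp ℂ 2 (κ a))),
      IsWaveletRepOn N m₀ ν Uv Tv ∧ IsWaveletRepOn N m₀ (κ a) Ua Ta ∧
      ∃ W : Lp ℂ 2 ν ≃ₗᵢ[ℂ] Lp ℂ 2 (κ a),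
        (∀ ξ : Lp ℂ 2 ν,
          W ((Uv : Lp ℂ 2 ν →L[ℂ] Lp ℂ 2 ν) ξ) = (Ua : Lp ℂ 2 (κ a) →L[ℂ] Lp ℂ 2 (κ a)) (W ξ)) ∧
        (∀ ξ : Lp ℂ 2 ν,
          W ((Tv : Lp ℂ 2 ν →L[ℂ] Lp ℂ 2 ν) ξ) = (Ta : Lp ℂ 2 (κ a) →L[ℂ] Lp ℂ 2 (κ a)) (W ξ))) →
    ν = κ a
  -- the decomposition of the measure: `m = ∫ ν_a dμ(a)`, i.e.
  -- `∫ f dm = ∫_A ∫_{S_N} f dν_a dμ(a)`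
  κ_mix : ∀ E : Set (Solenoid N), MeasurableSet E → m E = ∫⁻ a, κ a E ∂μ
  -- the direct integral `∫^⊕ 𝓗_a dμ(a)`, realized as `L²(ρ)` for the measure
  -- `ρ(E × F) = ∫_E ν_a(F) dμ(a)` on `A × S_N`
  ρ_prod : ∀ (E : Set B.A) (F : Set (Solenoid N)), MeasurableSet E → MeasurableSet F →
    ρm (E ×ˢ F) = ∫⁻ a in E, κ a F ∂μ
  -- the unitary `Ψ : H → ∫^⊕ 𝓗_a dμ(a)`
  Ψ : Lp ℂ 2 m ≃ₗᵢ[ℂ] Lp ℂ 2 ρm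
  -- `Ψ π(x) Ψ⁻¹ = ∫^⊕ π_a(x) dμ(a)`: `Ψ` intertwines `U`, `T` with the fields of
  -- operators acting fiberwise by `(U_a ξ)(z) = m₀(z₀) ξ(Sz)`, `(T_a ξ)(z) = z₀ ξ(z)`
  interU : ∀ ξ : Lp ℂ 2 m,
    ((Ψ ((U : Lp ℂ 2 m →L[ℂ] Lp ℂ 2 m) ξ) : Lp ℂ 2 ρm) : B.A × Solenoid N → ℂ) =ᵐ[ρm]
      fun q => m₀ (q.2.val 0) * ((Ψ ξ : Lp ℂ 2 ρm) : B.A × Solenoid N → ℂ) (q.1, shift N q.2)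
  interT : ∀ ξ : Lp ℂ 2 m,
    ((Ψ ((T : Lp ℂ 2 m →L[ℂ] Lp ℂ 2 m) ξ) : Lp ℂ 2 ρm) : B.A × Solenoid N → ℂ) =ᵐ[ρm]
      fun q => ((q.2.val 0 : Circle) : ℂ) * ((Ψ ξ : Lp ℂ 2 ρm) : B.A × Solenoid N → ℂ) q
  -- `Ψ π' Ψ⁻¹` is the algebra of diagonal operators: an operator commutes with
  -- the representation iff it is carried to multiplication by a bounded
  -- measurable function of `a` alone
  diag : ∀ Op : Lp ℂ 2 m →L[ℂ] Lp ℂ 2 m,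
    (Commute Op (U : Lp ℂ 2 m →L[ℂ] Lp ℂ 2 m) ∧
     Commute Op (T : Lp ℂ 2 m →L[ℂ] Lp ℂ 2 m)) ↔
    ∃ g : B.A → ℂ, Measurable g ∧ (∃ C : ℝ, ∀ a, ‖g a‖ ≤ C) ∧
      ∀ ξ : Lp ℂ 2 m,
        ((Ψ (Op ξ) : Lp ℂ 2 ρm) : B.A × Solenoid N → ℂ) =ᵐ[ρm]
          fun q => g q.1 * ((Ψ ξ : Lp ℂ 2 ρm) : B.A × Solenoid N → ℂ) q

namespace Stmt12
open MeasureTheory Filter ProbabilityTheory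
open scoped ENNReal Topology

section gen
variable {X : Type*} [MeasurableSpace X] (S : X ≃ᵐ X) (d : X → ℝ)

/-- the abstract Radon-Nikodym condition. -/
def RN (ν : Measure X) : Prop :=
  ν.map S.symm = ν.withDensity (fun x => ENNReal.ofReal (d x))

variable {S d}

lemma cov_lint (hd : Measurable d) {ν : Measure X} (h : RN S d ν) {F : X → ℝ≥0∞} (hF : Measurable F) :
    ∫⁻ x, ENNReal.ofReal (d x) * F (S x) ∂ν = ∫⁻ x, F x ∂ν := by
  have h1 := lintegral_withDensity_eq_lintegral_mul ν (hd.ennreal_ofReal) (hF.comp S.measurable)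
  rw [← h, lintegral_map (hF.comp S.measurable) S.symm.measurable] at h1
  simpa using h1.symm

lemma cov_int (hd : Measurable d) (hd0 : ∀ x, 0 ≤ d x) {ν : Measure X} (h : RN S d ν) (F : X → ℝ) :
    ∫ x, d x * F (S x) ∂ν = ∫ x, F x ∂ν := by
  have h1 := integral_withDensity_eq_integral_toReal_smul (μ := ν) (hd.ennreal_ofReal)
    (ae_of_all _ fun x => ENNReal.ofReal_lt_top) (F ∘ S)
  rw [← h, S.symm.measurableEmbedding.integral_map] at h1
  simpa [hd0] using h1.symm

lemma qmp_symm {ν : Measure X} (h : RN S d ν) : Measure.QuasiMeasurePreserving S.symm ν ν :=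
  ⟨S.symm.measurable, by rw [h]; exact withDensity_absolutelyContinuous _ _⟩

lemma ac_of_pos (hd : Measurable d) {ν : Measure X} (h : RN S d ν) (hp : ∀ᵐ x ∂ν, 0 < d x) :
    ν ≪ ν.map S.symm := by
  rw [h]
  apply withDensity_absolutelyContinuous' hd.ennreal_ofReal.aemeasurable
  filter_upwards [hp] with x hx
  simpa using hx

lemma qmp (hd : Measurable d) {ν : Measure X} (h : RN S d ν) (hp : ∀ᵐ x ∂ν, 0 < d x) :
    Measure.QuasiMeasurePreserving S ν ν := by
  refine ⟨S.measurable, ?_⟩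
  have := (ac_of_pos hd h hp).map S.measurable
  rwa [Measure.map_map S.measurable S.symm.measurable, MeasurableEquiv.self_comp_symm,
    Measure.map_id] at this

lemma strict_inv {ν : Measure X} (hS : Measure.QuasiMeasurePreserving S ν ν) (w : X → ℝ)
    (hw : AEStronglyMeasurable w ν) (hi : w ∘ S =ᵐ[ν] w) :
    ∃ w' : X → ℝ, Measurable w' ∧ w' ∘ S = w' ∧ w' =ᵐ[ν] w := by
  set v := hw.mk w with hv
  have hvm : Measurable v := hw.stronglyMeasurable_mk.measurable
  have hvw : w =ᵐ[ν] v := hw.ae_eq_mk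
  have hvi : v ∘ S =ᵐ[ν] v := ((hS.ae_eq_comp hvw).symm.trans hi).trans hvw
  have hit : ∀ n : ℕ, v ∘ (S^[n]) =ᵐ[ν] v := by
    intro n
    induction n with
    | zero => simp
    | succ n ih =>
      rw [Function.iterate_succ, ← Function.comp_assoc]
      exact (hS.ae_eq_comp ih).trans hvi
  refine ⟨fun x => limsup (fun n : ℕ => v (S^[n] x)) atTop, ?_, ?_, ?_⟩
  · exact Measurable.limsup fun n => hvm.comp (S.measurable.iterate n)
  · funext x
    simp only [Function.comp_apply, ← Function.iterate_succ_apply]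
    exact Filter.limsup_nat_add (fun n : ℕ => v (S^[n] x)) 1
  · filter_upwards [ae_all_iff.2 hit, hvw] with x hx hx2
    have : (fun n : ℕ => v (S^[n] x)) = fun _ => v x := funext fun n => hx n
    rw [this, limsup_const, hx2]

lemma exists_factor [MeasurableSpace.CountablyGenerated X] {m : Measure X} [IsFiniteMeasure m]
    (hS : Measure.QuasiMeasurePreserving S m m) :
    ∃ p : X → (ℕ → ℝ), Measurable p ∧ p ∘ S = p ∧
      ∀ w : X → ℝ, MemLp w 2 m → w ∘ S =ᵐ[m] w → ∃ g : (ℕ → ℝ) → ℝ, Measurable g ∧ w =ᵐ[m] g ∘ p := by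
  let I : Set (Lp ℝ 2 m) := {w | (w : X → ℝ) ∘ S =ᵐ[m] w}
  have : Fact ((2:ℝ≥0∞) ≠ ∞) := ⟨by simp⟩
  have hne : I.Nonempty := ⟨0, by
    have h0 := Lp.coeFn_zero ℝ 2 m
    have := hS.ae_eq_comp h0
    exact this.trans h0.symm⟩
  have hsep : TopologicalSpace.SeparableSpace I := inferInstance
  have : Nonempty I := hne.to_subtype
  let s := TopologicalSpace.denseSeq I
  have hs : DenseRange s := TopologicalSpace.denseRange_denseSeq I
  have hst : ∀ i, ∃ w' : X → ℝ, Measurable w' ∧ w' ∘ S = w' ∧ w' =ᵐ[m] ((s i : Lp ℝ 2 m) : X → ℝ) :=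
    fun i => strict_inv hS _ (Lp.aestronglyMeasurable _) (s i).2
  choose w' h1 h2 h3 using hst
  have hp : Measurable (fun x i => w' i x) := measurable_pi_lambda _ h1
  refine ⟨fun x i => w' i x, hp, ?_, ?_⟩
  · funext x i
    exact congrFun (h2 i) x
  · intro w hw hi
    have hcl := isClosed_aestronglyMeasurable (F := ℝ) (p := 2) (μ := m) hp.comap_le
    have hwI : hw.toLp w ∈ I :=
      ((hS.ae_eq_comp hw.coeFn_toLp).trans hi).trans hw.coeFn_toLp.symm
    have hmem : AEStronglyMeasurable[MeasurableSpace.comap (fun x i => w' i x) inferInstance]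
        (hw.toLp w) m := by
      have key : ∀ y : I, (y : Lp ℝ 2 m) ∈ {f : Lp ℝ 2 m | AEStronglyMeasurable[MeasurableSpace.comap
          (fun x i => w' i x) inferInstance] f m} := by
        intro y
        refine hs.induction_on (p := fun y : I => (y : Lp ℝ 2 m) ∈ {f : Lp ℝ 2 m |
          AEStronglyMeasurable[MeasurableSpace.comap
          (fun x i => w' i x) inferInstance] f m}) y (hcl.preimage continuous_subtype_val) ?_
        intro i
        refine ⟨w' i, ?_, (h3 i).symm⟩
        apply Measurable.stronglyMeasurable
        have hc := comap_measurable (m := MeasurableSpace.pi) (fun x (i : ℕ) => w' i x)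
        exact (measurable_pi_apply i).comp hc
      exact key ⟨_, hwI⟩
    obtain ⟨g, hg, hgw⟩ := hmem
    obtain ⟨k, hk, rfl⟩ := hg.exists_eq_measurable_comp
    exact ⟨k, hk.measurable, hw.coeFn_toLp.symm.trans hgw⟩

end gen
end Stmt12

namespace Stmt12
open MeasureTheory Filter ProbabilityTheory
open scoped ENNReal Topology

section gen2
variable {X : Type*} [MeasurableSpace X] {S : X ≃ᵐ X} {d : X → ℝ}

lemma memLp_bdd {m : Measure X} [IsFiniteMeasure m] {h : X → ℝ} (hh : Measurable h)
    (hb : ∃ B, ∀ x, |h x| ≤ B) {q : ℝ≥0∞} : MemLp h q m := by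
  obtain ⟨B, hB⟩ := hb
  exact MemLp.of_bound hh.aestronglyMeasurable B (ae_of_all _ hB)

/-- the space of coboundaries `d * h ∘ S - h`. -/
noncomputable def cob (S : X ≃ᵐ X) (d : X → ℝ) (m : Measure X) : Submodule ℝ (Lp ℝ 2 m) where
  carrier := {y | ∃ h : X → ℝ, Measurable h ∧ (∃ B, ∀ x, |h x| ≤ B) ∧
    (y : X → ℝ) =ᵐ[m] fun x => d x * h (S x) - h x}
  zero_mem' := ⟨0, measurable_zero, ⟨0, by simp⟩, by
    filter_upwards [Lp.coeFn_zero ℝ 2 m] with x hx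
    refine hx.trans ?_
    simp⟩
  add_mem' := by
    rintro a b ⟨h, hm, ⟨B, hB⟩, hh⟩ ⟨h', hm', ⟨B', hB'⟩, hh'⟩
    refine ⟨h + h', hm.add hm', ⟨B + B', fun x => (abs_add_le _ _).trans (add_le_add (hB x) (hB' x))⟩, ?_⟩
    filter_upwards [Lp.coeFn_add a b, hh, hh'] with x h1 h2 h3
    rw [h1]
    simp only [Pi.add_apply, h2, h3]
    ring
  smul_mem' := by
    rintro c a ⟨h, hm, ⟨B, hB⟩, hh⟩
    refine ⟨c • h, hm.const_smul c, ⟨|c| * B, fun x => ?_⟩, ?_⟩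
    · simp only [Pi.smul_apply, smul_eq_mul, abs_mul]
      exact mul_le_mul_of_nonneg_left (hB x) (abs_nonneg _)
    · filter_upwards [Lp.coeFn_smul c a, hh] with x h1 h2
      rw [h1]
      simp only [Pi.smul_apply, smul_eq_mul, h2]
      ring

lemma approx (hd : Measurable d) (hd0 : ∀ x, 0 ≤ d x) (hdb : ∃ C, ∀ x, d x ≤ C)
    {m : Measure X} [IsProbabilityMeasure m] (h : RN S d m) (hp : ∀ᵐ x ∂m, 0 < d x)
    {f : X → ℝ} (hf : Measurable f) (hfb : ∃ B, ∀ x, |f x| ≤ B) :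
    ∃ w : X → ℝ, MemLp w 2 m ∧ w ∘ S =ᵐ[m] w ∧ ∀ ε : ℝ, 0 < ε →
      ∃ k : X → ℝ, Measurable k ∧ (∃ B, ∀ x, |k x| ≤ B) ∧
        ∫⁻ x, ‖f x + (d x * k (S x) - k x) - w x‖ₑ ∂m ≤ ENNReal.ofReal ε := by
  obtain ⟨C, hC⟩ := hdb
  have hfL : MemLp f 2 m := memLp_bdd hf hfb
  let K := (cob S d m).topologicalClosure
  have hKc : IsClosed (K : Set (Lp ℝ 2 m)) := Submodule.isClosed_topologicalClosure _
  have : CompleteSpace K := hKc.completeSpace_coe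
  let F := hfL.toLp f
  let P : Lp ℝ 2 m := K.starProjection F
  have hPK : P ∈ K := Submodule.starProjection_apply_mem K F
  have hwK : F - P ∈ Kᗮ := Submodule.sub_starProjection_mem_orthogonal F
  set w : Lp ℝ 2 m := F - P with hw
  have hw1 : Integrable (w : X → ℝ) m := (Lp.memLp w).integrable (by norm_num)
  have hw2 : Integrable ((w : X → ℝ) ∘ S.symm) m := by
    rw [← S.symm.measurableEmbedding.integrable_map_iff, h]
    have hle : m.withDensity (fun x => ENNReal.ofReal (d x)) ≤ ENNReal.ofReal C • m := by
      rw [← withDensity_const]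
      exact withDensity_mono (ae_of_all _ fun x => ENNReal.ofReal_le_ofReal (hC x))
    exact (hw1.smul_measure ENNReal.ofReal_ne_top).mono_measure hle
  refine ⟨w, Lp.memLp w, ?_, ?_⟩
  · have hsymm : (w : X → ℝ) ∘ S.symm =ᵐ[m] w := by
      apply Integrable.ae_eq_of_forall_setIntegral_eq _ _ hw2 hw1
      intro E hE _
      let g : X → ℝ := E.indicator (fun _ => 1)
      have hg : Measurable g := measurable_const.indicator hE
      have hgb : ∀ x, |g x| ≤ 1 := by
        intro x
        by_cases hx : x ∈ E <;> simp [g, hx]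
      have hcm : Measurable (fun x => d x * g (S x) - g x) :=
        (hd.mul (hg.comp S.measurable)).sub hg
      have hdm : Measurable (fun x => d x * g (S x)) := hd.mul (hg.comp S.measurable)
      have hdb : ∀ x, |d x * g (S x)| ≤ C := by
        intro x
        rw [abs_mul, abs_of_nonneg (hd0 x)]
        calc d x * |g (S x)| ≤ d x * 1 := mul_le_mul_of_nonneg_left (hgb _) (hd0 x)
          _ ≤ C := by simpa using hC x
      have hcb : ∃ B, ∀ x, |d x * g (S x) - g x| ≤ B := ⟨C + 1, fun x =>
        (abs_sub _ _).trans (add_le_add (hdb x) (hgb x))⟩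
      have hcL : MemLp (fun x => d x * g (S x) - g x) 2 m := memLp_bdd hcm hcb
      have hmem : hcL.toLp _ ∈ K := (cob S d m).le_topologicalClosure
        ⟨g, hg, ⟨1, hgb⟩, hcL.coeFn_toLp⟩
      have h0 : inner ℝ (hcL.toLp _) w = 0 := hwK _ hmem
      rw [L2.inner_def] at h0
      have h1 : ∫ x, (d x * g (S x)) * w x - g x * w x ∂m = 0 := by
        rw [← h0]
        apply integral_congr_ae
        filter_upwards [hcL.coeFn_toLp] with x hx
        simp only [hx, RCLike.inner_apply, conj_trivial]
        ring
      have i1 : Integrable (fun x => (d x * g (S x)) * w x) m :=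
        hw1.bdd_mul hdm.aestronglyMeasurable (ae_of_all _ hdb)
      have i2 : Integrable (fun x => g x * w x) m :=
        hw1.bdd_mul hg.aestronglyMeasurable (ae_of_all _ hgb)
      rw [integral_sub i1 i2, sub_eq_zero] at h1
      have h2 := cov_int hd hd0 h (fun x => g x * w (S.symm x))
      simp only [MeasurableEquiv.symm_apply_apply, ← mul_assoc] at h2
      rw [h1] at h2
      rw [← integral_indicator hE, ← integral_indicator hE]
      have e1 : ∀ v : X → ℝ, E.indicator v = fun x => g x * v x := by
        intro v
        funext x
        by_cases hx : x ∈ E <;> simp [g, hx]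
      rw [e1, e1]
      exact h2.symm
    have := (qmp hd h hp).ae_eq_comp hsymm
    rw [Function.comp_assoc, MeasurableEquiv.symm_comp_self, Function.comp_id] at this
    exact this.symm
  · intro ε hε
    obtain ⟨y, ⟨k, hk, hkb, hyk⟩, hy⟩ := Metric.mem_closure_iff.1 hPK ε hε
    refine ⟨-k, hk.neg, by simpa using hkb, ?_⟩
    have e : (fun x => f x + (d x * (-k) (S x) - (-k) x) - w x) =ᵐ[m] ((P - y : Lp ℝ 2 m) : X → ℝ) := by
      filter_upwards [hyk, hfL.coeFn_toLp, Lp.coeFn_sub F P, Lp.coeFn_sub P y] with x h1 h2 h3 h4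
      rw [hw, h3, h4]
      simp only [Pi.sub_apply, Pi.neg_apply, h1]
      rw [show (F : X → ℝ) x = f x from h2]
      ring
    rw [lintegral_congr_ae (g := fun x => ‖((P - y : Lp ℝ 2 m) : X → ℝ) x‖ₑ)
      (by filter_upwards [e] with x hx; rw [hx])]
    rw [← eLpNorm_one_eq_lintegral_enorm]
    refine (eLpNorm_le_eLpNorm_of_exponent_le (q := 2) (by norm_num) (Lp.aestronglyMeasurable _)).trans ?_
    rw [← ENNReal.ofReal_toReal (Lp.eLpNorm_ne_top (P - y)), ← Lp.norm_def]
    apply ENNReal.ofReal_le_ofReal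
    rw [← dist_eq_norm]
    exact hy.le

lemma ergodic_ae [MeasurableSpace.CountablyGenerated X]
    (hd : Measurable d) (hd0 : ∀ x, 0 ≤ d x) (hdb : ∃ C, ∀ x, d x ≤ C)
    {m : Measure X} [IsProbabilityMeasure m] (h : RN S d m) (hp : ∀ᵐ x ∂m, 0 < d x)
    {A : Type*} [MeasurableSpace A] {p : X → A} (hpm : Measurable p)
    (hfac : ∀ w : X → ℝ, MemLp w 2 m → w ∘ S =ᵐ[m] w → ∃ g : A → ℝ, Measurable g ∧ w =ᵐ[m] g ∘ p)
    (κ : Kernel A X) [IsMarkovKernel κ]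
    (hκ : (m.map p) ⊗ₘ κ = m.map (fun x => (p x, x)))
    (hrn : ∀ᵐ a ∂(m.map p), RN S d (κ a)) :
    ∀ᵐ a ∂(m.map p), ∀ E : Set X, MeasurableSet E → S ⁻¹' E = E → κ a E = 0 ∨ κ a Eᶜ = 0 := by
  obtain ⟨b, hbc, hbg⟩ := MeasurableSpace.CountablyGenerated.isCountablyGenerated (α := X)
  let 𝒜 := generateSetAlgebra b
  have hAc : 𝒜.Countable := countable_generateSetAlgebra hbc
  have hAg : (inferInstance : MeasurableSpace X) = MeasurableSpace.generateFrom 𝒜 := by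
    rw [generateFrom_generateSetAlgebra_eq]; exact hbg
  have hApi : IsPiSystem 𝒜 := fun s hs t ht _ =>
    (isSetAlgebra_generateSetAlgebra (𝒜 := b)).inter_mem hs ht
  have hAm : ∀ s ∈ 𝒜, MeasurableSet s := fun s hs => by
    have h1 : MeasurableSet[MeasurableSpace.generateFrom 𝒜] s :=
      MeasurableSpace.measurableSet_generateFrom hs
    rw [← hAg] at h1
    exact h1
  have key : ∀ s ∈ 𝒜, ∀ᵐ a ∂(m.map p), ∃ c : ℝ, ∀ E : Set X, MeasurableSet E → S ⁻¹' E = E →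
      (κ a).real (E ∩ s) = c * (κ a).real E := by
    intro s hs
    have hsm := hAm s hs
    let f : X → ℝ := s.indicator (fun _ => 1)
    have hf : Measurable f := measurable_const.indicator hsm
    have hfb : ∀ x, |f x| ≤ 1 := by
      intro x
      by_cases hx : x ∈ s <;> simp [f, hx]
    obtain ⟨w, hw, hwi, hap⟩ := approx hd hd0 hdb h hp hf ⟨1, hfb⟩
    obtain ⟨g, hg, hwg⟩ := hfac w hw hwi
    have hpos : ∀ n : ℕ, (0:ℝ) < 1 / (n + 1) := fun n => by positivity
    choose k hk hkb hkε using fun n : ℕ => hap (1 / (n + 1)) (hpos n)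
    let φ : ℕ → A → ℝ≥0∞ := fun n a =>
      ∫⁻ x, ‖f x + (d x * k n (S x) - k n x) - g a‖ₑ ∂(κ a)
    have hmeas : ∀ n, Measurable (fun q : A × X => ‖f q.2 + (d q.2 * k n (S q.2) - k n q.2) - g q.1‖ₑ) := by
      intro n
      have a1 : Measurable fun q : A × X => k n (S q.2) := ((hk n).comp S.measurable).comp measurable_snd
      have a2 : Measurable fun q : A × X => k n q.2 := (hk n).comp measurable_snd
      have a3 : Measurable fun q : A × X => f q.2 := hf.comp measurable_snd
      have a4 : Measurable fun q : A × X => d q.2 := hd.comp measurable_snd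
      have a5 : Measurable fun q : A × X => g q.1 := hg.comp measurable_fst
      exact ((a3.add ((a4.mul a1).sub a2)).sub a5).enorm
    have hφ : ∀ n, ∫⁻ a, φ n a ∂(m.map p) ≤ ENNReal.ofReal (1 / (n + 1)) := by
      intro n
      have := Measure.lintegral_compProd (μ := m.map p) (κ := κ) (hmeas n)
      rw [hκ, lintegral_map (hmeas n) (show Measurable fun x => (p x, x) from hpm.prodMk measurable_id)] at this
      simp only [φ]
      rw [← this]
      refine le_trans (le_of_eq ?_) (hkε n)
      apply lintegral_congr_ae
      filter_upwards [hwg] with x hx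
      rw [hx]; rfl
    have hφm : ∀ n, Measurable (φ n) := fun n =>
      Measurable.lintegral_kernel_prod_right' (κ := κ) (hmeas n)
    have hinf : ∀ᵐ a ∂(m.map p), ⨅ n, φ n a = 0 := by
      have : ∫⁻ a, ⨅ n, φ n a ∂(m.map p) = 0 := by
        have hle : ∀ n : ℕ, ∫⁻ a, ⨅ n, φ n a ∂(m.map p) ≤ ENNReal.ofReal (1 / (n + 1)) := fun n =>
          (lintegral_mono fun a => iInf_le _ n).trans (hφ n)
        have ht : Tendsto (fun n : ℕ => ENNReal.ofReal (1 / ((n:ℝ) + 1))) atTop (𝓝 0) := by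
          have := ENNReal.tendsto_ofReal (tendsto_one_div_add_atTop_nhds_zero_nat (𝕜 := ℝ))
          simpa using this
        exact le_antisymm (ge_of_tendsto' ht hle) bot_le
      rw [lintegral_eq_zero_iff (Measurable.iInf hφm)] at this
      exact this
    filter_upwards [hinf, hrn] with a ha hra
    refine ⟨g a, fun E hE hSE => ?_⟩
    obtain ⟨C, hC⟩ := hdb
    have bound : ∀ n, ENNReal.ofReal |(κ a).real (E ∩ s) - g a * (κ a).real E| ≤ φ n a := by
      intro n
      obtain ⟨B, hB⟩ := hkb n
      have ik : Integrable (k n) (κ a) := (memLp_bdd (hk n) ⟨B, hB⟩ (q := 1)).integrable le_rfl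
      have idk : Integrable (fun x => d x * k n (S x)) (κ a) := by
        refine (memLp_bdd (hd.mul ((hk n).comp S.measurable)) ⟨C * B, fun x => ?_⟩ (q := 1)).integrable le_rfl
        simp only [Pi.mul_apply, Function.comp_apply, abs_mul, abs_of_nonneg (hd0 x)]
        exact mul_le_mul (hC x) (hB _) (abs_nonneg _) ((hd0 x).trans (hC x))
      have iff0 : Integrable f (κ a) := (memLp_bdd hf ⟨1, hfb⟩ (q := 1)).integrable le_rfl
      have hz : ∫ x in E, d x * k n (S x) ∂(κ a) = ∫ x in E, k n x ∂(κ a) := by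
        have := cov_int hd hd0 hra (E.indicator (k n))
        rw [integral_indicator hE] at this
        rw [← this, ← integral_indicator hE]
        congr 1
        funext x
        have hx : S x ∈ E ↔ x ∈ E := by rw [← Set.mem_preimage, hSE]
        by_cases hxE : x ∈ E
        · simp [hxE, hx.2 hxE]
        · simp [hxE, mt hx.1 hxE]
      have hi : ∫ x in E, (f x + (d x * k n (S x) - k n x) - g a) ∂(κ a)
          = (κ a).real (E ∩ s) - g a * (κ a).real E := by
        have i3 : Integrable (fun x => d x * k n (S x) - k n x) (κ a) := idk.sub ik
        have i4 : Integrable (fun x => f x + (d x * k n (S x) - k n x)) (κ a) := iff0.add i3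
        rw [integral_sub i4.integrableOn (integrable_const _).integrableOn,
          integral_add iff0.integrableOn i3.integrableOn,
          integral_sub idk.integrableOn ik.integrableOn, hz]
        simp only [f]
        rw [integral_indicator hsm]
        simp [Measure.restrict_restrict hsm, Set.inter_comm, mul_comm]
      rw [← hi, ← Real.norm_eq_abs, ofReal_norm]
      exact (enorm_integral_le_lintegral_enorm _).trans (setLIntegral_le_lintegral _ _)
    have h0 : ENNReal.ofReal |(κ a).real (E ∩ s) - g a * (κ a).real E| ≤ 0 := by
      rw [← ha]; exact le_iInf bound
    have h1 : |(κ a).real (E ∩ s) - g a * (κ a).real E| ≤ 0 := by simpa using h0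
    have := abs_nonpos_iff.1 h1
    linarith
  have key2 := (ae_ball_iff hAc).2 key
  filter_upwards [key2] with a ha E hE hSE
  have hprod : ∀ s ∈ 𝒜, (κ a) (E ∩ s) = (κ a) E * (κ a) s := by
    intro s hs
    obtain ⟨c, hc⟩ := ha s hs
    have h1 := hc Set.univ MeasurableSet.univ (by simp)
    have h2 := hc E hE hSE
    simp only [Set.univ_inter, probReal_univ, mul_one] at h1
    rw [← h1] at h2
    have : (κ a).real (E ∩ s) = ((κ a) E * (κ a) s).toReal := by
      rw [h2, ENNReal.toReal_mul, mul_comm]; rfl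
    exact (ENNReal.toReal_eq_toReal_iff' (measure_ne_top _ _)
      (ENNReal.mul_ne_top (measure_ne_top _ _) (measure_ne_top _ _))).1 this
  have hmeq : (κ a).restrict E = (κ a) E • (κ a) := by
    apply ext_of_generate_finite 𝒜 hAg hApi
    · intro s hs
      rw [Measure.restrict_apply (hAm s hs), Set.inter_comm, hprod s hs]; rfl
    · simp
  have h3 : (κ a) Eᶜ * κ a E = 0 := by
    have := congrArg (fun ν => ν Eᶜ) hmeq
    simp only [Measure.restrict_apply hE.compl, Measure.smul_apply, smul_eq_mul] at this
    rw [mul_comm, ← this]; simp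
  rcases mul_eq_zero.1 h3 with h | h
  · exact Or.inr h
  · exact Or.inl h

end gen2
end Stmt12

namespace Stmt12
open MeasureTheory Filter ProbabilityTheory
open scoped ENNReal Topology BoundedContinuousFunction

noncomputable section sol
variable {N : ℕ}

lemma isClosed_sol (N : ℕ) : IsClosed ((solenoidGroup N : Set (ℤ → Circle))) := by
  have : (solenoidGroup N : Set (ℤ → Circle)) = ⋂ n : ℤ, {z | z (n + 1) ^ N = z n} := by
    ext z
    simp only [Set.mem_iInter]
    rfl
  rw [this]
  exact isClosed_iInter fun n => isClosed_eq ((continuous_apply _).pow N) (continuous_apply _)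

instance instCompactSol : CompactSpace (Solenoid N) :=
  isCompact_iff_compactSpace.1 (isClosed_sol N).isCompact

instance instPolishCircle : PolishSpace Circle := by
  have : SecondCountableTopology Circle := inferInstance
  have : CompleteSpace Circle := inferInstance
  infer_instance

instance instPolishSol : PolishSpace (Solenoid N) := (isClosed_sol N).polishSpace

instance instBorelSol : BorelSpace (Solenoid N) := Subtype.borelSpace _

instance instNonemptySol : Nonempty (Solenoid N) := ⟨1⟩

lemma coord_meas (n : ℤ) : Measurable (fun z : Solenoid N => z.val n) :=
  (measurable_pi_apply n).comp measurable_subtype_coe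

lemma coord_cont (n : ℤ) : Continuous (fun z : Solenoid N => ((z.val n : Circle) : ℂ)) :=
  by
  have h : Continuous (fun z : Solenoid N => z.val n) :=
    (continuous_apply n).comp continuous_subtype_val
  exact continuous_subtype_val.comp h

/-- The shift as a measurable equivalence. -/
def shiftE (N : ℕ) : Solenoid N ≃ᵐ Solenoid N where
  toFun := shift N
  invFun := shiftInv N
  left_inv z := by
    apply Subtype.ext
    funext n
    simp [shift, shiftInv]
  right_inv z := by
    apply Subtype.ext
    funext n
    simp [shift, shiftInv]
  measurable_toFun := by
    apply Measurable.subtype_mk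
    exact measurable_pi_lambda _ fun n => coord_meas (n - 1)
  measurable_invFun := by
    apply Measurable.subtype_mk
    exact measurable_pi_lambda _ fun n => coord_meas (n + 1)

lemma shiftE_apply (z : Solenoid N) : shiftE N z = shift N z := rfl

/-- The density. -/
def dd (m₀ : Circle → ℂ) (z : Solenoid N) : ℝ := ‖m₀ (z.val 0)‖ ^ 2

lemma rn_iff (m₀ : Circle → ℂ) (ν : Measure (Solenoid N)) :
    measShift N ν = ν.withDensity (fun z => ENNReal.ofReal (‖m₀ (z.val 0)‖ ^ 2)) ↔
      RN (shiftE N) (dd m₀) ν := Iff.rfl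

lemma dd_meas {m₀ : Circle → ℂ} (h : Measurable m₀) : Measurable (dd (N := N) m₀) :=
  (h.comp (coord_meas 0)).norm.pow_const 2

lemma mul_shift_congr {m₀ : Circle → ℂ} (hm₀ : Measurable m₀) {ν : Measure (Solenoid N)}
    (h : RN (shiftE N) (dd m₀) ν) {f g : Solenoid N → ℂ} (hfg : f =ᵐ[ν] g) :
    (fun z => m₀ (z.val 0) * f (shift N z)) =ᵐ[ν] fun z => m₀ (z.val 0) * g (shift N z) := by
  have h1 : ∀ᵐ z ∂(ν.map (shiftE N).symm), f (shift N z) = g (shift N z) := by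
    rw [(shiftE N).symm.measurableEmbedding.ae_map_iff]
    filter_upwards [hfg] with z hz
    have : shift N ((shiftE N).symm z) = z := (shiftE N).apply_symm_apply z
    rw [this, hz]
  rw [h, ae_withDensity_iff (dd_meas hm₀).ennreal_ofReal] at h1
  filter_upwards [h1] with z hz
  by_cases h0 : m₀ (z.val 0) = 0
  · simp [h0]
  · rw [hz]
    simp [dd, h0]

lemma U_mul {m₀ : Circle → ℂ} (hm₀ : Measurable m₀) {ν : Measure (Solenoid N)}
    (h : RN (shiftE N) (dd m₀) ν) {U T : unitary (Lp ℂ 2 ν →L[ℂ] Lp ℂ 2 ν)}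
    (hUT : IsWaveletRepOn N m₀ ν U T) (n : ℤ) (ξ η : Lp ℂ 2 ν)
    (he : (η : Solenoid N → ℂ) =ᵐ[ν] fun z => ((z.val (n + 1) : Circle) : ℂ) * ξ z) :
    (((U : Lp ℂ 2 ν →L[ℂ] Lp ℂ 2 ν) η : Lp ℂ 2 ν) : Solenoid N → ℂ) =ᵐ[ν]
      fun z => ((z.val n : Circle) : ℂ) * ((U : Lp ℂ 2 ν →L[ℂ] Lp ℂ 2 ν) ξ : Lp ℂ 2 ν) z := by
  filter_upwards [hUT.1 η, hUT.1 ξ, mul_shift_congr hm₀ h he] with z h1 h2 h3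
  rw [h1, h2, h3]
  simp only [shift, add_sub_cancel_right]
  ring

/-- `L` intertwines multiplication by `f`. -/
def Inter {ν₁ ν₂ : Measure (Solenoid N)} (L : Lp ℂ 2 ν₁ →L[ℂ] Lp ℂ 2 ν₂) (f : Solenoid N → ℂ) : Prop :=
  ∀ ξ η : Lp ℂ 2 ν₁, (η : Solenoid N → ℂ) =ᵐ[ν₁] (fun z => f z * ξ z) →
    (L η : Solenoid N → ℂ) =ᵐ[ν₂] (fun z => f z * L ξ z)

lemma exists_mul {ν : Measure (Solenoid N)} (f : Solenoid N → ℂ) (hf : Continuous f)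
    (ξ : Lp ℂ 2 ν) : ∃ η : Lp ℂ 2 ν, (η : Solenoid N → ℂ) =ᵐ[ν] fun z => f z * ξ z := by
  obtain ⟨B, hB⟩ := isCompact_univ.exists_bound_of_continuousOn hf.continuousOn
  have : MemLp (fun z => f z * ξ z) 2 ν := by
    refine MemLp.of_le_mul (c := B) (Lp.memLp ξ)
      (hf.aestronglyMeasurable.mul (Lp.aestronglyMeasurable ξ)) (ae_of_all _ fun z => ?_)
    rw [norm_mul]
    exact mul_le_mul_of_nonneg_right (hB z (Set.mem_univ _)) (norm_nonneg _)
  exact ⟨this.toLp _, this.coeFn_toLp⟩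

lemma inter_coord {m₀ : Circle → ℂ} (hm₀ : Measurable m₀) {ν₁ ν₂ : Measure (Solenoid N)}
    (h₁ : RN (shiftE N) (dd m₀) ν₁) (h₂ : RN (shiftE N) (dd m₀) ν₂)
    {U₁ T₁ : unitary (Lp ℂ 2 ν₁ →L[ℂ] Lp ℂ 2 ν₁)} {U₂ T₂ : unitary (Lp ℂ 2 ν₂ →L[ℂ] Lp ℂ 2 ν₂)}
    (hUT₁ : IsWaveletRepOn N m₀ ν₁ U₁ T₁) (hUT₂ : IsWaveletRepOn N m₀ ν₂ U₂ T₂)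
    (L : Lp ℂ 2 ν₁ →L[ℂ] Lp ℂ 2 ν₂)
    (hLU : ∀ ξ, L ((U₁ : Lp ℂ 2 ν₁ →L[ℂ] Lp ℂ 2 ν₁) ξ) = (U₂ : Lp ℂ 2 ν₂ →L[ℂ] Lp ℂ 2 ν₂) (L ξ))
    (hLT : ∀ ξ, L ((T₁ : Lp ℂ 2 ν₁ →L[ℂ] Lp ℂ 2 ν₁) ξ) = (T₂ : Lp ℂ 2 ν₂ →L[ℂ] Lp ℂ 2 ν₂) (L ξ))
    (n : ℕ) : Inter L (fun z => ((z.val (n : ℤ) : Circle) : ℂ)) := by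
  induction n with
  | zero =>
    intro ξ η he
    have : η = (T₁ : Lp ℂ 2 ν₁ →L[ℂ] Lp ℂ 2 ν₁) ξ := Lp.ext (he.trans (hUT₁.2 ξ).symm)
    rw [this, hLT]
    exact hUT₂.2 (L ξ)
  | succ n ih =>
    intro ξ η he
    push_cast at he ⊢
    have e1 := ih _ _ (U_mul hm₀ h₁ hUT₁ n ξ η he)
    rw [hLU, hLU] at e1
    obtain ⟨ζ, hζ⟩ := exists_mul (fun z : Solenoid N => ((z.val ((n : ℤ) + 1) : Circle) : ℂ))
      (coord_cont _) (L ξ)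
    have e2 := U_mul hm₀ h₂ hUT₂ n (L ξ) ζ hζ
    have e3 : (U₂ : Lp ℂ 2 ν₂ →L[ℂ] Lp ℂ 2 ν₂) (L η) = (U₂ : Lp ℂ 2 ν₂ →L[ℂ] Lp ℂ 2 ν₂) ζ :=
      Lp.ext (e1.trans e2.symm)
    have e4 : L η = ζ := by
      have := congrArg (fun v => (star (U₂ : Lp ℂ 2 ν₂ →L[ℂ] Lp ℂ 2 ν₂)) v) e3
      simp only [← mul_apply_eq_comp, Unitary.coe_star_mul_self] at this
      simpa using this
    rw [e4]
    exact hζ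

/-- generators -/
def gens (N : ℕ) : Set (Solenoid N →ᵇ ℂ) :=
  Set.range fun n : ℕ => BoundedContinuousFunction.mkOfCompact
    ⟨fun z : Solenoid N => ((z.val (n : ℤ) : Circle) : ℂ), coord_cont _⟩

/-- The algebra of trigonometric polynomials. -/
def trig (N : ℕ) : StarSubalgebra ℂ (Solenoid N →ᵇ ℂ) := StarAlgebra.adjoin ℂ (gens N)

lemma ext_nat {x y : Solenoid N} (h : ∀ n : ℕ, x.val (n : ℤ) = y.val (n : ℤ)) : x = y := by
  have neg : ∀ n : ℕ, x.val (-(n : ℤ)) = y.val (-(n : ℤ)) := by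
    intro n
    induction n with
    | zero => simpa using h 0
    | succ n ih =>
      have hx := x.property (-((n + 1 : ℕ) : ℤ))
      have hy := y.property (-((n + 1 : ℕ) : ℤ))
      have e : -((n + 1 : ℕ) : ℤ) + 1 = -(n : ℤ) := by push_cast; ring
      rw [e] at hx hy
      rw [← hx, ← hy, ih]
  apply Subtype.ext
  funext n
  rcases Int.eq_nat_or_neg n with ⟨k, rfl | rfl⟩
  · exact h k
  · exact neg k

lemma trig_sep (N : ℕ) :
    ((trig N).map (BoundedContinuousFunction.toContinuousMapStarₐ ℂ)).SeparatesPoints := by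
  intro x y hxy
  obtain ⟨n, hn⟩ : ∃ n : ℕ, x.val (n : ℤ) ≠ y.val (n : ℤ) := by
    by_contra hcon
    push Not at hcon
    exact hxy (ext_nat hcon)
  refine ⟨_, ⟨_, ⟨_, StarAlgebra.subset_adjoin ℂ (gens N) ⟨n, rfl⟩, rfl⟩, rfl⟩, ?_⟩
  intro hh
  exact hn (Circle.ext hh)

lemma inter_trig {ν₁ ν₂ : Measure (Solenoid N)} (L : Lp ℂ 2 ν₁ →L[ℂ] Lp ℂ 2 ν₂)
    (hL : ∀ n : ℕ, Inter L (fun z => ((z.val (n : ℤ) : Circle) : ℂ)))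
    (f : Solenoid N →ᵇ ℂ) (hf : f ∈ trig N) : Inter L f := by
  have hf' : f ∈ Algebra.adjoin ℂ (gens N ∪ star (gens N)) := hf
  clear hf
  induction hf' using Algebra.adjoin_induction with
  | mem f hf =>
    rcases hf with ⟨n, rfl⟩ | hf
    · exact hL n
    · obtain ⟨n, hn⟩ := hf
      have hfe : ∀ z : Solenoid N, f z = star ((z.val (n : ℤ) : Circle) : ℂ) := by
        intro z
        have := congrArg (fun g : Solenoid N →ᵇ ℂ => star (g z)) hn
        simpa using this.symm
      have hone : ∀ z : Solenoid N, ((z.val (n : ℤ) : Circle) : ℂ) * f z = 1 := by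
        intro z
        rw [hfe]
        have := Complex.mul_conj ((z.val (n : ℤ) : Circle) : ℂ)
        simpa [Circle.normSq_coe] using this
      intro ξ η he
      have e1 := hL n η ξ (by
        filter_upwards [he] with z hz
        rw [hz, ← mul_assoc, hone, one_mul])
      filter_upwards [e1] with z hz
      rw [hz, ← mul_assoc, mul_comm (f z), hone, one_mul]
  | algebraMap r =>
    intro ξ η he
    have : η = r • ξ := by
      apply Lp.ext
      filter_upwards [he, Lp.coeFn_smul r ξ] with z h1 h2
      rw [h1, h2]; simp [BoundedContinuousFunction.algebraMap_apply]
    rw [this, map_smul]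
    filter_upwards [Lp.coeFn_smul r (L ξ)] with z h2
    rw [h2]; simp [BoundedContinuousFunction.algebraMap_apply]
  | add f g hf hg ihf ihg =>
    intro ξ η he
    obtain ⟨ζ₁, h₁⟩ := exists_mul f f.continuous ξ
    obtain ⟨ζ₂, h₂⟩ := exists_mul g g.continuous ξ
    have : η = ζ₁ + ζ₂ := by
      apply Lp.ext
      filter_upwards [he, Lp.coeFn_add ζ₁ ζ₂, h₁, h₂] with z a b c d
      rw [a, b]; simp [c, d, add_mul]
    rw [this, map_add]
    filter_upwards [Lp.coeFn_add (L ζ₁) (L ζ₂), ihf ξ ζ₁ h₁, ihg ξ ζ₂ h₂] with z a b c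
    rw [a]; simp [b, c, add_mul]
  | mul f g hf hg ihf ihg =>
    intro ξ η he
    obtain ⟨ζ, h⟩ := exists_mul g g.continuous ξ
    have e1 := ihf ζ η (by
      filter_upwards [he, h] with z a b
      rw [a, b]; simp [mul_assoc])
    filter_upwards [e1, ihg ξ ζ h] with z a b
    rw [a, b]; simp [mul_assoc]

end sol
end Stmt12

namespace Stmt12
open MeasureTheory Filter ProbabilityTheory
open scoped ENNReal Topology BoundedContinuousFunction

section ops
variable {N : ℕ}

lemma trig_dense (ν : Measure (Solenoid N)) [IsFiniteMeasure ν] :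
    Dense {ξ : Lp ℂ 2 ν | ∃ f ∈ trig N, (ξ : Solenoid N → ℂ) =ᵐ[ν] f} := by
  have h1 : Dense (((trig N).map (BoundedContinuousFunction.toContinuousMapStarₐ ℂ) :
      StarSubalgebra ℂ C(Solenoid N, ℂ)) : Set C(Solenoid N, ℂ)) := by
    have := ContinuousMap.starSubalgebra_topologicalClosure_eq_top_of_separatesPoints _ (trig_sep N)
    rw [dense_iff_closure_eq, ← StarSubalgebra.topologicalClosure_coe, this]
    rfl
  have h2 := (ContinuousMap.toLp_denseRange (p := 2) (μ := ν) ℂ (by norm_num) (𝕜 := ℂ)).dense_image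
    (ContinuousLinearMap.continuous _) h1
  refine h2.mono ?_
  rintro _ ⟨_, ⟨f, hf, rfl⟩, rfl⟩
  refine ⟨f, hf, ?_⟩
  exact ContinuousMap.coeFn_toLp (p := 2) (𝕜 := ℂ) ν _

lemma subseq_ae {X : Type*} [MeasurableSpace X] {ν : Measure X} {x : ℕ → Lp ℂ 2 ν} {ξ : Lp ℂ 2 ν}
    (h : Tendsto x atTop (𝓝 ξ)) :
    ∃ φ : ℕ → ℕ, StrictMono φ ∧ ∀ᵐ z ∂ν, Tendsto (fun n => (x (φ n) : X → ℂ) z) atTop (𝓝 (ξ z)) :=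
  (tendstoInMeasure_of_tendsto_Lp h).exists_seq_tendsto_ae

lemma comm_mul {ν : Measure (Solenoid N)} [IsFiniteMeasure ν] (L : Lp ℂ 2 ν →L[ℂ] Lp ℂ 2 ν)
    (hL : ∀ f ∈ trig N, Inter L f) :
    ∃ G : Lp ℂ 2 ν, ∀ ξ : Lp ℂ 2 ν, (L ξ : Solenoid N → ℂ) =ᵐ[ν] fun z => G z * ξ z := by
  refine ⟨L (Lp.const 2 ν (1 : ℂ)), fun ξ => ?_⟩
  set G := L (Lp.const 2 ν (1 : ℂ))
  obtain ⟨x, hx, hlim⟩ := mem_closure_iff_seq_limit.1 (trig_dense ν ξ)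
  obtain ⟨φ, hφ, h1⟩ := subseq_ae hlim
  have h2 : Tendsto (fun n => L (x (φ n))) atTop (𝓝 (L ξ)) :=
    ((L.continuous.tendsto ξ).comp hlim).comp hφ.tendsto_atTop
  obtain ⟨ψ, hψ, h3⟩ := subseq_ae h2
  have h4 : ∀ n, (L (x n) : Solenoid N → ℂ) =ᵐ[ν] fun z => G z * x n z := by
    intro n
    obtain ⟨f, hf, he⟩ := hx n
    have := hL f hf (Lp.const 2 ν (1 : ℂ)) (x n) (by
      filter_upwards [he, Lp.coeFn_const (p := 2) (μ := ν) (c := (1 : ℂ))] with z a b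
      rw [a, b]; simp)
    filter_upwards [this, he] with z a b
    rw [a, b, mul_comm]
  filter_upwards [h1, h3, ae_all_iff.2 h4] with z a b c
  have a' := (a.comp hψ.tendsto_atTop).const_mul (G z)
  refine tendsto_nhds_unique b (a'.congr fun n => ?_)
  exact (c _).symm

lemma mul_bdd {X : Type*} [MeasurableSpace X] {ν : Measure X} [IsFiniteMeasure ν]
    (L : Lp ℂ 2 ν →L[ℂ] Lp ℂ 2 ν)
    (G : Lp ℂ 2 ν) (hG : ∀ ξ : Lp ℂ 2 ν, (L ξ : X → ℂ) =ᵐ[ν] fun z => G z * ξ z) :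
    ∀ᵐ z ∂ν, ‖G z‖ ≤ ‖L‖ := by
  have key : (fun z => ‖G z‖ₑ ^ 2) ≤ᵐ[ν] fun _ => ‖L‖ₑ ^ 2 := by
    refine ae_le_of_forall_setLIntegral_le_of_sigmaFinite₀
      ((Lp.aestronglyMeasurable G).enorm.pow_const 2) ?_
    intro s hs _
    rw [setLIntegral_const]
    let ξ : Lp ℂ 2 ν := indicatorConstLp 2 hs (measure_ne_top ν s) (1 : ℂ)
    have h1 : ‖L ξ‖ₑ ≤ ‖L‖ₑ * ‖ξ‖ₑ := L.le_opENorm ξ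
    have h2 : ∀ η : Lp ℂ 2 ν, ‖η‖ₑ ^ 2 = ∫⁻ z, ‖η z‖ₑ ^ 2 ∂ν := by
      intro η
      have := eLpNorm_nnreal_pow_eq_lintegral (μ := ν) (f := (η : X → ℂ)) (p := 2) (by norm_num)
      rw [Lp.enorm_def]
      simpa using this
    have h3 : ‖ξ‖ₑ ^ 2 = ν s := by
      rw [h2]
      have : (fun z => ‖ξ z‖ₑ ^ 2) =ᵐ[ν] s.indicator 1 := by
        filter_upwards [indicatorConstLp_coeFn (p := 2) (hs := hs) (hμs := measure_ne_top ν s) (c := (1 : ℂ))] with z hz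
        change ‖(indicatorConstLp 2 hs (measure_ne_top ν s) (1 : ℂ) : Lp ℂ 2 ν) z‖ₑ ^ 2 = _
        rw [hz]
        by_cases hzs : z ∈ s <;> simp [hzs]
      rw [lintegral_congr_ae this, lintegral_indicator_one hs]
    have h4 : ‖L ξ‖ₑ ^ 2 = ∫⁻ z in s, ‖G z‖ₑ ^ 2 ∂ν := by
      rw [h2, ← lintegral_indicator hs]
      apply lintegral_congr_ae
      filter_upwards [hG ξ, indicatorConstLp_coeFn (p := 2) (hs := hs) (hμs := measure_ne_top ν s) (c := (1 : ℂ))] with z h hz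
      rw [h]
      change ‖G z * (indicatorConstLp 2 hs (measure_ne_top ν s) (1 : ℂ) : Lp ℂ 2 ν) z‖ₑ ^ 2 = _
      rw [hz]
      by_cases hzs : z ∈ s <;> simp [hzs]
    rw [← h4, ← h3, ← mul_pow]
    exact pow_le_pow_left₀ zero_le h1 2
  filter_upwards [key] with z hz
  have := (ENNReal.pow_le_pow_left_iff (n := 2) (by norm_num)).1 hz
  rwa [enorm_le_iff_norm_le] at this

/-- The commutant consists of multiplications by bounded functions of `p`. -/
lemma comm_iff {m₀ : Circle → ℂ} (hm₀ : Measurable m₀) {m : Measure (Solenoid N)} [IsFiniteMeasure m]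
    (h : RN (shiftE N) (dd m₀) m) (hp : ∀ᵐ z ∂m, m₀ (z.val 0) ≠ 0)
    {U T : unitary (Lp ℂ 2 m →L[ℂ] Lp ℂ 2 m)} (hUT : IsWaveletRepOn N m₀ m U T)
    {A : Type*} [MeasurableSpace A] {p : Solenoid N → A}
    (hpS : p ∘ shiftE N = p)
    (hfac : ∀ w : Solenoid N → ℝ, MemLp w 2 m → w ∘ shiftE N =ᵐ[m] w →
      ∃ g : A → ℝ, Measurable g ∧ w =ᵐ[m] g ∘ p)
    (Op : Lp ℂ 2 m →L[ℂ] Lp ℂ 2 m) :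
    (Commute Op (U : Lp ℂ 2 m →L[ℂ] Lp ℂ 2 m) ∧ Commute Op (T : Lp ℂ 2 m →L[ℂ] Lp ℂ 2 m)) ↔
    ∃ g : A → ℂ, Measurable g ∧ (∃ C : ℝ, ∀ a, ‖g a‖ ≤ C) ∧
      ∀ ξ : Lp ℂ 2 m, (Op ξ : Solenoid N → ℂ) =ᵐ[m] fun z => g (p z) * ξ z := by
  constructor
  · rintro ⟨hU, hT⟩
    have hU' : ∀ ξ, Op ((U : Lp ℂ 2 m →L[ℂ] Lp ℂ 2 m) ξ) =
        (U : Lp ℂ 2 m →L[ℂ] Lp ℂ 2 m) (Op ξ) := fun ξ => congrArg (fun L => L ξ) hU.eq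
    have hT' : ∀ ξ, Op ((T : Lp ℂ 2 m →L[ℂ] Lp ℂ 2 m) ξ) =
        (T : Lp ℂ 2 m →L[ℂ] Lp ℂ 2 m) (Op ξ) := fun ξ => congrArg (fun L => L ξ) hT.eq
    have hI := inter_coord hm₀ h h hUT hUT Op hU' hT'
    obtain ⟨G, hG⟩ := comm_mul Op (inter_trig Op hI)
    have hbd := mul_bdd Op G hG
    have hinv : (fun z => G (shift N z)) =ᵐ[m] fun z => G z := by
      have e1 := hG ((U : Lp ℂ 2 m →L[ℂ] Lp ℂ 2 m) (Lp.const 2 m (1 : ℂ)))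
      rw [hU'] at e1
      have e2 := hUT.1 (Op (Lp.const 2 m (1 : ℂ)))
      have e3 := mul_shift_congr hm₀ h (hG (Lp.const 2 m (1 : ℂ)))
      have e4 := hUT.1 (Lp.const 2 m (1 : ℂ))
      have e5 := mul_shift_congr hm₀ h (Lp.coeFn_const (p := 2) (μ := m) (c := (1 : ℂ)))
      have e6 := mul_shift_congr hm₀ h
        ((Lp.coeFn_const (p := 2) (μ := m) (c := (1 : ℂ))).mono (fun z hz =>
          show G z * (Lp.const 2 m (1 : ℂ) : Lp ℂ 2 m) z = G z by rw [hz]; simp))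
      filter_upwards [e1, e2, e3, e4, e5, e6, hp] with z h1 h2 h3 h4 h5 h6 h7
      rw [h2, h3, h6, h4, h5] at h1
      simp only [Function.const_apply, mul_one] at h1
      have : m₀ (z.val 0) * G (shift N z) = m₀ (z.val 0) * G z := by rw [h1, mul_comm]
      exact mul_left_cancel₀ h7 this
    have hGm := Lp.memLp G
    obtain ⟨g1, hg1, hg1'⟩ := hfac (fun z => (G z).re) hGm.re (by
      filter_upwards [hinv] with z hz
      simp only [Function.comp, shiftE_apply]
      rw [hz])
    obtain ⟨g2, hg2, hg2'⟩ := hfac (fun z => (G z).im) hGm.im (by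
      filter_upwards [hinv] with z hz
      simp only [Function.comp, shiftE_apply]
      rw [hz])
    let g0 : A → ℂ := fun a => (g1 a : ℂ) + (g2 a : ℂ) * Complex.I
    have hg0 : Measurable g0 := by fun_prop
    classical
    refine ⟨fun a => if ‖g0 a‖ ≤ ‖Op‖ then g0 a else 0,
      Measurable.ite (measurableSet_le hg0.norm measurable_const) hg0 measurable_const,
      ⟨‖Op‖, fun a => ?_⟩, fun ξ => ?_⟩
    · dsimp only
      split_ifs with hh
      · exact hh
      · simp
    · filter_upwards [hG ξ, hg1', hg2', hbd] with z a b c d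
      have e : g0 (p z) = G z := by
        simp only [Function.comp] at b c
        simp only [g0]
        rw [← b, ← c]
        exact Complex.re_add_im (G z)
      simp only [e]
      rw [if_pos d, a]
  · rintro ⟨g, hg, -, hgξ⟩
    have hpS' : ∀ z, p (shift N z) = p z := fun z => congrFun hpS z
    constructor
    · apply ContinuousLinearMap.ext
      intro ξ
      change Op ((U : Lp ℂ 2 m →L[ℂ] Lp ℂ 2 m) ξ) = (U : Lp ℂ 2 m →L[ℂ] Lp ℂ 2 m) (Op ξ)
      apply Lp.ext
      filter_upwards [hgξ ((U : Lp ℂ 2 m →L[ℂ] Lp ℂ 2 m) ξ), hUT.1 ξ, hUT.1 (Op ξ),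
        mul_shift_congr hm₀ h (hgξ ξ)] with z a b c d
      rw [a, b, c, d, hpS']
      ring
    · apply ContinuousLinearMap.ext
      intro ξ
      change Op ((T : Lp ℂ 2 m →L[ℂ] Lp ℂ 2 m) ξ) = (T : Lp ℂ 2 m →L[ℂ] Lp ℂ 2 m) (Op ξ)
      apply Lp.ext
      filter_upwards [hgξ ((T : Lp ℂ 2 m →L[ℂ] Lp ℂ 2 m) ξ), hUT.2 ξ, hUT.2 (Op ξ), hgξ ξ]
        with z a b c d
      rw [a, b, c, d]
      ring

end ops
end Stmt12

namespace Stmt12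
open MeasureTheory Filter ProbabilityTheory
open scoped ENNReal Topology BoundedContinuousFunction

section uniq

lemma eq_of_density {X : Type*} [MeasurableSpace X] {S : X ≃ᵐ X} {d : X → ℝ} (hd : Measurable d)
    {κ ν : Measure X} [IsProbabilityMeasure κ] [IsProbabilityMeasure ν]
    (hκ : RN S d κ) (hν : RN S d ν) (hp : ∀ᵐ x ∂κ, 0 < d x)
    (herg : ∀ E, MeasurableSet E → S ⁻¹' E = E → κ E = 0 ∨ κ Eᶜ = 0)
    {r : X → ℝ≥0∞} (hr : Measurable r) (hνr : ν = κ.withDensity r) : ν = κ := by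
  have hdm := hd.ennreal_ofReal
  have e1 : κ.withDensity (fun x => ENNReal.ofReal (d x) * r (S x)) =
      κ.withDensity (fun x => ENNReal.ofReal (d x) * r x) := by
    have e2 : κ.withDensity (fun x => ENNReal.ofReal (d x) * r x) =
        ν.withDensity (fun x => ENNReal.ofReal (d x)) := by
      rw [hνr, ← withDensity_mul κ hr hdm]
      congr 1
      funext x
      exact mul_comm _ _
    rw [e2, ← hν, hνr]
    ext E hE
    rw [Measure.map_apply S.symm.measurable hE, withDensity_apply _ hE,
      withDensity_apply _ (S.symm.measurable hE), ← lintegral_indicator hE,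
      ← lintegral_indicator (S.symm.measurable hE),
      ← cov_lint hd hκ (hr.indicator (S.symm.measurable hE))]
    apply lintegral_congr
    intro x
    by_cases hx : x ∈ E
    · simp [hx]
    · simp [hx]
  have e3 := (withDensity_eq_iff_of_sigmaFinite (hdm.mul (hr.comp S.measurable)).aemeasurable
    (hdm.mul hr).aemeasurable).1 e1
  have e4 : r ∘ S =ᵐ[κ] r := by
    filter_upwards [e3, hp] with x hx hpx
    exact (ENNReal.mul_right_inj (by simpa using hpx) ENNReal.ofReal_ne_top).1 hx
  have hq : QuasiErgodic S κ := 
    { toQuasiMeasurePreserving := qmp hd hκ hp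
      aeconst_set := by
        intro s hs hss
        rw [eventuallyConst_set']
        rcases herg s hs hss with h | h
        · left; exact ae_eq_empty.2 h
        · right; exact ae_eq_univ.2 h }
  obtain ⟨c, hc⟩ := hq.ae_eq_const_of_ae_eq_comp₀ hr.nullMeasurable e4
  rw [withDensity_congr_ae hc] at hνr
  have hc1 : c = 1 := by
    have := congrArg (fun M : Measure X => M Set.univ) hνr
    rw [withDensity_apply _ MeasurableSet.univ, measure_univ] at this
    simpa using this.symm
  rw [hνr, hc1]
  exact withDensity_one

variable {N : ℕ}

lemma unique_aux {m₀ : Circle → ℂ} (hm₀ : Measurable m₀)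
    {κ ν : Measure (Solenoid N)} [IsProbabilityMeasure κ] [IsProbabilityMeasure ν]
    (hκ : RN (shiftE N) (dd m₀) κ) (hν : RN (shiftE N) (dd m₀) ν) (hp : ∀ᵐ x ∂κ, 0 < dd m₀ x)
    (herg : ShiftErgodic N κ)
    {U₁ T₁ : unitary (Lp ℂ 2 ν →L[ℂ] Lp ℂ 2 ν)} {U₂ T₂ : unitary (Lp ℂ 2 κ →L[ℂ] Lp ℂ 2 κ)}
    (hUT₁ : IsWaveletRepOn N m₀ ν U₁ T₁) (hUT₂ : IsWaveletRepOn N m₀ κ U₂ T₂)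
    (W : Lp ℂ 2 ν ≃ₗᵢ[ℂ] Lp ℂ 2 κ)
    (hLU : ∀ ξ, W ((U₁ : Lp ℂ 2 ν →L[ℂ] Lp ℂ 2 ν) ξ) = (U₂ : Lp ℂ 2 κ →L[ℂ] Lp ℂ 2 κ) (W ξ))
    (hLT : ∀ ξ, W ((T₁ : Lp ℂ 2 ν →L[ℂ] Lp ℂ 2 ν) ξ) = (T₂ : Lp ℂ 2 κ →L[ℂ] Lp ℂ 2 κ) (W ξ)) :
    ν = κ := by
  let L : Lp ℂ 2 ν →L[ℂ] Lp ℂ 2 κ := (W.toContinuousLinearEquiv : Lp ℂ 2 ν →L[ℂ] Lp ℂ 2 κ)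
  have hL : ∀ ξ, L ξ = W ξ := fun ξ => rfl
  have hI := inter_trig L (inter_coord hm₀ hν hκ hUT₁ hUT₂ L hLU hLT)
  let φ : Lp ℂ 2 κ := W (Lp.const 2 ν (1 : ℂ))
  have hφm : Measurable fun z => ‖φ z‖ₑ ^ 2 := (Lp.stronglyMeasurable φ).enorm.pow_const 2
  have hfin : ∫⁻ z, ‖φ z‖ₑ ^ 2 ∂κ < ∞ := by
    have := eLpNorm_nnreal_pow_eq_lintegral (μ := κ) (f := (φ : Solenoid N → ℂ)) (p := 2) (by norm_num)
    have h2 := ENNReal.pow_lt_top (n := 2) (Lp.memLp φ).2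
    simp at this
    rwa [this] at h2
  have : IsFiniteMeasure (κ.withDensity fun z => ‖φ z‖ₑ ^ 2) := isFiniteMeasure_withDensity hfin.ne
  refine eq_of_density (dd_meas hm₀) hκ hν hp herg hφm ?_
  refine ext_of_forall_mem_subalgebra_integral_eq_of_polish (𝕜 := ℂ) (trig_sep N) ?_
  intro f hf
  obtain ⟨η, hη⟩ := exists_mul f f.continuous (Lp.const 2 ν (1 : ℂ))
  have h1 := hI f hf _ _ hη
  have h2 : inner ℂ (L (Lp.const 2 ν (1 : ℂ))) (L η) = inner ℂ (Lp.const 2 ν (1 : ℂ) : Lp ℂ 2 ν) η :=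
    W.inner_map_map _ _
  rw [L2.inner_def, L2.inner_def] at h2
  have h3 : ∫ z, f z ∂ν = ∫ z, inner ℂ ((Lp.const 2 ν (1 : ℂ) : Lp ℂ 2 ν) z) (η z) ∂ν := by
    apply integral_congr_ae
    filter_upwards [hη, Lp.coeFn_const (p := 2) (μ := ν) (c := (1 : ℂ))] with z a b
    rw [a, b]; simp
  rw [h3, ← h2, integral_withDensity_eq_integral_toReal_smul hφm
    (ae_of_all _ fun z => ENNReal.pow_lt_top enorm_lt_top)]
  apply integral_congr_ae
  filter_upwards [h1] with z a
  rw [a]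
  change inner ℂ (φ z) (f z * φ z) = _
  rw [RCLike.inner_apply, mul_assoc, RCLike.mul_conj]
  simp
  ring

end uniq
end Stmt12

namespace Stmt12
open MeasureTheory Filter ProbabilityTheory
open scoped ENNReal Topology BoundedContinuousFunction

section fin

lemma rn_ae {X : Type*} [MeasurableSpace X] [MeasurableSpace.CountablyGenerated X]
    {S : X ≃ᵐ X} {d : X → ℝ} (hd : Measurable d)
    (hdb : ∃ C, ∀ x, d x ≤ C)
    {m : Measure X} [IsProbabilityMeasure m] (h : RN S d m)
    {A : Type*} [MeasurableSpace A] {p : X → A} (hpm : Measurable p) (hpS : p ∘ S = p)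
    (κ : Kernel A X) [IsMarkovKernel κ]
    (hκ : (m.map p) ⊗ₘ κ = m.map (fun x => (p x, x))) :
    ∀ᵐ a ∂(m.map p), RN S d (κ a) := by
  have : IsProbabilityMeasure (m.map p) := Measure.isProbabilityMeasure_map hpm.aemeasurable
  have hdm := hd.ennreal_ofReal
  have hf : Measurable (Function.uncurry fun (_ : A) (x : X) => ENNReal.ofReal (d x)) :=
    hdm.comp measurable_snd
  let η : Kernel A X := κ.withDensity fun _ x => ENNReal.ofReal (d x)
  have : IsFiniteKernel η := by
    obtain ⟨C, hC⟩ := hdb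
    exact Kernel.isFiniteKernel_withDensity_of_bounded κ (B := ENNReal.ofReal C)
      ENNReal.ofReal_ne_top fun a b => ENNReal.ofReal_le_ofReal (hC b)
  have key : (m.map p) ⊗ₘ (κ.map S.symm) = (m.map p) ⊗ₘ η := by
    have hj : Measurable fun x => (p x, x) := hpm.prodMk measurable_id
    rw [Measure.compProd_map S.symm.measurable, hκ]
    ext E hE
    rw [Measure.compProd_apply hE]
    have e1 : ∀ a, η a (Prod.mk a ⁻¹' E) =
        ∫⁻ x, E.indicator 1 (a, x) * ENNReal.ofReal (d x) ∂κ a := by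
      intro a
      rw [Kernel.withDensity_apply' κ hf, ← lintegral_indicator (measurable_prodMk_left hE)]
      apply lintegral_congr
      intro x
      by_cases hx : (a, x) ∈ E <;> simp [hx]
    have hF : Measurable fun q : A × X => E.indicator (1 : A × X → ℝ≥0∞) q * ENNReal.ofReal (d q.2) :=
      (measurable_one.indicator hE).mul (hdm.comp measurable_snd)
    simp_rw [e1]
    rw [← Measure.lintegral_compProd hF, hκ, lintegral_map hF hj,
      Measure.map_map (measurable_id.prodMap S.symm.measurable) hj]
    have hk : Measurable (Prod.map id S.symm ∘ fun x => (p x, x)) :=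
      (measurable_id.prodMap S.symm.measurable).comp hj
    rw [← lintegral_indicator_one hE, lintegral_map (measurable_one.indicator hE) hk]
    have hcov := cov_lint hd h ((measurable_one (α := ℝ≥0∞)).indicator hE |>.comp hk)
    refine hcov.symm.trans ?_
    apply lintegral_congr
    intro x
    have hx : p (S x) = p x := congrFun hpS x
    simp [hx, mul_comm]
  have := Kernel.ae_eq_of_compProd_eq key
  filter_upwards [this] with a ha
  rw [Kernel.map_apply _ S.symm.measurable] at ha
  rw [RN, ha]
  exact Kernel.withDensity_apply κ hf a

/-- The unitary `ξ ↦ ξ ∘ snd`. -/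
lemma exists_psi {X A : Type*} [MeasurableSpace X] [MeasurableSpace A]
    {m : Measure X} {p : X → A} (hpm : Measurable p) {ρ : Measure (A × X)}
    (hρ : ρ = m.map (fun x => (p x, x))) (hgr : ∀ᵐ q ∂ρ, p q.2 = q.1) :
    ∃ Ψ : Lp ℂ 2 m ≃ₗᵢ[ℂ] Lp ℂ 2 ρ, ∀ ξ : Lp ℂ 2 m,
      (Ψ ξ : A × X → ℂ) =ᵐ[ρ] fun q => ξ q.2 := by
  have hj : Measurable fun x => (p x, x) := hpm.prodMk measurable_id
  have h1 : MeasurePreserving (Prod.snd : A × X → X) ρ m := by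
    refine ⟨measurable_snd, ?_⟩
    rw [hρ, Measure.map_map measurable_snd hj]
    exact Measure.map_id
  have h2 : MeasurePreserving (fun x => (p x, x)) m ρ := ⟨hj, hρ.symm⟩
  let F := Lp.compMeasurePreservingₗᵢ (E := ℂ) (p := 2) ℂ Prod.snd h1
  let K := Lp.compMeasurePreservingₗᵢ (E := ℂ) (p := 2) ℂ _ h2
  have hF : ∀ ξ : Lp ℂ 2 m, (F ξ : A × X → ℂ) =ᵐ[ρ] fun q => ξ q.2 :=
    fun ξ => Lp.coeFn_compMeasurePreserving ξ h1
  have hK : ∀ ξ : Lp ℂ 2 ρ, (K ξ : X → ℂ) =ᵐ[m] fun x => ξ (p x, x) :=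
    fun ξ => Lp.coeFn_compMeasurePreserving ξ h2
  have hsurj : Function.Surjective F := by
    intro ξ
    refine ⟨K ξ, ?_⟩
    apply Lp.ext
    filter_upwards [hF (K ξ), h1.quasiMeasurePreserving.ae_eq_comp (hK ξ), hgr] with q a b c
    rw [a]
    simp only [Function.comp] at b
    rw [b, c]
  exact ⟨LinearIsometryEquiv.ofSurjective F hsurj, hF⟩

end fin
end Stmt12

open MeasureTheory Real Complex Filter Finset in
/-- Theorem 3.6. Let `m₀ ∈ L^∞(𝕋)` be non-singular with
`R_{m₀}1 = 1` and let `(L²(m), U, T, φ)` be the associated wavelet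
representation of `BS(1,N)`.  Then there are a standard measure space
`(A, 𝓜, μ)`, a measurable field of ergodic quasi-invariant probability measures
`ν_a` on the solenoid with `d(ν_a∘S)/dν_a = |m₀|²` (each unique with these
properties and with `π_a ≅ π_{ν_a,θ}`, `θ = m₀/|m₀|`), and a unitary
`Ψ : L²(m) → ∫^⊕ 𝓗_a dμ(a)` intertwining the representation with the direct
integral of the irreducible fiber representations and carrying the commutant to
the diagonal operators; moreover `∫ f dm = ∫_A ∫ f dν_a dμ(a)`. -/
theorem statement_12 (N : ℕ) (hN : 2 ≤ N)
    (m₀ : Circle → ℂ) (hmeas : Measurable m₀) (hbdd : ∃ C : ℝ, ∀ z, ‖m₀ z‖ ≤ C)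
    (hns : circleMeasure {z | m₀ z = 0} = 0) (hqmf : QMF N m₀)
    (m : Measure (Solenoid N))
    (hm : IsAssociatedMeasure N (fun z => ‖m₀ z‖ ^ 2 / N) m)
    (U T : unitary (Lp ℂ 2 m →L[ℂ] Lp ℂ 2 m))
    (hUT : IsWaveletRepOn N m₀ m U T) :
    ∃ B : MeasurableBase, Nonempty (DirectIntegralDecomp N m₀ m U T B) := by
  classical
  have hN0 : (N : ℝ) ≠ 0 := by
    have : 0 < N := by omega
    exact_mod_cast this.ne'
  obtain ⟨hprob, hmarg, hrn0⟩ := hm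
  have hrn : Stmt12.RN (Stmt12.shiftE N) (Stmt12.dd m₀) m := by
    rw [← Stmt12.rn_iff, hrn0]
    congr 1
    funext z
    congr 1
    field_simp
  have hd := Stmt12.dd_meas (N := N) hmeas
  have hd0 : ∀ z : Solenoid N, 0 ≤ Stmt12.dd m₀ z := fun z => sq_nonneg _
  have hdb : ∃ C, ∀ z : Solenoid N, Stmt12.dd m₀ z ≤ C := by
    obtain ⟨C, hC⟩ := hbdd
    exact ⟨C ^ 2, fun z => pow_le_pow_left₀ (norm_nonneg _) (hC _) 2⟩
  have hne : ∀ᵐ z ∂m, m₀ (z.val 0) ≠ 0 := by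
    rw [← hmarg] at hns
    have hset : MeasurableSet {z | m₀ z = 0} := hmeas (measurableSet_singleton 0)
    rw [Measure.map_apply (Stmt12.coord_meas 0) hset] at hns
    rw [ae_iff]
    simpa using hns
  have hpos_iff : ∀ z : Solenoid N, m₀ (z.val 0) ≠ 0 → 0 < Stmt12.dd m₀ z := fun z hz =>
    pow_pos (norm_pos_iff.2 hz) 2
  have hpos : ∀ᵐ z ∂m, 0 < Stmt12.dd m₀ z := hne.mono hpos_iff
  obtain ⟨p, hpm, hpS, hfac⟩ := Stmt12.exists_factor (Stmt12.qmp hd hrn hpos)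
  have hpS' : ∀ z, p (shift N z) = p z := fun z => congrFun hpS z
  let κ := ProbabilityTheory.condDistrib id p m
  let μ : Measure (ℕ → ℝ) := m.map p
  have hμ : IsProbabilityMeasure μ := Measure.isProbabilityMeasure_map hpm.aemeasurable
  let ρ : Measure ((ℕ → ℝ) × Solenoid N) := m.map (fun x => (p x, x))
  have hj : Measurable fun x : Solenoid N => (p x, x) := hpm.prodMk measurable_id
  have hκ : Measure.compProd μ κ = ρ :=
    ProbabilityTheory.compProd_map_condDistrib (X := p) aemeasurable_id
  have hκrn := Stmt12.rn_ae hd hdb hrn hpm hpS κ hκ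
  have hκerg := Stmt12.ergodic_ae hd hd0 hdb hrn hpos hpm hfac κ hκ hκrn
  have hκpos : ∀ᵐ a ∂μ, ∀ᵐ z ∂κ a, 0 < Stmt12.dd m₀ z := by
    apply Measure.ae_ae_of_ae_compProd (p := fun q => 0 < Stmt12.dd m₀ q.2)
    rw [hκ]
    exact (ae_map_iff hj.aemeasurable
      (measurableSet_lt measurable_const (hd.comp measurable_snd))).2 hpos
  have hgr : ∀ᵐ q ∂ρ, p q.2 = q.1 :=
    (ae_map_iff hj.aemeasurable
      (measurableSet_eq_fun (hpm.comp measurable_snd) measurable_fst)).2 (ae_of_all _ fun _ => rfl)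
  obtain ⟨Ψ, hΨ⟩ := Stmt12.exists_psi hpm (ρ := ρ) rfl hgr
  have hsnd : Measure.QuasiMeasurePreserving (Prod.snd : (ℕ → ℝ) × Solenoid N → Solenoid N) ρ m := by
    refine ⟨measurable_snd, ?_⟩
    change (m.map _).map _ ≪ m
    rw [Measure.map_map measurable_snd hj]
    change m.map id ≪ m
    rw [Measure.map_id]
  have hjq : Measure.QuasiMeasurePreserving (fun x : Solenoid N => (p x, x)) m ρ :=
    ⟨hj, Measure.AbsolutelyContinuous.rfl⟩
  -- pull back an a.e. statement along the graph map
  have hΨj : ∀ ξ : Lp ℂ 2 m, (fun x => (Ψ ξ : (ℕ → ℝ) × Solenoid N → ℂ) (p x, x)) =ᵐ[m] ξ :=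
    fun ξ => hjq.ae_eq_comp (hΨ ξ)
  have hΨS : ∀ ξ : Lp ℂ 2 m, ∀ᵐ q ∂ρ,
      (Ψ ξ : (ℕ → ℝ) × Solenoid N → ℂ) (q.1, shift N q.2) = ξ (shift N q.2) := by
    intro ξ
    have h1 := (Stmt12.qmp hd hrn hpos).ae_eq_comp (hΨj ξ)
    filter_upwards [hsnd.ae_eq_comp h1, hgr] with q a b
    simp only [Function.comp, Stmt12.shiftE_apply, hpS', b] at a
    exact a
  refine ⟨⟨ℕ → ℝ⟩, ⟨{
    μ := μ
    sf := inferInstance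
    κ := κ
    ρm := ρ
    κ_meas := fun E hE => κ.measurable_coe hE
    κ_prob := ae_of_all _ fun a => inferInstance
    κ_rn := hκrn
    κ_qi := by
      filter_upwards [hκrn, hκpos] with a h1 h2
      exact ⟨(Stmt12.qmp_symm h1).absolutelyContinuous, Stmt12.ac_of_pos hd h1 h2⟩
    κ_erg := hκerg
    κ_unique := by
      filter_upwards [hκrn, hκpos, hκerg] with a h1 h2 h3
      rintro ν hν h4 - ⟨Uv, Tv, Ua, Ta, h5, h6, W, h7, h8⟩
      exact Stmt12.unique_aux hmeas h1 h4 h2 h3 h5 h6 W h7 h8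
    κ_mix := by
      intro E hE
      have := Measure.compProd_apply_prod (μ := μ) (κ := κ) MeasurableSet.univ hE
      rw [hκ, Measure.restrict_univ] at this
      rw [← this]
      change m E = (m.map _) _
      rw [Measure.map_apply hj (MeasurableSet.univ.prod hE)]
      congr 1
      ext x
      simp
    ρ_prod := by
      intro E F hE hF
      rw [← hκ]
      exact Measure.compProd_apply_prod hE hF
    Ψ := Ψ
    interU := by
      intro ξ
      filter_upwards [hΨ ((U : Lp ℂ 2 m →L[ℂ] Lp ℂ 2 m) ξ), hsnd.ae_eq_comp (hUT.1 ξ), hΨS ξ]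
        with q a b c
      simp only [Function.comp] at b
      rw [a, b, c]
    interT := by
      intro ξ
      filter_upwards [hΨ ((T : Lp ℂ 2 m →L[ℂ] Lp ℂ 2 m) ξ), hsnd.ae_eq_comp (hUT.2 ξ), hΨ ξ]
        with q a b c
      simp only [Function.comp] at b
      rw [a, b, c]
    diag := by
      intro Op
      rw [Stmt12.comm_iff hmeas hrn hne hUT hpS hfac Op]
      constructor
      · rintro ⟨g, hg, hC, h⟩
        refine ⟨g, hg, hC, fun ξ => ?_⟩
        filter_upwards [hΨ (Op ξ), hΨ ξ, hsnd.ae_eq_comp (h ξ), hgr] with q a b c e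
        simp only [Function.comp] at c
        rw [a, b, c, e]
      · rintro ⟨g, hg, hC, h⟩
        refine ⟨g, hg, hC, fun ξ => ?_⟩
        filter_upwards [hΨj (Op ξ), hΨj ξ, hjq.ae_eq_comp (h ξ)] with x a b c
        simp only [Function.comp] at c
        rw [← a, ← b, c] }⟩⟩

end
end

section
/- Let C = {z₀, …, z_{p−1}} ⊂ 𝕋 be a cycle of length p for z ↦ zᴺ, and let E = (−N^p, −1] ∪ [1, N^p). Then the map Ψ : L²(ℝ)^p → L²(E, ℓ²(ℤ)) defined by Ψ(f)(x, m) = N^{−m/2} f(N^{−m}x, (−m) mod p) is a unitary isomorphism that intertwines the representation 𝔯_C (in its Fourier-transformed form) with the direct integral ∫_E^⊕ π_{z_C·î(x)} dx; that is, 𝔯_C is unitarily equivalent to the direct integral over x ∈ E of the irreducible representations π_{z_C·î(x)} on ℓ²(ℤ) given by (Uξ)(k) = ξ(k−1) and (Tξ)(k) = z_{(−k) mod p}·e^{−2πi N^{−k} x}·ξ(k). -/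
noncomputable section

open MeasureTheory Real Complex Filter Finset

/-- `(m mod p)` as an element of `Fin p`. -/
def modFin (p : ℕ) [NeZero p] (m : ℤ) : Fin p :=
  ⟨(m % (p : ℤ)).toNat, by
    have hp : 0 < p := Nat.pos_of_ne_zero (NeZero.ne p)
    have h1 : 0 ≤ m % (p : ℤ) := Int.emod_nonneg m (by exact_mod_cast hp.ne')
    have h2 : m % (p : ℤ) < (p : ℤ) := Int.emod_lt_of_pos m (by exact_mod_cast hp)
    omega⟩

/-- The measure (Lebesgue × counting) on `ℝ × {0,…,p−1}`, so that
`L²` of it is `L²(ℝ)^p`. -/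
def prodMeas (p : ℕ) : Measure (ℝ × Fin p) :=
  (volume : Measure ℝ).prod (Measure.count : Measure (Fin p))

/-- The set `E = (−N^p, −1] ∪ [1, N^p)`. -/
def ESet (N p : ℕ) : Set ℝ :=
  Set.Ioc (-((N : ℝ) ^ p)) (-1) ∪ Set.Ico (1 : ℝ) ((N : ℝ) ^ p)

/-- `ℓ²(ℤ)`. -/
abbrev ellTwo : Type := lp (fun _ : ℤ => ℂ) 2

/-- The pair of unitaries giving (the Fourier-transformed form of) the
representation `𝔯_C` of `BS(1,N)` on `L²(ℝ)^p` attached to a cycle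
`C = {z_0, …, z_{p−1}}`:
`(Ûf)(x,i) = √N f(Nx, i+1)`, `(T̂f)(x,i) = z_i e^{−2πix} f(x,i)`. -/
def IsCycleRep (N p : ℕ) [NeZero p] (zc : Fin p → Circle)
    (U T : unitary (Lp ℂ 2 (prodMeas p) →L[ℂ] Lp ℂ 2 (prodMeas p))) : Prop :=
  (∀ f : Lp ℂ 2 (prodMeas p),
    (((U : Lp ℂ 2 (prodMeas p) →L[ℂ] Lp ℂ 2 (prodMeas p)) f : Lp ℂ 2 (prodMeas p))
        : ℝ × Fin p → ℂ) =ᵐ[prodMeas p]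
      fun q => (Real.sqrt N : ℂ) * (f : ℝ × Fin p → ℂ) (N * q.1, q.2 + 1)) ∧
  (∀ f : Lp ℂ 2 (prodMeas p),
    (((T : Lp ℂ 2 (prodMeas p) →L[ℂ] Lp ℂ 2 (prodMeas p)) f : Lp ℂ 2 (prodMeas p))
        : ℝ × Fin p → ℂ) =ᵐ[prodMeas p]
      fun q => ((zc q.2 : Circle) : ℂ) * ((ee q.1 : Circle) : ℂ) * (f : ℝ × Fin p → ℂ) q)


lemma ESet_iff (N p : ℕ) (x : ℝ) : x ∈ ESet N p ↔ 1 ≤ |x| ∧ |x| < (N : ℝ) ^ p := by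
  simp only [ESet, Set.mem_union, Set.mem_Ioc, Set.mem_Ico]
  rcases le_total 0 x with h | h
  · rw [abs_of_nonneg h]
    constructor
    · rintro (h1 | h1)
      · linarith [h1.2]
      · exact h1
    · intro h1; exact Or.inr h1
  · rw [abs_of_nonpos h]
    constructor
    · rintro (h1 | h1)
      · constructor <;> linarith [h1.1, h1.2]
      · linarith [h1.1]
    · intro h1; left; constructor <;> linarith [h1.1, h1.2]

lemma ESet_measurable (N p : ℕ) : MeasurableSet (ESet N p) :=
  measurableSet_Ioc.union measurableSet_Ico

lemma modFin_eq_iff (p : ℕ) [NeZero p] (m : ℤ) (i : Fin p) :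
    modFin p m = i ↔ m % (p : ℤ) = (i : ℕ) := by
  have hp : 0 < p := Nat.pos_of_ne_zero (NeZero.ne p)
  have h1 : 0 ≤ m % (p : ℤ) := Int.emod_nonneg m (by exact_mod_cast hp.ne')
  rw [Fin.ext_iff]
  simp only [modFin]
  omega

lemma scale_mem_iff (N : ℕ) (hN : 2 ≤ N) (p : ℕ) (y : ℝ) (hy : y ≠ 0) (k : ℤ) :
    (N : ℝ) ^ k * y ∈ ESet N p ↔ 0 ≤ Int.log N |y| + k ∧ Int.log N |y| + k < p := by
  have hN0 : (0 : ℝ) < N := by positivity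
  have hk : (0 : ℝ) < (N : ℝ) ^ k := by positivity
  have hy' : 0 < |y| := abs_pos.mpr hy
  rw [ESet_iff, abs_mul, abs_of_pos hk]
  have h1 : 1 ≤ (N : ℝ) ^ k * |y| ↔ (N : ℝ) ^ (-k) ≤ |y| := by
    rw [zpow_neg, inv_le_iff_one_le_mul₀' hk]
  have h2 : (N : ℝ) ^ k * |y| < (N : ℝ) ^ p ↔ |y| < (N : ℝ) ^ ((p : ℤ) - k) := by
    rw [zpow_sub₀ hN0.ne', lt_div_iff₀ hk, mul_comm, zpow_natCast]
  rw [h1, h2, Int.zpow_le_iff_le_log (by omega) hy', Int.lt_zpow_iff_log_lt (by omega) hy']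
  constructor <;> rintro ⟨a, b⟩ <;> constructor <;> linarith

/-- The level `k` of the point `(y,i)`. -/
def kk (N p : ℕ) (q : ℝ × Fin p) : ℤ :=
  -⌊Real.logb N |q.1|⌋ + (⌊Real.logb N |q.1|⌋ - ((q.2 : ℕ) : ℤ)) % (p : ℤ)

lemma kk_measurable (N p : ℕ) : Measurable (kk N p) := by
  have h1 : Measurable (fun q : ℝ × Fin p => ⌊Real.logb N |q.1|⌋) := by
    unfold Real.logb
    exact Int.measurable_floor.comp ((Real.measurable_log.comp (measurable_fst.abs)).div_const _)
  have h2 : Measurable (fun q : ℝ × Fin p => ((q.2 : ℕ) : ℤ)) :=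
    (measurable_of_countable (fun i : Fin p => ((i : ℕ) : ℤ))).comp measurable_snd
  have h3 := (measurable_of_countable (fun a : ℤ × ℤ => -a.1 + (a.1 - a.2) % (p : ℤ))).comp
    (h1.prodMk h2)
  exact h3

lemma kk_iff (N : ℕ) (hN : 2 ≤ N) (p : ℕ) [NeZero p] (y : ℝ) (hy : y ≠ 0) (i : Fin p) (k : ℤ) :
    ((N : ℝ) ^ k * y ∈ ESet N p ∧ modFin p (-k) = i) ↔ k = kk N p (y, i) := by
  have hp : 0 < p := Nat.pos_of_ne_zero (NeZero.ne p)
  rw [scale_mem_iff N hN p y hy, modFin_eq_iff]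
  simp only [kk]
  rw [Real.floor_logb_natCast (by positivity)]
  generalize Int.log N |y| = L
  have hi := i.isLt
  have hi0 : ((i : ℕ) : ℤ) % p = (i : ℕ) := Int.emod_eq_of_lt (by omega) (by omega)
  constructor
  · rintro ⟨⟨h1, h2⟩, h3⟩
    have : (L - ((i : ℕ) : ℤ)) % (p : ℤ) = (L + k) % p := by
      rw [← h3, Int.sub_emod, Int.emod_emod_of_dvd _ dvd_rfl, ← Int.sub_emod]; congr 1; ring
    rw [this, Int.emod_eq_of_lt h1 h2]; ring
  · rintro rfl
    have h1 : 0 ≤ (L - ((i : ℕ) : ℤ)) % (p : ℤ) := Int.emod_nonneg _ (by omega)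
    have h2 := Int.emod_lt_of_pos (L - ((i : ℕ) : ℤ)) (b := (p : ℤ)) (by omega)
    refine ⟨⟨by linarith, by linarith⟩, ?_⟩
    have : -(-L + (L - ((i : ℕ) : ℤ)) % (p : ℤ)) = L - (L - ((i : ℕ) : ℤ)) % (p : ℤ) := by ring
    rw [this, Int.sub_emod, Int.emod_emod_of_dvd _ dvd_rfl, ← Int.sub_emod, sub_sub_cancel, hi0]

/-- The point map `(x,k) ↦ (N^{-k} x, -k mod p)`. -/
def phi (N p : ℕ) [NeZero p] (k : ℤ) (x : ℝ) : ℝ × Fin p := ((N : ℝ) ^ (-k) * x, modFin p (-k))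

lemma phi_measurable (N p : ℕ) [NeZero p] (k : ℤ) : Measurable (phi N p k) := by
  unfold phi; fun_prop

lemma kk_phi (N : ℕ) (hN : 2 ≤ N) (p : ℕ) [NeZero p] (x : ℝ) (hx : x ∈ ESet N p) (k : ℤ) :
    kk N p (phi N p k x) = k := by
  have hN0 : (0 : ℝ) < N := by positivity
  have hx0 : x ≠ 0 := by
    rintro rfl
    rw [ESet_iff] at hx; norm_num at hx
  symm
  refine (kk_iff N hN p _ (by positivity) _ k).mp ⟨?_, rfl⟩
  rw [← mul_assoc, ← zpow_add₀ hN0.ne']; simpa using hx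

lemma core_point (N : ℕ) (hN : 2 ≤ N) (p : ℕ) [NeZero p] (h : Fin p → ENNReal) (y : ℝ) (hy : y ≠ 0) :
    ∑' k : ℤ, (ESet N p).indicator (fun _ => h (modFin p (-k))) ((N : ℝ) ^ k * y) = ∑ i, h i := by
  have h1 : ∀ i, h i = ∑' k : ℤ, if k = kk N p (y, i) then h i else 0 := by
    intro i; rw [tsum_ite_eq]
  rw [Finset.sum_congr rfl (fun i _ => h1 i), ← tsum_fintype (L := .unconditional _),
    ENNReal.tsum_comm]
  refine tsum_congr fun k => ?_
  rw [tsum_fintype]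
  by_cases hk : (N : ℝ) ^ k * y ∈ ESet N p
  · rw [Set.indicator_of_mem hk, Finset.sum_eq_single (modFin p (-k))]
    · rw [if_pos]; exact (kk_iff N hN p y hy _ k).mp ⟨hk, rfl⟩
    · intro i _ hi; rw [if_neg]; intro h2
      exact hi ((kk_iff N hN p y hy _ k).mpr h2).2.symm
    · simp
  · rw [Set.indicator_of_notMem hk]; symm
    refine Finset.sum_eq_zero fun i _ => ?_
    rw [if_neg]; intro h2
    exact hk ((kk_iff N hN p y hy _ k).mpr h2).1

lemma core_scale (N : ℕ) (hN : 2 ≤ N) (p : ℕ) (k : ℤ) (g : ℝ → ENNReal) (hg : Measurable g) :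
    ∫⁻ x in ESet N p, ENNReal.ofReal ((N : ℝ) ^ (-k)) * g ((N : ℝ) ^ (-k) * x) =
      ∫⁻ y, (ESet N p).indicator (fun _ => g y) ((N : ℝ) ^ k * y) := by
  have hN0 : (0 : ℝ) < N := by positivity
  have hk : (0 : ℝ) < (N : ℝ) ^ k := by positivity
  have hE := ESet_measurable N p
  rw [lintegral_const_mul _ (by fun_prop), ← lintegral_indicator hE]
  set G : ℝ → ENNReal := (ESet N p).indicator (fun x => g ((N : ℝ) ^ (-k) * x)) with hG
  have hGm : Measurable G := Measurable.indicator (by fun_prop) hE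
  have h1 : ∫⁻ y, G ((N : ℝ) ^ k * y) = ENNReal.ofReal ((N : ℝ) ^ (-k)) * ∫⁻ x, G x := by
    rw [← lintegral_map (f := G) hGm (measurable_const_mul _), Real.map_volume_mul_left hk.ne',
      lintegral_smul_measure, ← zpow_neg, abs_of_pos (by positivity), smul_eq_mul]
  rw [← h1]
  refine lintegral_congr fun y => ?_
  simp only [hG, Set.indicator]
  split_ifs
  · rw [← mul_assoc, ← zpow_add₀ hN0.ne']; simp
  · rfl

lemma core (N : ℕ) (hN : 2 ≤ N) (p : ℕ) [NeZero p] (g : ℝ × Fin p → ENNReal) (hg : Measurable g) :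
    ∫⁻ x in ESet N p, ∑' k : ℤ, ENNReal.ofReal ((N : ℝ) ^ (-k)) * g (phi N p k x) =
      ∫⁻ q, g q ∂(prodMeas p) := by
  rw [lintegral_tsum (f := fun (k : ℤ) x => ENNReal.ofReal ((N : ℝ) ^ (-k)) * g (phi N p k x))
    (fun k => ((hg.comp (phi_measurable N p k)).const_mul _).aemeasurable)]
  have h1 : ∀ k : ℤ, ∫⁻ x in ESet N p, ENNReal.ofReal ((N : ℝ) ^ (-k)) * g (phi N p k x) =
      ∫⁻ y, (ESet N p).indicator (fun _ => g (y, modFin p (-k))) ((N : ℝ) ^ k * y) := fun k =>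
    core_scale N hN p k (fun y => g (y, modFin p (-k))) (by fun_prop)
  simp_rw [h1]
  rw [← lintegral_tsum, prodMeas, lintegral_prod _ hg.aemeasurable]
  · refine lintegral_congr_ae ?_
    have : ∀ᵐ y : ℝ, y ≠ 0 := by simp [ae_iff]
    filter_upwards [this] with y hy
    rw [core_point N hN p (fun i => g (y, i)) y hy, lintegral_count, tsum_fintype]
  · intro k
    have : (fun y => (ESet N p).indicator (fun _ => g (y, modFin p (-k))) ((N : ℝ) ^ k * y)) =
      ((fun y => (N : ℝ) ^ k * y) ⁻¹' (ESet N p)).indicator (fun y => g (y, modFin p (-k))) := by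
      ext y; simp only [Set.indicator]; rfl
    rw [this]
    exact (Measurable.indicator (by fun_prop)
      ((measurable_const_mul _) (ESet_measurable N p))).aemeasurable

lemma null_pull (N : ℕ) (hN : 2 ≤ N) (p : ℕ) [NeZero p] (P : ℝ × Fin p → Prop)
    (h : ∀ᵐ q ∂(prodMeas p), P q) :
    ∀ᵐ x ∂((volume : Measure ℝ).restrict (ESet N p)), ∀ k : ℤ, P (phi N p k x) := by
  have hN0 : (0 : ℝ) < N := by positivity
  obtain ⟨s, hs, hsm, hs0⟩ := exists_measurable_superset_of_null (ae_iff.mp h)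
  have h1 := core N hN p (s.indicator 1) (measurable_one.indicator hsm)
  rw [lintegral_indicator_one hsm, hs0, lintegral_eq_zero_iff] at h1
  · filter_upwards [h1] with x hx k
    by_contra hc
    have h2 := ENNReal.tsum_eq_zero.mp hx k
    rw [Set.indicator_of_mem (hs hc)] at h2
    simp at h2
    have : (0 : ℝ) < (N : ℝ) ^ k := by positivity
    linarith
  · exact Measurable.tsum fun k => (((measurable_one.indicator hsm).comp
      (phi_measurable N p k)).const_mul _)

lemma ell_enorm_sq (ξ : ellTwo) : ‖ξ‖ₑ ^ 2 = ∑' k : ℤ, ‖ξ k‖ₑ ^ 2 := by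
  have h := lp.hasSum_norm (p := 2) (by norm_num) ξ
  have h2 : HasSum (fun k : ℤ => ‖ξ k‖ ^ 2) (‖ξ‖ ^ 2) := by
    simpa using h
  have h3 := h2.tsum_eq
  have e : ∀ {G : Type} [NormedAddCommGroup G] (a : G), ‖a‖ₑ ^ 2 = ENNReal.ofReal (‖a‖ ^ 2) := by
    intro G _ a
    rw [ENNReal.ofReal_pow (norm_nonneg _), ofReal_norm]
  rw [e, ← h3, ENNReal.ofReal_tsum_of_nonneg (fun k => by positivity) h2.summable]
  simp_rw [e]

lemma ell_mem (a : ℤ → ℂ) (h : ∑' k : ℤ, ‖a k‖ₑ ^ 2 ≠ ⊤) : Memℓp a 2 := by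
  rw [memℓp_gen_iff (by norm_num)]
  have := ENNReal.summable_toReal h
  simpa using this

open Classical in
/-- The element of `ℓ²(ℤ)` attached to a sequence (zero if not square summable). -/
def mkEll (a : ℤ → ℂ) : ellTwo := if h : Memℓp a 2 then ⟨a, h⟩ else 0

lemma mkEll_apply (a : ℤ → ℂ) (h : ∑' k : ℤ, ‖a k‖ₑ ^ 2 ≠ ⊤) (k : ℤ) : mkEll a k = a k := by
  unfold mkEll; rw [dif_pos (ell_mem a h)]

lemma ell_aesm {μ : Measure ℝ} (F : ℝ → ellTwo) (h : ∀ k, AEMeasurable (fun x => F x k) μ) :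
    AEStronglyMeasurable F μ := by
  refine aestronglyMeasurable_of_tendsto_ae (u := (atTop : Filter (Finset ℤ)))
    (f := fun s x => ∑ k ∈ s, lp.single 2 k (F x k)) ?_ ?_
  · intro s
    refine Finset.aestronglyMeasurable_fun_sum s fun k _ => ?_
    exact (lp.isometry_single (E := fun _ : ℤ => ℂ) (p := 2) k).continuous.comp_aestronglyMeasurable
      (h k).aestronglyMeasurable
  · exact Eventually.of_forall fun x => lp.hasSum_single ENNReal.ofNat_ne_top (F x)

lemma eLpNorm_two {α G : Type*} [MeasurableSpace α] [NormedAddCommGroup G] (μ : Measure α)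
    (f : α → G) : eLpNorm f 2 μ = (∫⁻ x, ‖f x‖ₑ ^ 2 ∂μ) ^ (1 / 2 : ℝ) := by
  rw [eLpNorm_eq_lintegral_rpow_enorm_toReal (by norm_num) (by norm_num)]
  simp

/-- The fibre `Ψ(f)(x, ·)`. -/
def Fv (N p : ℕ) [NeZero p] (f : ℝ × Fin p → ℂ) (x : ℝ) (k : ℤ) : ℂ :=
  (Real.sqrt ((N : ℝ) ^ (-k : ℤ)) : ℂ) * f (phi N p k x)

lemma Fv_enorm (N p : ℕ) [NeZero p] (f : ℝ × Fin p → ℂ) (x : ℝ) (k : ℤ) :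
    ‖Fv N p f x k‖ₑ ^ 2 = ENNReal.ofReal ((N : ℝ) ^ (-k)) * ‖f (phi N p k x)‖ₑ ^ 2 := by
  have h0 : (0 : ℝ) ≤ (N : ℝ) ^ (-k) := by positivity
  rw [Fv, enorm_mul, mul_pow]
  congr 1
  rw [← ofReal_norm, ← ENNReal.ofReal_pow (norm_nonneg _), Complex.norm_real, Real.norm_eq_abs,
    sq_abs, Real.sq_sqrt h0]

lemma Fv_lintegral (N : ℕ) (hN : 2 ≤ N) (p : ℕ) [NeZero p] (f : ℝ × Fin p → ℂ)
    (hf : Measurable f) :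
    ∫⁻ x in ESet N p, ∑' k : ℤ, ‖Fv N p f x k‖ₑ ^ 2 = ∫⁻ q, ‖f q‖ₑ ^ 2 ∂(prodMeas p) := by
  rw [← core N hN p (fun q => ‖f q‖ₑ ^ 2) (by fun_prop)]
  simp_rw [Fv_enorm]

lemma Fv_measurable (N p : ℕ) [NeZero p] (f : ℝ × Fin p → ℂ) (hf : Measurable f) (k : ℤ) :
    Measurable (fun x => Fv N p f x k) := by
  unfold Fv
  exact (hf.comp (phi_measurable N p k)).const_mul _

lemma lint_sq_lt {α G : Type*} [MeasurableSpace α] [NormedAddCommGroup G] {μ : Measure α}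
    {f : α → G} (hf : MemLp f 2 μ) : ∫⁻ x, ‖f x‖ₑ ^ 2 ∂μ ≠ ⊤ := by
  have := hf.2
  rw [eLpNorm_two] at this
  intro h
  rw [h] at this
  norm_num at this

lemma Fv_ae (N : ℕ) (hN : 2 ≤ N) (p : ℕ) [NeZero p] (f : ℝ × Fin p → ℂ)
    (hf : Measurable f) (hf2 : MemLp f 2 (prodMeas p)) :
    ∀ᵐ x ∂((volume : Measure ℝ).restrict (ESet N p)), ∀ k : ℤ,
      mkEll (Fv N p f x) k = Fv N p f x k := by
  have h1 := Fv_lintegral N hN p f hf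
  have h2 := ae_lt_top (f := fun x => ∑' k : ℤ, ‖Fv N p f x k‖ₑ ^ 2)
    (μ := (volume : Measure ℝ).restrict (ESet N p))
    (Measurable.tsum fun k => ((Fv_measurable N p f hf k).enorm.pow_const 2))
    (h1 ▸ lint_sq_lt hf2)
  filter_upwards [h2] with x hx k
  exact mkEll_apply _ hx.ne k

lemma psi_eLpNorm (N : ℕ) (hN : 2 ≤ N) (p : ℕ) [NeZero p] (f : ℝ × Fin p → ℂ)
    (hf : Measurable f) (hf2 : MemLp f 2 (prodMeas p)) :
    eLpNorm (fun x => mkEll (Fv N p f x)) 2 ((volume : Measure ℝ).restrict (ESet N p)) =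
      eLpNorm f 2 (prodMeas p) := by
  rw [eLpNorm_two, eLpNorm_two, ← Fv_lintegral N hN p f hf]
  congr 1
  refine lintegral_congr_ae ?_
  filter_upwards [Fv_ae N hN p f hf hf2] with x hx
  rw [ell_enorm_sq]
  simp_rw [hx]

lemma psi_memLp (N : ℕ) (hN : 2 ≤ N) (p : ℕ) [NeZero p] (f : ℝ × Fin p → ℂ)
    (hf : Measurable f) (hf2 : MemLp f 2 (prodMeas p)) :
    MemLp (fun x => mkEll (Fv N p f x)) 2 ((volume : Measure ℝ).restrict (ESet N p)) := by
  refine ⟨ell_aesm _ fun k => ?_, ?_⟩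
  · refine (Fv_measurable N p f hf k).aemeasurable.congr ?_
    filter_upwards [Fv_ae N hN p f hf hf2] with x hx
    exact (hx k).symm
  · rw [psi_eLpNorm N hN p f hf hf2]; exact hf2.2

/-- `Ψ` as a function. -/
def psi0 (N : ℕ) (hN : 2 ≤ N) (p : ℕ) [NeZero p] (f : Lp ℂ 2 (prodMeas p)) :
    Lp ellTwo 2 ((volume : Measure ℝ).restrict (ESet N p)) :=
  (psi_memLp N hN p f (Lp.stronglyMeasurable f).measurable (Lp.memLp f)).toLp _

lemma psi0_ae (N : ℕ) (hN : 2 ≤ N) (p : ℕ) [NeZero p] (f : Lp ℂ 2 (prodMeas p)) :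
    ∀ᵐ x ∂((volume : Measure ℝ).restrict (ESet N p)), ∀ k : ℤ,
      ((psi0 N hN p f : ℝ → ellTwo) x : ℤ → ℂ) k = Fv N p f x k := by
  filter_upwards [Fv_ae N hN p f (Lp.stronglyMeasurable f).measurable (Lp.memLp f),
    (psi_memLp N hN p f (Lp.stronglyMeasurable f).measurable (Lp.memLp f)).coeFn_toLp] with x h1 h2 k
  rw [← h1 k, psi0, h2]

/-- `Ψ` as a linear isometry. -/
def psiLI (N : ℕ) (hN : 2 ≤ N) (p : ℕ) [NeZero p] : Lp ℂ 2 (prodMeas p) →ₗᵢ[ℂ]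
    Lp ellTwo 2 ((volume : Measure ℝ).restrict (ESet N p)) where
  toFun := psi0 N hN p
  map_add' f g := by
    refine Lp.ext ?_
    filter_upwards [psi0_ae N hN p f, psi0_ae N hN p g, psi0_ae N hN p (f + g),
      null_pull N hN p _ (Lp.coeFn_add f g),
      Lp.coeFn_add (psi0 N hN p f) (psi0 N hN p g)] with x h1 h2 h3 h4 h5
    ext k
    rw [h5, Pi.add_apply, lp.coeFn_add, Pi.add_apply, h1, h2, h3]
    simp only [Fv, h4 k, Pi.add_apply]; ring
  map_smul' c f := by
    refine Lp.ext ?_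
    filter_upwards [psi0_ae N hN p f, psi0_ae N hN p (c • f),
      null_pull N hN p _ (Lp.coeFn_smul c f),
      Lp.coeFn_smul c (psi0 N hN p f)] with x h1 h3 h4 h5
    ext k
    rw [RingHom.id_apply, h5, Pi.smul_apply, lp.coeFn_smul, Pi.smul_apply, h1, h3]
    simp only [Fv, h4 k, Pi.smul_apply, smul_eq_mul]; ring
  norm_map' f := by
    change ‖psi0 N hN p f‖ = _
    rw [psi0, Lp.norm_toLp, psi_eLpNorm N hN p f (Lp.stronglyMeasurable f).measurable (Lp.memLp f),
      Lp.norm_def]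

lemma psi_surj (N : ℕ) (hN : 2 ≤ N) (p : ℕ) [NeZero p] :
    Function.Surjective (psiLI N hN p) := by
  intro G
  have hN0 : (0 : ℝ) < N := by positivity
  have hGm := Lp.stronglyMeasurable G
  have hGk : Measurable (fun a : ℝ × ℤ => ((G : ℝ → ellTwo) a.1 : ℤ → ℂ) a.2) := by
    refine measurable_from_prod_countable_left fun k => ?_
    have hc : Continuous (fun ξ : ellTwo => (ξ : ℤ → ℂ) k) :=
      (lp.evalCLM ℂ (fun _ : ℤ => ℂ) 2 k).continuous
    exact (hc.comp_stronglyMeasurable hGm).measurable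
  let f : ℝ × Fin p → ℂ := fun q => (Real.sqrt ((N : ℝ) ^ (kk N p q)) : ℂ) *
    ((G : ℝ → ellTwo) ((N : ℝ) ^ (kk N p q) * q.1) : ℤ → ℂ) (kk N p q)
  have hkm := kk_measurable N p
  have hpow : Measurable (fun q : ℝ × Fin p => (N : ℝ) ^ (kk N p q)) :=
    (measurable_of_countable (fun k : ℤ => (N : ℝ) ^ k)).comp hkm
  have hfm : Measurable f := by
    refine Measurable.mul (by fun_prop) ?_
    exact hGk.comp ((hpow.mul measurable_fst).prodMk hkm)
  have hF : ∀ x ∈ ESet N p, ∀ k, Fv N p f x k = ((G : ℝ → ellTwo) x : ℤ → ℂ) k := by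
    intro x hx k
    have h1 : (N : ℝ) ^ k * (phi N p k x).1 = x := by
      simp only [phi]
      rw [← mul_assoc, ← zpow_add₀ hN0.ne']; simp
    simp only [Fv, f, kk_phi N hN p x hx k, h1]
    rw [← mul_assoc, ← Complex.ofReal_mul, ← Real.sqrt_mul (by positivity),
      ← zpow_add₀ hN0.ne']
    simp
  have hf2 : MemLp f 2 (prodMeas p) := by
    refine ⟨hfm.aestronglyMeasurable, ?_⟩
    have : eLpNorm f 2 (prodMeas p) =
        eLpNorm G 2 ((volume : Measure ℝ).restrict (ESet N p)) := by
      rw [eLpNorm_two, eLpNorm_two, ← Fv_lintegral N hN p f hfm]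
      congr 1
      refine setLIntegral_congr_fun (ESet_measurable N p) fun x hx => ?_
      simp only [ell_enorm_sq, hF x hx]
    rw [this]; exact (Lp.memLp G).2
  refine ⟨hf2.toLp f, ?_⟩
  refine Lp.ext ?_
  filter_upwards [psi0_ae N hN p (hf2.toLp f), null_pull N hN p _ hf2.coeFn_toLp,
    ae_restrict_mem (ESet_measurable N p)] with x h1 h2 hx
  ext k
  refine (h1 k).trans ?_
  rw [← hF x hx k]
  simp only [Fv, h2 k]

lemma wsum (σ : ℤ ≃ ℤ) (w : ℤ → Circle) (ξ : ellTwo) :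
    ∑' k : ℤ, ‖(w k : ℂ) * ξ (σ k)‖ₑ ^ 2 = ‖ξ‖ₑ ^ 2 := by
  rw [ell_enorm_sq, ← σ.tsum_eq (fun k => ‖ξ k‖ₑ ^ 2)]
  refine tsum_congr fun k => ?_
  have h1 : ‖(w k : ℂ)‖ₑ = 1 := by
    rw [← ofReal_norm, Circle.norm_coe]; simp
  rw [enorm_mul, h1, one_mul]

/-- Weighted permutation of coordinates, as a function. -/
def wfun (σ : ℤ ≃ ℤ) (w : ℤ → Circle) (ξ : ellTwo) : ellTwo :=
  ⟨fun k => (w k : ℂ) * ξ (σ k), ell_mem _ (by rw [wsum]; simp)⟩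

/-- Weighted permutation of coordinates, as an isometry. -/
def wLI (σ : ℤ ≃ ℤ) (w : ℤ → Circle) : ellTwo →ₗᵢ[ℂ] ellTwo where
  toFun := wfun σ w
  map_add' a b := by
    ext k
    simp only [wfun, lp.coeFn_add, Pi.add_apply, mul_add]
  map_smul' c a := by
    ext k
    simp only [wfun, lp.coeFn_smul, Pi.smul_apply, smul_eq_mul, RingHom.id_apply]; ring
  norm_map' a := by
    have h : ‖wfun σ w a‖ₑ ^ 2 = ‖a‖ₑ ^ 2 := by
      rw [← wsum σ w a, ell_enorm_sq]; rfl
    have h2 := congrArg ENNReal.toReal h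
    rw [ENNReal.toReal_pow, ENNReal.toReal_pow, toReal_enorm, toReal_enorm] at h2
    exact (pow_left_inj₀ (norm_nonneg _) (norm_nonneg _) two_ne_zero).mp h2

lemma wLI_surj (σ : ℤ ≃ ℤ) (w : ℤ → Circle) : Function.Surjective (wLI σ w) := by
  intro b
  refine ⟨wfun σ.symm (fun k => (w (σ.symm k))⁻¹) b, ?_⟩
  ext k
  change (w k : ℂ) * (((w (σ.symm (σ k)))⁻¹ : Circle) * b (σ.symm (σ k))) = b k
  rw [Equiv.symm_apply_apply, ← mul_assoc, ← Circle.coe_mul]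
  simp

/-- Weighted permutation of coordinates, as a unitary. -/
def wU (σ : ℤ ≃ ℤ) (w : ℤ → Circle) : unitary (ellTwo →L[ℂ] ellTwo) :=
  Unitary.linearIsometryEquiv.symm (LinearIsometryEquiv.ofSurjective (wLI σ w) (wLI_surj σ w))

lemma wU_apply (σ : ℤ ≃ ℤ) (w : ℤ → Circle) (ξ : ellTwo) (k : ℤ) :
    ((wU σ w : ellTwo →L[ℂ] ellTwo) ξ : ℤ → ℂ) k = (w k : ℂ) * ξ (σ k) := rfl

lemma proj_comm (K : Submodule ℂ ellTwo) [K.HasOrthogonalProjection]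
    (g : unitary (ellTwo →L[ℂ] ellTwo))
    (h1 : ∀ v ∈ K, (g : ellTwo →L[ℂ] ellTwo) v ∈ K)
    (h2 : ∀ v ∈ K, ((g⁻¹ : unitary (ellTwo →L[ℂ] ellTwo)) : ellTwo →L[ℂ] ellTwo) v ∈ K)
    (v : ellTwo) :
    K.starProjection ((g : ellTwo →L[ℂ] ellTwo) v) =
      (g : ellTwo →L[ℂ] ellTwo) (K.starProjection v) := by
  refine Submodule.eq_starProjection_of_mem_orthogonal (h1 _ (K.starProjection_apply_mem v)) ?_
  rw [Submodule.mem_orthogonal, ← map_sub]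
  intro w hw
  have h3 : inner ℂ w ((g : ellTwo →L[ℂ] ellTwo) (v - K.starProjection v)) =
      inner ℂ (((g⁻¹ : unitary (ellTwo →L[ℂ] ellTwo)) : ellTwo →L[ℂ] ellTwo) w)
        (v - K.starProjection v) := by
    rw [← Unitary.star_eq_inv, Unitary.coe_star, ContinuousLinearMap.star_eq_adjoint,
      ContinuousLinearMap.adjoint_inner_left]
  rw [h3]
  exact Submodule.inner_right_of_mem_orthogonal (h2 w hw) (K.sub_starProjection_mem_orthogonal v)

lemma ell_clm_ext (A B : ellTwo →L[ℂ] ellTwo)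
    (h : ∀ k : ℤ, A (lp.single 2 k (1 : ℂ)) = B (lp.single 2 k (1 : ℂ))) : A = B := by
  ext1 ξ
  have h0 : HasSum (fun k : ℤ => lp.single 2 k (ξ k)) ξ :=
    lp.hasSum_single ENNReal.ofNat_ne_top ξ
  have hs : ∀ k : ℤ, (lp.single 2 k (ξ k) : ellTwo) = ξ k • lp.single 2 k (1 : ℂ) := by
    intro k; rw [← lp.single_smul]; simp
  have hA := h0.mapL A
  have hB := h0.mapL B
  refine hA.unique ?_
  convert hB using 2 with k
  rw [hs, map_smul, map_smul, h]

lemma irred (w : ℤ → Circle) (hw : ∀ j k : ℤ, (∀ n : ℤ, w (j + n) = w (k + n)) → j = k)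
    (K : Submodule ℂ ellTwo) (hK : IsClosed (K : Set ellTwo))
    (hinv : ∀ g ∈ Subgroup.closure ({wU (Equiv.subRight 1) 1, wU (Equiv.refl ℤ) w} :
        Set (unitary (ellTwo →L[ℂ] ellTwo))),
      ∀ v ∈ K, (g : ellTwo →L[ℂ] ellTwo) v ∈ K) : K = ⊥ ∨ K = ⊤ := by
  have : CompleteSpace K := hK.completeSpace_coe
  set Ux := wU (Equiv.subRight 1) 1 with hUx
  set Tx := wU (Equiv.refl ℤ) w with hTx
  have mU : Ux ∈ Subgroup.closure ({Ux, Tx} : Set (unitary (ellTwo →L[ℂ] ellTwo))) :=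
    Subgroup.subset_closure (by simp)
  have mT : Tx ∈ Subgroup.closure ({Ux, Tx} : Set (unitary (ellTwo →L[ℂ] ellTwo))) :=
    Subgroup.subset_closure (by simp)
  have cU := proj_comm K Ux (hinv _ mU) (hinv _ (inv_mem mU))
  have cT := proj_comm K Tx (hinv _ mT) (hinv _ (inv_mem mT))
  let e : ℤ → ellTwo := fun k => lp.single 2 k (1 : ℂ)
  let a : ℤ → ℤ → ℂ := fun k j => K.starProjection (e k) j
  have Ue : ∀ k, (Ux : ellTwo →L[ℂ] ellTwo) (e k) = e (k + 1) := by
    intro k; ext j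
    rw [hUx, wU_apply]
    simp only [e, lp.single_apply, Equiv.subRight_apply, Pi.single_apply, sub_eq_iff_eq_add]
    simp
  have Te : ∀ k, (Tx : ellTwo →L[ℂ] ellTwo) (e k) = (w k : ℂ) • e k := by
    intro k; ext j
    rw [hTx, wU_apply]
    simp only [e, lp.coeFn_smul, Pi.smul_apply, lp.single_apply, Equiv.refl_apply, Pi.single_apply]
    split_ifs with h
    · subst h; simp
    · simp
  have aU : ∀ k j, a (k + 1) (j + 1) = a k j := by
    intro k j
    simp only [a]
    rw [← Ue, cU, hUx, wU_apply]
    simp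
  have aUn : ∀ (n : ℤ) k j, a (k + n) (j + n) = a k j := by
    intro n
    induction n using Int.induction_on with
    | zero => simp
    | succ n ih => intro k j; rw [← add_assoc, ← add_assoc, aU, ih]
    | pred n ih =>
      intro k j
      rw [← ih k j, ← aU]
      congr 1 <;> ring
  have aT : ∀ k j, (w j : ℂ) * a k j = (w k : ℂ) * a k j := by
    intro k j
    have h1 := congrArg (fun ξ : ellTwo => ξ j) (cT (e k))
    simp only [Te, map_smul, lp.coeFn_smul, Pi.smul_apply, smul_eq_mul] at h1
    rw [hTx, wU_apply] at h1
    exact h1.symm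
  have a0 : ∀ k j, j ≠ k → a k j = 0 := by
    intro k j hjk
    by_contra hne
    refine hjk (hw j k fun n => ?_)
    have h1 := aT (k + n) (j + n)
    rw [aUn] at h1
    exact Circle.ext (mul_right_cancel₀ hne h1)
  set c := a 0 0 with hc
  have ad : ∀ k, a k k = c := by
    intro k; rw [hc, ← aUn k 0 0]; simp
  have Pe : ∀ k, K.starProjection (e k) = c • e k := by
    intro k; ext j
    change a k j = _
    simp only [e, lp.coeFn_smul, Pi.smul_apply, lp.single_apply, Pi.single_apply]
    split_ifs with h
    · subst h; simp [ad]
    · simp [a0 k j h]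
  have Pc : K.starProjection = c • ContinuousLinearMap.id ℂ ellTwo := by
    refine ell_clm_ext _ _ fun k => ?_
    exact Pe k
  by_cases hc0 : c = 0
  · left
    rw [Submodule.eq_bot_iff]
    intro v hv
    have := Submodule.starProjection_eq_self_iff.mpr hv
    rw [← this, Pc, hc0]; simp
  · right
    rw [Submodule.eq_top_iff']
    intro v
    have h1 := K.starProjection_apply_mem v
    rw [Pc] at h1
    simpa using (K.smul_mem_iff hc0).mp h1

lemma modFin_add_mul (p : ℕ) [NeZero p] (m d : ℤ) : modFin p (m + d * p) = modFin p m := by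
  rw [modFin_eq_iff, Int.add_mul_emod_self_right]
  exact ((modFin_eq_iff p m _).mp rfl)

lemma modFin_add_one (p : ℕ) [NeZero p] (m : ℤ) : modFin p m + 1 = modFin p (m + 1) := by
  symm
  rw [modFin_eq_iff, Fin.val_add, Int.add_emod, (modFin_eq_iff p m _).mp rfl]
  push_cast
  simp

lemma ee_eq_small (t : ℝ) (h : ee t = 1) (ht : |t| < 1) : t = 0 := by
  unfold ee at h
  rw [Circle.exp_eq_one] at h
  obtain ⟨n, hn⟩ := h
  have hpi := Real.pi_pos
  have h1 : t = -n := by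
    have : 2 * π * (t + n) = 0 := by linarith
    have := (mul_eq_zero.mp this).resolve_left (by positivity)
    linarith
  rw [h1, abs_neg, ← Int.cast_abs] at ht
  have : |n| < 1 := by exact_mod_cast ht
  rw [Int.abs_lt_one_iff] at this
  rw [h1, this]; simp

lemma ee_sub (s t : ℝ) : ee (s - t) = ee s / ee t := by
  unfold ee; rw [← Circle.exp_sub]; congr 1; ring

lemma nonper (N : ℕ) (hN : 2 ≤ N) (p : ℕ) [NeZero p] (zc : Fin p → Circle) (x : ℝ) (hx : x ≠ 0)
    (j k : ℤ)
    (h : ∀ n : ℤ, zc (modFin p (-(j + n))) * ee ((N : ℝ) ^ (-(j + n)) * x) =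
      zc (modFin p (-(k + n))) * ee ((N : ℝ) ^ (-(k + n)) * x)) : j = k := by
  have hN0 : (0 : ℝ) < N := by positivity
  have hN1 : (1 : ℝ) < N := by exact_mod_cast hN
  have hp : (p : ℤ) ≠ 0 := by exact_mod_cast NeZero.ne p
  set w : ℤ → Circle := fun m => zc (modFin p (-m)) * ee ((N : ℝ) ^ (-m) * x) with hw
  set d := k - j with hd
  have h1 : ∀ m, w m = w (m + d) := by
    intro m
    have h0 := h (m - j)
    have e1 : j + (m - j) = m := by ring
    have e2 : k + (m - j) = m + d := by rw [hd]; ring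
    rw [e1, e2] at h0
    exact h0
  have h2 : ∀ (q : ℕ) m, w m = w (m + d * q) := by
    intro q
    induction q with
    | zero => simp
    | succ q ih => intro m; rw [ih, h1]; congr 1; push_cast; ring
  have h3 : ∀ m, ee ((N : ℝ) ^ (-m) * x) = ee ((N : ℝ) ^ (-(m + d * p)) * x) := by
    intro m
    have := h2 p m
    simp only [hw] at this
    have e : -(m + d * (p : ℤ)) = -m + (-d) * p := by ring
    rw [e, modFin_add_mul] at this
    rw [e]
    exact mul_left_cancel this
  set y : ℝ := x * (1 - (N : ℝ) ^ (-(d * p))) with hy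
  have h4 : ∀ m : ℕ, ee (((N : ℝ)⁻¹) ^ m * y) = 1 := by
    intro m
    have e : ((N : ℝ)⁻¹) ^ m * y = (N : ℝ) ^ (-(m : ℤ)) * x -
        (N : ℝ) ^ (-((m : ℤ) + d * p)) * x := by
      rw [neg_add, zpow_add₀ hN0.ne', hy, zpow_neg _ (m : ℤ), zpow_natCast, inv_pow]; ring
    rw [e, ee_sub, h3, div_self']
  have h5 : Tendsto (fun m : ℕ => ((N : ℝ)⁻¹) ^ m * y) atTop (nhds (0 * y)) :=
    (tendsto_pow_atTop_nhds_zero_of_lt_one (by positivity) (inv_lt_one_of_one_lt₀ hN1)).mul_const y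
  rw [zero_mul] at h5
  obtain ⟨m, hm⟩ := (h5.eventually (Metric.ball_mem_nhds (0 : ℝ) one_pos)).exists
  have h6 := ee_eq_small _ (h4 m) (by simpa using hm)
  have h7 : y = 0 := (mul_eq_zero.mp h6).resolve_left (by positivity)
  have h8 : (N : ℝ) ^ (-(d * p)) = 1 := by
    have := (mul_eq_zero.mp h7).resolve_left hx
    linarith
  have h9 : -(d * (p : ℤ)) = 0 := by
    rwa [zpow_eq_one_iff_right₀ hN0.le hN1.ne'] at h8
  have h10 : d = 0 := by
    rcases mul_eq_zero.mp (neg_eq_zero.mp h9) with h | h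
    · exact h
    · exact absurd h hp
  omega

theorem statement_14 (N : ℕ) (hN : 2 ≤ N) (p : ℕ) [NeZero p]
    (zc : Fin p → Circle) (hcycle : ∀ i : Fin p, zc i ^ N = zc (i + 1))
    (hper : ∀ i : Fin p, i ≠ 0 → zc i ≠ zc 0)  -- p is the exact period
    (U T : unitary (Lp ℂ 2 (prodMeas p) →L[ℂ] Lp ℂ 2 (prodMeas p)))
    (hUT : IsCycleRep N p zc U T) :
    ∃ Ψ : Lp ℂ 2 (prodMeas p) ≃ₗᵢ[ℂ]
        Lp ellTwo 2 ((volume : Measure ℝ).restrict (ESet N p)),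
      -- the explicit formula for `Ψ`:
      -- `Ψ(f)(x, m) = N^{−m/2} f(N^{−m} x, (−m) mod p)`
      (∀ f : Lp ℂ 2 (prodMeas p),
        ∀ᵐ x ∂((volume : Measure ℝ).restrict (ESet N p)), ∀ k : ℤ,
          ((Ψ f : ℝ → ellTwo) x : ℤ → ℂ) k
            = (Real.sqrt ((N : ℝ) ^ (-k : ℤ)) : ℂ) *
              (f : ℝ × Fin p → ℂ) ((N : ℝ) ^ (-k : ℤ) * x, modFin p (-k))) ∧
      -- `Ψ` intertwines `𝔯_C` with the direct integral `∫_E^⊕ π_{z_C·î(x)} dx`: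
      (∀ f : Lp ℂ 2 (prodMeas p),
        ∀ᵐ x ∂((volume : Measure ℝ).restrict (ESet N p)), ∀ k : ℤ,
          ((Ψ ((U : Lp ℂ 2 (prodMeas p) →L[ℂ] Lp ℂ 2 (prodMeas p)) f) : ℝ → ellTwo) x : ℤ → ℂ) k
            = ((Ψ f : ℝ → ellTwo) x : ℤ → ℂ) (k - 1)) ∧
      (∀ f : Lp ℂ 2 (prodMeas p),
        ∀ᵐ x ∂((volume : Measure ℝ).restrict (ESet N p)), ∀ k : ℤ,
          ((Ψ ((T : Lp ℂ 2 (prodMeas p) →L[ℂ] Lp ℂ 2 (prodMeas p)) f) : ℝ → ellTwo) x : ℤ → ℂ) k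
            = ((zc (modFin p (-k)) : Circle) : ℂ) * ((ee ((N : ℝ) ^ (-k : ℤ) * x) : Circle) : ℂ) *
              ((Ψ f : ℝ → ellTwo) x : ℤ → ℂ) k) ∧
      -- each fiber representation `π_{z_C·î(x)}`, `x ∈ E`, is irreducible
      (∀ x ∈ ESet N p,
        ∃ Ux Tx : unitary (ellTwo →L[ℂ] ellTwo),
          (∀ ξ : ellTwo, ∀ k : ℤ,
            (((Ux : ellTwo →L[ℂ] ellTwo) ξ : ellTwo) : ℤ → ℂ) k = (ξ : ℤ → ℂ) (k - 1)) ∧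
          (∀ ξ : ellTwo, ∀ k : ℤ,
            (((Tx : ellTwo →L[ℂ] ellTwo) ξ : ellTwo) : ℤ → ℂ) k
              = ((zc (modFin p (-k)) : Circle) : ℂ) *
                ((ee ((N : ℝ) ^ (-k : ℤ) * x) : Circle) : ℂ) * (ξ : ℤ → ℂ) k) ∧
          (∀ K : Submodule ℂ ellTwo, IsClosed (K : Set ellTwo) →
            (∀ g ∈ Subgroup.closure ({Ux, Tx} : Set (unitary (ellTwo →L[ℂ] ellTwo))),
              ∀ v ∈ K, (g : ellTwo →L[ℂ] ellTwo) v ∈ K) →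
            K = ⊥ ∨ K = ⊤)) := by
  have hN0 : (0 : ℝ) < N := by positivity
  have key := psi0_ae N hN p
  refine ⟨LinearIsometryEquiv.ofSurjective (psiLI N hN p) (psi_surj N hN p), key, ?_, ?_, ?_⟩
  · intro f
    filter_upwards [key f, key ((U : Lp ℂ 2 (prodMeas p) →L[ℂ] Lp ℂ 2 (prodMeas p)) f),
      null_pull N hN p _ (hUT.1 f)] with x h1 h2 h3 k
    refine (h2 k).trans (Eq.trans ?_ (h1 (k - 1)).symm)
    have e1 : (-(k - 1) : ℤ) = -k + 1 := by ring
    have e2 : (N : ℝ) ^ (-(k - 1)) = (N : ℝ) ^ (-k) * N := by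
      rw [e1, zpow_add_one₀ hN0.ne']
    have e3 : phi N p (k - 1) x = (N * (phi N p k x).1, (phi N p k x).2 + 1) := by
      simp only [phi]
      rw [modFin_add_one, e2, e1]
      congr 1; ring
    simp only [Fv, h3 k]
    rw [e3, e2, Real.sqrt_mul (by positivity), Complex.ofReal_mul, mul_assoc]
  · intro f
    filter_upwards [key f, key ((T : Lp ℂ 2 (prodMeas p) →L[ℂ] Lp ℂ 2 (prodMeas p)) f),
      null_pull N hN p _ (hUT.2 f)] with x h1 h2 h3 k
    refine (h2 k).trans (Eq.trans ?_ (congrArg _ (h1 k).symm))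
    simp only [Fv, h3 k]
    simp only [phi]
    ring
  · intro x hx
    have hx0 : x ≠ 0 := by
      rintro rfl
      rw [ESet_iff] at hx; norm_num at hx
    refine ⟨wU (Equiv.subRight 1) 1, wU (Equiv.refl ℤ)
      (fun k => zc (modFin p (-k)) * ee ((N : ℝ) ^ (-k : ℤ) * x)), ?_, ?_, ?_⟩
    · intro ξ k
      rw [wU_apply]; simp
    · intro ξ k
      rw [wU_apply, Circle.coe_mul]; rfl
    · exact irred _ (fun j k h => nonper N hN p zc x hx0 j k h)


end
end
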